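/- Let k be a field of prime characteristic p, and G a finite group whose order is divisible by p. Let M and N be two finitely generated left modules over the group algebra kG. Then either Ext_{kG}^n(M, N) = 0 for all n > 0, or there exist integers d > 0 and m_0 and an integer j with 0 ≤ j < d such that Ext_{kG}^n(M, N) ≠ 0 for every n ≥ m_0 with n ≡ j (mod d). -/

import Mathlib

open CategoryTheory

namespace ExtProof
noncomputable section
open scoped Classical

section Lists
variable {X V W : Type} [AddCommGroup V] [AddCommGroup W]

/-- The simplicial coboundary on functions of lists. -/
def dL : (List X → V) → List X → V
  | _, [] => 0
  | f, x :: L => f L - dL (fun L' => f (x :: L')) L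

@[simp] theorem dL_nil (f : List X → V) : dL f [] = 0 := by simp [dL]
theorem dL_cons (f : List X → V) (x : X) (L : List X) :
    dL f (x :: L) = f L - dL (fun L' => f (x :: L')) L := by simp [dL]

theorem dL_map (φ : V →+ W) (f : List X → V) (L : List X) :
    dL (fun L' => φ (f L')) L = φ (dL f L) := by
  induction L generalizing f with
  | nil => simp
  | cons x L ih => simp only [dL_cons]; rw [ih (fun L' => f (x :: L')), map_sub]

theorem dL_add (f g : List X → V) (L : List X) :
    dL (fun L' => f L' + g L') L = dL f L + dL g L := by
  induction L generalizing f g with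
  | nil => simp
  | cons x L ih => simp only [dL_cons]; rw [ih]; abel

theorem dL_sub (f g : List X → V) (L : List X) :
    dL (fun L' => f L' - g L') L = dL f L - dL g L := by
  induction L generalizing f g with
  | nil => simp
  | cons x L ih => simp only [dL_cons]; rw [ih]; abel

theorem dL_zero (L : List X) : dL (fun _ => (0 : V)) L = 0 := by
  induction L with
  | nil => simp
  | cons x L ih => simp only [dL_cons]; rw [ih]; simp

theorem dL_sum {ι : Type} (s : Finset ι) (f : ι → List X → V) (L : List X) :
    dL (fun L' => ∑ i ∈ s, f i L') L = ∑ i ∈ s, dL (f i) L := by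
  induction s using Finset.induction_on with
  | empty => simp [dL_zero]
  | insert a s ha ih => simp only [Finset.sum_insert ha, dL_add, ih]

theorem dL_listmap (σ : X → X) (f : List X → V) (L : List X) :
    dL (fun L' => f (L'.map σ)) L = dL f (L.map σ) := by
  induction L generalizing f with
  | nil => simp
  | cons x L ih =>
    simp only [dL_cons, List.map_cons]
    rw [ih (fun L' => f (σ x :: L'))]

theorem dL_dL (f : List X → V) (L : List X) : dL (dL f) L = 0 := by
  induction L generalizing f with
  | nil => simp
  | cons x L ih =>
    rw [dL_cons]
    simp only [dL_cons f]
    rw [dL_sub, ih]; simp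

theorem dL_contr (f : List X → V) (h : ∀ L, dL f L = 0) (x : X) (L : List X) :
    dL (fun L' => f (x :: L')) L = f L := by
  have := h (x :: L)
  rw [dL_cons, sub_eq_zero] at this
  exact this.symm

theorem dL_supp (f : List X → V) (m : ℕ) (h : ∀ L, L.length ≠ m → f L = 0) (L : List X)
    (hL : L.length ≠ m + 1) : dL f L = 0 := by
  induction L generalizing f m with
  | nil => simp
  | cons x L ih =>
    rw [dL_cons, h L (by simpa using hL)]
    cases m with
    | zero =>
      have : (fun L' => f (x :: L')) = fun _ => 0 := by
        funext L'; exact h _ (by simp)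
      rw [this, dL_zero]; simp
    | succ m =>
      rw [ih (fun L' => f (x :: L')) m (fun L' hL' => h _ (by simpa using hL')) (by simpa using hL)]
      simp

theorem dL_sgn (f : List X → V) (L : List X) :
    dL (fun L' => (-1 : ℤ) ^ L'.length • f L') L = -((-1 : ℤ) ^ L.length • dL f L) := by
  induction L generalizing f with
  | nil => simp
  | cons x L ih =>
    simp only [dL_cons]
    have : dL (fun L' => (-1 : ℤ) ^ (x :: L').length • f (x :: L')) L
        = (-1 : ℤ) ^ L.length • dL (fun L' => f (x :: L')) L := by
      have h2 := ih (fun L' => - f (x :: L'))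
      have h3 : dL (fun L' => -f (x :: L')) L = - dL (fun L' => f (x :: L')) L := by
        have := dL_map (-AddMonoidHom.id V) (fun L' => f (x :: L')) L
        simpa using this
      rw [h3] at h2
      simp only [List.length_cons, pow_succ, mul_neg, mul_one, neg_smul, smul_neg, neg_neg] at h2 ⊢
      exact h2
    rw [this]
    simp only [List.length_cons, pow_succ, mul_neg, mul_one, neg_smul, smul_sub]
    abel

end Lists

section Tot
variable {p : ℕ} [NeZero p] {X V W : Type} [AddCommGroup V] [AddCommGroup W]

/-- The periodic differential in the cyclic direction. -/
def EE (f : ℕ → ZMod p → V) : ℕ → ZMod p → V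
  | 0, _ => 0
  | (j + 1), c => if Even j then f j (c + 1) - f j c else ∑ c', f j c'

theorem sum_shift (f : ZMod p → V) : ∑ c, f (c + 1) = ∑ c, f c :=
  Equiv.sum_comp (Equiv.addRight (1 : ZMod p)) f

theorem EE_EE (f : ℕ → ZMod p → V) (j : ℕ) (c : ZMod p) : EE (EE f) j c = 0 := by
  rcases j with _ | _ | j
  · rfl
  · simp [EE]
  · by_cases h : Even j
    · have h2 : ¬ Even (j + 1) := by simpa [Nat.even_add_one] using h
      simp [EE, h, h2, sum_shift]
    · have h2 : Even (j + 1) := by simpa [Nat.even_add_one] using h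
      simp [EE, h, h2]

theorem EE_map (φ : V →+ W) (f : ℕ → ZMod p → V) (j : ℕ) (c : ZMod p) :
    EE (fun j c => φ (f j c)) j c = φ (EE f j c) := by
  rcases j with _ | j
  · simp [EE]
  · by_cases h : Even j <;> simp [EE, h]

theorem EE_add (f g : ℕ → ZMod p → V) (j : ℕ) (c : ZMod p) :
    EE (fun j c => f j c + g j c) j c = EE f j c + EE g j c := by
  rcases j with _ | j
  · simp [EE]
  · by_cases h : Even j <;> simp [EE, h, Finset.sum_add_distrib]; abel

theorem EE_sub (f g : ℕ → ZMod p → V) (j : ℕ) (c : ZMod p) :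
    EE (fun j c => f j c - g j c) j c = EE f j c - EE g j c := by
  rcases j with _ | j
  · simp [EE]
  · by_cases h : Even j <;> simp [EE, h, Finset.sum_sub_distrib]; abel

theorem EE_shift (f : ℕ → ZMod p → V) (a : ZMod p) (j : ℕ) (c : ZMod p) :
    EE (fun j c => f j (c + a)) j c = EE f j (c + a) := by
  rcases j with _ | j
  · simp [EE]
  · by_cases h : Even j
    · simp [EE, h, add_right_comm]
    · simp only [EE, h, if_false]
      exact Equiv.sum_comp (Equiv.addRight a) (f j)

theorem EE_const (hV : ∀ v : V, p • v = 0) (f : ℕ → V) (j : ℕ) (c : ZMod p) :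
    EE (fun j _ => f j) j c = 0 := by
  rcases j with _ | j
  · simp [EE]
  · by_cases h : Even j <;> simp [EE, h, hV]

theorem dL_EE (f : List X → ℕ → ZMod p → V) (L : List X) (j : ℕ) (c : ZMod p) :
    dL (fun L' => EE (f L') j c) L = EE (fun j c => dL (fun L' => f L' j c) L) j c := by
  rcases j with _ | j
  · simp [EE, dL_zero]
  · by_cases h : Even j
    · simp [EE, h, dL_sub]
    · simp [EE, h, dL_sum]

/-- The total differential. -/
def DD (f : List X → ℕ → ZMod p → V) : List X → ℕ → ZMod p → V := fun L j c =>
  dL (fun L' => f L' j c) L + (-1 : ℤ) ^ L.length • EE (f L) j c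

theorem DD_apply (f : List X → ℕ → ZMod p → V) (L j c) : DD f L j c =
  dL (fun L' => f L' j c) L + (-1 : ℤ) ^ L.length • EE (f L) j c := rfl

theorem DD_DD (f : List X → ℕ → ZMod p → V) (L j c) : DD (DD f) L j c = 0 := by
  have h1 : dL (fun L' => DD f L' j c) L = -((-1 : ℤ) ^ L.length •
      EE (fun j c => dL (fun L' => f L' j c) L) j c) := by
    simp only [DD_apply]
    rw [dL_add, dL_dL, dL_sgn, dL_EE]; simp
  have h2 : EE (DD f L) j c = EE (fun j c => dL (fun L' => f L' j c) L) j c := by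
    have : DD f L = fun j c => dL (fun L' => f L' j c) L + (-1 : ℤ) ^ L.length • EE (f L) j c := rfl
    rw [this, EE_add]
    have := EE_map ((-1 : ℤ) ^ L.length • AddMonoidHom.id V) (EE (f L)) j c
    simp only [AddMonoidHom.smul_apply, AddMonoidHom.id_apply] at this
    rw [this, EE_EE]; simp
  rw [DD_apply, h1, h2]; simp

theorem DD_map (φ : V →+ W) (f : List X → ℕ → ZMod p → V) (L j c) :
    DD (fun L j c => φ (f L j c)) L j c = φ (DD f L j c) := by
  simp only [DD_apply]
  rw [dL_map φ (fun L' => f L' j c), EE_map]; simp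

theorem DD_add (f g : List X → ℕ → ZMod p → V) (L j c) :
    DD (fun L j c => f L j c + g L j c) L j c = DD f L j c + DD g L j c := by
  simp only [DD_apply]
  rw [dL_add, EE_add, smul_add]; abel

theorem DD_sub (f g : List X → ℕ → ZMod p → V) (L j c) :
    DD (fun L j c => f L j c - g L j c) L j c = DD f L j c - DD g L j c := by
  simp only [DD_apply]
  rw [dL_sub, EE_sub, smul_sub]; abel

theorem DD_shift (σ : X → X) (a : ZMod p) (f : List X → ℕ → ZMod p → V) (L j c) :
    DD (fun L j c => f (L.map σ) j (c + a)) L j c = DD f (L.map σ) j (c + a) := by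
  simp only [DD_apply]
  rw [dL_listmap σ (fun L' => f L' j (c + a)), EE_shift]; simp

theorem EE_supp (f : ℕ → ZMod p → V) (m : ℕ) (h : ∀ j c, j ≠ m → f j c = 0) (j c)
    (hj : j ≠ m + 1) : EE f j c = 0 := by
  rcases j with _ | j
  · simp [EE]
  · have : ∀ c, f j c = 0 := fun c => h j c (by omega)
    simp [EE, this]

theorem DD_supp (f : List X → ℕ → ZMod p → V) (m : ℕ)
    (h : ∀ L j c, L.length + j ≠ m → f L j c = 0) (L j c) (hL : L.length + j ≠ m + 1) :
    DD f L j c = 0 := by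
  rw [DD_apply]
  have h1 : dL (fun L' => f L' j c) L = 0 := by
    by_cases hj : j ≤ m
    · apply dL_supp _ (m - j) _ _ (by omega)
      intro L' h'; exact h _ _ _ (by omega)
    · have : (fun L' => f L' j c) = fun _ => 0 := by
        funext L'; exact h _ _ _ (by omega)
      rw [this, dL_zero]
  have h2 : EE (f L) j c = 0 := by
    rcases j with _ | j
    · simp [EE]
    · have : ∀ c, f L j c = 0 := fun c => h _ _ c (by omega)
      simp [EE, this]
  rw [h1, h2]; simp

end Tot
end
end ExtProof
open CategoryTheory
set_option linter.all false

namespace ExtProof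
noncomputable section
open scoped Classical

section Koszul
variable (k : Type) [Field k] (p : ℕ) [NeZero p] (Ω : Type) [Fintype Ω]

/-- states -/
abbrev St := Ω → Option (ZMod p)
/-- functions on lists and states -/
abbrev Fn := List Ω → St p Ω → k

variable {Ω}
/-- contraction -/
def iO (x : Ω) : Module.End k (Fn k p Ω) where
  toFun f := fun L => f (x :: L)
  map_add' _ _ := rfl
  map_smul' _ _ := rfl

variable {k p}
def tauF (w : Ω) : Fn k p Ω → Fn k p Ω
  | _, [] => 0
  | f, x :: L => (if x = w then f L else 0) - tauF w (fun L' => f (x :: L')) L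

theorem tauF_nil (w : Ω) (f : Fn k p Ω) : tauF w f [] = 0 := by simp [tauF]
theorem tauF_cons (w : Ω) (f : Fn k p Ω) (x L) :
    tauF w f (x :: L) = (if x = w then f L else 0) - tauF w (fun L' => f (x :: L')) L := by
  simp [tauF]

theorem tauF_add (w : Ω) (f g : Fn k p Ω) (L : List Ω) :
    tauF w (fun L' => f L' + g L') L = tauF w f L + tauF w g L := by
  induction L generalizing f g with
  | nil => simp [tauF_nil]
  | cons x L ih =>
    simp only [tauF_cons]
    rw [ih]
    split_ifs <;> abel

theorem tauF_map (w : Ω) (φ : (St p Ω → k) →ₗ[k] (St p Ω → k)) (f : Fn k p Ω) (L : List Ω) :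
    tauF w (fun L' => φ (f L')) L = φ (tauF w f L) := by
  induction L generalizing f with
  | nil => simp [tauF_nil]
  | cons x L ih =>
    simp only [tauF_cons]
    rw [ih (fun L' => f (x :: L'))]
    split_ifs <;> simp

variable (k p) in
/-- insertion -/
def tO (w : Ω) : Module.End k (Fn k p Ω) where
  toFun f := tauF w f
  map_add' f g := by funext L; exact tauF_add w f g L
  map_smul' r f := by
    funext L; exact tauF_map w (r • LinearMap.id) f L

theorem tO_nil (w : Ω) (f : Fn k p Ω) : tO k p w f [] = 0 := tauF_nil w f
theorem tO_cons (w : Ω) (f : Fn k p Ω) (x L) :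
    tO k p w f (x :: L) = (if x = w then f L else 0) - tO k p w (iO k p x f) L := tauF_cons w f x L
theorem iO_apply (x : Ω) (f : Fn k p Ω) (L) : iO k p x f L = f (x :: L) := rfl

theorem iO_tO (x w : Ω) (f : Fn k p Ω) :
    iO k p x (tO k p w f) = (if x = w then f else 0) - tO k p w (iO k p x f) := by
  funext L; rw [iO_apply, tO_cons]; split_ifs <;> rfl

theorem tO_tO (w v : Ω) (f : Fn k p Ω) : tO k p w (tO k p v f) = - tO k p v (tO k p w f) := by
  funext L
  induction L generalizing f with
  | nil => simp [tO_nil]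
  | cons x L ih =>
    simp only [tO_cons, iO_tO, map_sub, Pi.neg_apply, Pi.sub_apply, ih (iO k p x f)]
    split_ifs <;> simp <;> abel

theorem tO_sq (w : Ω) (f : Fn k p Ω) : tO k p w (tO k p w f) = 0 := by
  funext L
  induction L generalizing f with
  | nil => simp [tO_nil]
  | cons x L ih =>
    simp only [tO_cons, iO_tO, map_sub, Pi.sub_apply, ih (iO k p x f)]
    split_ifs <;> simp

/-- coordinate operators -/
def opx (A : Matrix (Option (ZMod p)) (Option (ZMod p)) k) (w : Ω) :
    (St p Ω → k) →ₗ[k] (St p Ω → k) where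
  toFun f := fun x => ∑ o, A (x w) o * f (Function.update x w o)
  map_add' f g := by funext x; simp [mul_add, Finset.sum_add_distrib]
  map_smul' r f := by
    funext x; simp only [Pi.smul_apply, smul_eq_mul, RingHom.id_apply, Finset.mul_sum]
    refine Finset.sum_congr rfl fun o _ => by ring

def oO (A : Matrix (Option (ZMod p)) (Option (ZMod p)) k) (w : Ω) : Module.End k (Fn k p Ω) where
  toFun f := fun L => opx A w (f L)
  map_add' f g := by funext L; exact map_add _ _ _
  map_smul' r f := by funext L; exact (opx A w).map_smul r (f L)

theorem oO_apply (A : Matrix (Option (ZMod p)) (Option (ZMod p)) k) (w : Ω) (f : Fn k p Ω) (L x) :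
    oO A w f L x = ∑ o, A (x w) o * f L (Function.update x w o) := rfl

variable (A B : Matrix (Option (ZMod p)) (Option (ZMod p)) k)

theorem iO_oO (x w : Ω) (f : Fn k p Ω) : iO k p x (oO A w f) = oO A w (iO k p x f) := rfl
theorem tO_oO (x w : Ω) (f : Fn k p Ω) : tO k p x (oO A w f) = oO A w (tO k p x f) := by
  funext L; exact tauF_map x (opx A w) f L

theorem oO_mul (w : Ω) (f : Fn k p Ω) : oO A w (oO B w f) = oO (A * B) w f := by
  funext L x
  simp only [oO_apply, Function.update_self, Function.update_idem, Matrix.mul_apply]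
  simp only [Finset.mul_sum, Finset.sum_mul]
  rw [Finset.sum_comm]
  refine Finset.sum_congr rfl fun o _ => Finset.sum_congr rfl fun o' _ => by ring

theorem oO_comm (w v : Ω) (h : w ≠ v) (f : Fn k p Ω) : oO A w (oO B v f) = oO B v (oO A w f) := by
  funext L x
  simp only [oO_apply, Function.update_of_ne h, Function.update_of_ne h.symm, Finset.mul_sum]
  rw [Finset.sum_comm]
  refine Finset.sum_congr rfl fun o _ => Finset.sum_congr rfl fun o' _ => ?_
  rw [Function.update_comm h]; ring

theorem oO_one (w : Ω) (f : Fn k p Ω) : oO (1 : Matrix _ _ k) w f = f := by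
  funext L x
  rw [oO_apply]
  rw [Finset.sum_eq_single (x w)]
  · simp
  · intro o _ ho; simp [Matrix.one_apply, ho.symm]
  · simp

theorem oO_add (w : Ω) (f : Fn k p Ω) : oO (A + B) w f = oO A w f + oO B w f := by
  funext L x
  simp [oO_apply, add_mul, Finset.sum_add_distrib]
theorem oO_sub (w : Ω) (f : Fn k p Ω) : oO (A - B) w f = oO A w f - oO B w f := by
  funext L x
  simp [oO_apply, sub_mul, Finset.sum_sub_distrib]
theorem oO_zero (w : Ω) (f : Fn k p Ω) :
    oO (0 : Matrix (Option (ZMod p)) (Option (ZMod p)) k) w f = 0 := by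
  funext L x
  simp [oO_apply]

variable (k p)
/-- elementary matrices -/
def mU : Matrix (Option (ZMod p)) (Option (ZMod p)) k := fun o1 o2 => match o1, o2 with
  | some c, some c' => (if c' = c + 1 then 1 else 0) - (if c' = c then 1 else 0)
  | _, _ => 0
def mV : Matrix (Option (ZMod p)) (Option (ZMod p)) k := fun o1 o2 => match o1, o2 with
  | none, some _ => 1
  | _, _ => 0
def mT : Matrix (Option (ZMod p)) (Option (ZMod p)) k := fun o1 o2 => match o1, o2 with
  | some c, some c' => if c'.val < c.val then 1 else 0
  | _, _ => 0
def mW : Matrix (Option (ZMod p)) (Option (ZMod p)) k := fun o1 o2 => match o1, o2 with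
  | some c, none => if c = -1 then 1 else 0
  | _, _ => 0
def mN : Matrix (Option (ZMod p)) (Option (ZMod p)) k := fun o1 o2 => match o1, o2 with
  | none, none => 1
  | _, _ => 0
def mE : Matrix (Option (ZMod p)) (Option (ZMod p)) k := fun o1 o2 => match o1, o2 with
  | some _, some c' => if c' = 0 then 1 else 0
  | _, _ => 0

theorem mU_mV : mU k p * mV k p = 0 := by
  ext o1 o2
  rcases o1 with _ | c <;> rcases o2 with _ | c' <;>
    simp [Matrix.mul_apply, Fintype.sum_option, mU, mV]

theorem mV_mU : mV k p * mU k p = 0 := by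
  ext o1 o2
  rcases o1 with _ | c <;> rcases o2 with _ | c' <;>
    simp [Matrix.mul_apply, Fintype.sum_option, mU, mV]
  have : ∀ x : ZMod p, (c' = x + 1) ↔ x = c' - 1 := fun x => by
    rw [eq_sub_iff_add_eq]; exact eq_comm
  simp [this, Finset.filter_eq']

theorem mN_mU : mN k p * mU k p = 0 := by
  ext o1 o2
  rcases o1 with _ | c <;> rcases o2 with _ | c' <;>
    simp [Matrix.mul_apply, Fintype.sum_option, mU, mN]
theorem mN_mT : mN k p * mT k p = 0 := by
  ext o1 o2
  rcases o1 with _ | c <;> rcases o2 with _ | c' <;>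
    simp [Matrix.mul_apply, Fintype.sum_option, mT, mN]
theorem mN_mW : mN k p * mW k p = 0 := by
  ext o1 o2
  rcases o1 with _ | c <;> rcases o2 with _ | c' <;>
    simp [Matrix.mul_apply, Fintype.sum_option, mW, mN]
theorem mN_mE : mN k p * mE k p = 0 := by
  ext o1 o2
  rcases o1 with _ | c <;> rcases o2 with _ | c' <;>
    simp [Matrix.mul_apply, Fintype.sum_option, mE, mN]
theorem mE_mE : mE k p * mE k p = mE k p := by
  ext o1 o2
  rcases o1 with _ | c <;> rcases o2 with _ | c' <;>
    simp [Matrix.mul_apply, Fintype.sum_option, mE]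
theorem mV_mW : mV k p * mW k p = mN k p := by
  ext o1 o2
  rcases o1 with _ | c <;> rcases o2 with _ | c' <;>
    simp [Matrix.mul_apply, Fintype.sum_option, mV, mW, mN]

theorem val_add_one' (c : ZMod p) : (c + 1).val = if c = -1 then 0 else c.val + 1 := by
  split_ifs with h
  · simp [h]
  · rcases Nat.lt_or_ge p 2 with h2 | h2
    · have : p = 1 := by have := NeZero.ne p; omega
      subst this
      exact absurd (Subsingleton.elim _ _) h
    · haveI : Fact (1 < p) := ⟨h2⟩
      have hlt := ZMod.val_lt c
      have hne : c.val + 1 ≠ p := by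
        intro he
        apply h
        rw [eq_neg_iff_add_eq_zero]
        have : ((c.val + 1 : ℕ) : ZMod p) = 0 := by rw [he]; simp
        simpa using this
      rw [ZMod.val_add_of_lt]
      · rw [ZMod.val_one]
      · rw [ZMod.val_one]; omega

theorem val_neg_one' : (-1 : ZMod p).val + 1 = p := by
  have h0 := NeZero.ne p
  obtain ⟨q, rfl⟩ : ∃ q, p = q + 1 := ⟨p - 1, by omega⟩
  rw [ZMod.val_neg_one]

theorem sum_pq (P : ZMod p → Prop) [DecidablePred P] (a b : ZMod p) :
    (∑ x, if P x then (if x = a then (1 : k) else 0) - (if x = b then 1 else 0) else 0)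
      = (if P a then 1 else 0) - (if P b then 1 else 0) := by
  have hs : ∀ x : ZMod p, (if P x then (if x = a then (1 : k) else 0) -
      (if x = b then 1 else 0) else 0) = (if x = a then (if P a then 1 else 0)
      else 0) - (if x = b then (if P b then 1 else 0) else 0) := by
    intro x
    by_cases h1 : x = a
    · by_cases h2 : x = b
      · subst h1; subst h2; split_ifs <;> simp
      · subst h1; simp [h2]
    · by_cases h2 : x = b
      · subst h2; simp [h1]; split_ifs <;> simp
      · simp [h1, h2]
  rw [Finset.sum_congr rfl fun x _ => hs x, Finset.sum_sub_distrib]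
  rw [Finset.sum_ite_eq', Finset.sum_ite_eq', if_pos (Finset.mem_univ _), if_pos (Finset.mem_univ _)]

theorem mT_mU : mT k p * mU k p = 1 - mN k p - mE k p := by
  ext o1 o2
  rcases o1 with _ | c <;> rcases o2 with _ | c' <;>
    simp [Matrix.mul_apply, Fintype.sum_option, mT, mU, mN, mE, Matrix.one_apply]
  have : ∀ x : ZMod p, (c' = x + 1) ↔ x = c' - 1 := fun x => by
    rw [eq_sub_iff_add_eq]; exact eq_comm
  have h' : ∀ x : ZMod p, (c' = x) ↔ (x = c') := fun x => eq_comm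
  simp only [this, h']
  rw [sum_pq k p (fun x => x.val < c.val)]
  obtain ⟨b, rfl⟩ : ∃ b, c' = b + 1 := ⟨c' - 1, by ring⟩
  have h1 : b + 1 - 1 = b := by ring
  rw [h1, val_add_one']
  have h3 : 0 = b + 1 ↔ b = -1 := by rw [eq_neg_iff_add_eq_zero, eq_comm]
  have h4 : c = b + 1 ↔ c.val = (b + 1).val := (ZMod.val_injective p).eq_iff.symm
  simp only [h3, h4]
  rw [val_add_one']
  have h5 := ZMod.val_lt c
  have h6 := ZMod.val_lt b
  have h7 := val_neg_one' p
  by_cases hb : b = -1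
  · subst hb
    have : ¬ ((-1 : ZMod p).val < c.val) := by omega
    simp only [if_true, this, if_false]
    rcases Nat.eq_zero_or_pos c.val with h | h
    · simp [h]
    · simp [h, h.ne']
  · simp only [hb, if_false]
    rcases lt_trichotomy c.val (b.val + 1) with h | h | h
    · have h8 : ¬ b.val < c.val := by omega
      have h9 : ¬ (b.val + 1) < c.val := by omega
      simp [h8, h9, h.ne]
    · simp [h]
    · have h8 : b.val < c.val := by omega
      simp [h8, h, h.ne']

theorem mU_mT : mU k p * mT k p + mW k p * mV k p = 1 - mN k p := by
  ext o1 o2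
  rcases o1 with _ | c <;> rcases o2 with _ | c' <;>
    simp [Matrix.mul_apply, Fintype.sum_option, mT, mU, mN, mW, mV, Matrix.one_apply]
  rw [sum_pq k p (fun x => c'.val < x.val)]
  rw [val_add_one']
  have h4 : c = c' ↔ c.val = c'.val := (ZMod.val_injective p).eq_iff.symm
  simp only [h4]
  have h5 := ZMod.val_lt c
  have h6 := ZMod.val_lt c'
  have h7 := val_neg_one' p
  by_cases hb : c = -1
  · subst hb
    simp only [if_true]
    rcases lt_trichotomy (-1 : ZMod p).val c'.val with h | h | h
    · omega
    · simp [h]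
    · simp [h, h.ne']
  · simp only [hb, if_false]
    rcases lt_trichotomy c.val c'.val with h | h | h
    · have h8 : ¬ c'.val < c.val + 1 := by omega
      have h9 : ¬ c'.val < c.val := by omega
      simp [h8, h9, h.ne]
    · simp [h]
    · have h8 : c'.val < c.val + 1 := by omega
      simp [h8, h, h.ne']

end Koszul
end
end ExtProof
open CategoryTheory
set_option linter.all false

namespace ExtProof
noncomputable section
open scoped Classical

section Koszul2
variable (k : Type) [Field k] (p : ℕ) [NeZero p] {Ω : Type} [Fintype Ω]
variable {k p}

/-- alternating functions, at all depths -/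
def Alt (f : Fn k p Ω) : Prop := ∀ L1 x y L2, f (L1 ++ x :: y :: L2) = - f (L1 ++ y :: x :: L2) ∧
  f (L1 ++ x :: x :: L2) = 0

theorem Alt.ii {f : Fn k p Ω} (h : Alt f) (x y : Ω) : iO k p x (iO k p y f) = - iO k p y (iO k p x f) := by
  funext L; exact (h [] y x L).1
theorem Alt.sq {f : Fn k p Ω} (h : Alt f) (x : Ω) : iO k p x (iO k p x f) = 0 := by
  funext L; exact (h [] x x L).2
theorem Alt.iO {f : Fn k p Ω} (h : Alt f) (z : Ω) : Alt (iO k p z f) :=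
  fun L1 x y L2 => h (z :: L1) x y L2
theorem Alt.oO {f : Fn k p Ω} (h : Alt f) (A) (z : Ω) : Alt (oO A z f) := by
  intro L1 x y L2
  constructor
  · show opx A z _ = - opx A z _
    rw [(h L1 x y L2).1, map_neg]
  · show opx A z _ = _
    rw [(h L1 x y L2).2, map_zero]
theorem Alt.tO {f : Fn k p Ω} (h : Alt f) (z : Ω) : Alt (tO k p z f) := by
  intro L1 x y L2
  induction L1 generalizing f with
  | nil =>
    constructor
    · have := congrFun (h.ii x y) L2
      have e1 : ExtProof.tO k p z (ExtProof.iO k p y (ExtProof.iO k p x f)) L2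
        = - ExtProof.tO k p z (ExtProof.iO k p x (ExtProof.iO k p y f)) L2 := by
        rw [h.ii y x, map_neg]; rfl
      simp only [List.nil_append, tO_cons, iO_apply, e1]
      split_ifs <;> simp
      all_goals abel
    · have e1 : ExtProof.tO k p z (ExtProof.iO k p x (ExtProof.iO k p x f)) L2 = 0 := by
        rw [h.sq x, map_zero]; rfl
      simp only [List.nil_append, tO_cons, iO_apply, e1]
      split_ifs <;> simp
  | cons a L1 ih =>
    simp only [List.cons_append, tO_cons]
    rw [(ih (h.iO a)).1, (ih (h.iO a)).2, (h L1 x y L2).1, (h L1 x y L2).2]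
    constructor
    · split_ifs <;> simp
      abel
    · split_ifs <;> simp

variable (k p Ω) in
/-- The Koszul-type module -/
def DS : Submodule k (Fn k p Ω) where
  carrier := {f | Alt f ∧ ∀ e, oO (mN k p) e (iO k p e f) = 0}
  zero_mem' := ⟨fun _ _ _ _ => by simp, fun e => by simp⟩
  add_mem' := by
    rintro f g ⟨hf, hf'⟩ ⟨hg, hg'⟩
    refine ⟨fun L1 x y L2 => ⟨?_, ?_⟩, fun e => ?_⟩
    · simp only [Pi.add_apply, (hf L1 x y L2).1, (hg L1 x y L2).1]; abel
    · simp only [Pi.add_apply, (hf L1 x y L2).2, (hg L1 x y L2).2]; abel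
    · rw [map_add, map_add, hf', hg', add_zero]
  smul_mem' := by
    rintro c f ⟨hf, hf'⟩
    refine ⟨fun L1 x y L2 => ⟨?_, ?_⟩, fun e => ?_⟩
    · simp only [Pi.smul_apply, (hf L1 x y L2).1, smul_neg]
    · simp only [Pi.smul_apply, (hf L1 x y L2).2, smul_zero]
    · rw [map_smul, map_smul, hf', smul_zero]

theorem DS_alt {f : Fn k p Ω} (h : f ∈ DS k p Ω) : Alt f := h.1
theorem DS_N {f : Fn k p Ω} (h : f ∈ DS k p Ω) (e) : oO (mN k p) e (iO k p e f) = 0 := h.2 e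

/-- odd operators -/
def Yop (A B : Matrix (Option (ZMod p)) (Option (ZMod p)) k) (w : Ω) : Module.End k (Fn k p Ω) :=
  oO A w ∘ₗ tO k p w + oO B w ∘ₗ iO k p w

theorem Yop_apply (A B) (w : Ω) (f : Fn k p Ω) :
    Yop A B w f = oO A w (tO k p w f) + oO B w (iO k p w f) := rfl

theorem oO_neg (A) (w : Ω) (f : Fn k p Ω) : oO A w (-f) = - oO A w f := map_neg _ _

theorem Y_anti (A B A' B') (w e : Ω) (hwe : w ≠ e) (f : Fn k p Ω) (h : Alt f) :
    Yop A B w (Yop A' B' e f) = - Yop A' B' e (Yop A B w f) := by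
  simp only [Yop_apply, map_add, tO_oO, iO_oO]
  rw [oO_comm A' A e w hwe.symm, oO_comm A' B e w hwe.symm, oO_comm B' A e w hwe.symm,
    oO_comm B' B e w hwe.symm, tO_tO e w, h.ii e w, iO_tO e w, iO_tO w e, if_neg hwe, if_neg hwe.symm]
  simp only [map_neg, map_sub, map_zero]
  abel

theorem Y_same (A B A' B') (w : Ω) (f : Fn k p Ω) (h : Alt f) :
    Yop A B w (Yop A' B' w f) = oO (A * B') w (tO k p w (iO k p w f)) +
      oO (B * A') w (iO k p w (tO k p w f)) := by
  simp only [Yop_apply, map_add, tO_oO, iO_oO, tO_sq, h.sq, map_zero, oO_mul]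
  abel

theorem Y_mem (A B) (w : Ω) {f : Fn k p Ω} (hf : f ∈ DS k p Ω) (hA : mN k p * A = 0) :
    Yop A B w f ∈ DS k p Ω := by
  have h := DS_alt hf
  refine ⟨?_, fun e => ?_⟩
  · have h1 := ((h.tO w).oO A w)
    have h2 := ((h.iO w).oO B w)
    intro L1 x y L2
    simp only [Yop_apply, Pi.add_apply]
    rw [(h1 L1 x y L2).1, (h1 L1 x y L2).2, (h2 L1 x y L2).1, (h2 L1 x y L2).2]
    exact ⟨by abel, by abel⟩
  · simp only [Yop_apply, map_add, iO_oO]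
    by_cases hwe : e = w
    · subst hwe
      rw [oO_mul, hA, oO_zero, h.sq]; simp
    · rw [oO_comm _ _ _ _ hwe, oO_comm _ _ _ _ hwe, iO_tO, if_neg hwe, h.ii, map_sub, map_neg,
        ← tO_oO (mN k p) w e, ← iO_oO (mN k p) w e, DS_N hf]
      simp

variable (k p Ω) in
/-- the differential of the Koszul module -/
def dD : Module.End k (Fn k p Ω) := ∑ w, Yop (mU k p) (mV k p) w
variable (k p) in
/-- partial homotopies -/
def hD (w : Ω) : Module.End k (Fn k p Ω) := Yop (mW k p) (mT k p) w

theorem dD_apply (f : Fn k p Ω) : dD k p Ω f = ∑ w, Yop (mU k p) (mV k p) w f := by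
  simp [dD]

theorem dD_mem {f : Fn k p Ω} (hf : f ∈ DS k p Ω) : dD k p Ω f ∈ DS k p Ω := by
  rw [dD_apply]
  exact Submodule.sum_mem _ fun w _ => Y_mem _ _ w hf (mN_mU k p)
theorem hD_mem (w : Ω) {f : Fn k p Ω} (hf : f ∈ DS k p Ω) : hD k p w f ∈ DS k p Ω :=
  Y_mem _ _ w hf (mN_mW k p)

theorem sum_antisymm {ι M : Type} [Fintype ι] [AddCommGroup M] (a : ι → ι → M)
    (h : ∀ i j, i ≠ j → a i j = - a j i) (h0 : ∀ i, a i i = 0) : ∑ i, ∑ j, a i j = 0 := by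
  rw [← Finset.sum_product']
  refine Finset.sum_involution (fun x _ => (x.2, x.1)) ?_ ?_ ?_ ?_
  · rintro ⟨i, j⟩ _
    by_cases hij : i = j
    · subst hij; simp [h0]
    · simp [h i j hij]
  · rintro ⟨i, j⟩ _ hne heq
    simp only [Prod.mk.injEq] at heq
    apply hne
    simp [heq.1, h0]
  · intros; simp
  · intros; rfl

theorem dD_dD {f : Fn k p Ω} (hf : f ∈ DS k p Ω) : dD k p Ω (dD k p Ω f) = 0 := by
  rw [dD_apply]
  simp only [dD_apply, map_sum]
  apply sum_antisymm
  · intro i j hij; exact Y_anti _ _ _ _ _ _ hij f (DS_alt hf)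
  · intro i
    rw [Y_same _ _ _ _ _ _ (DS_alt hf), mU_mV, mV_mU, oO_zero, oO_zero, add_zero]

theorem homotopy (w : Ω) {f : Fn k p Ω} (hf : f ∈ DS k p Ω) :
    dD k p Ω (hD k p w f) + hD k p w (dD k p Ω f) =
      f - oO (mE k p) w (iO k p w (tO k p w f)) := by
  have h := DS_alt hf
  rw [dD_apply, dD_apply, map_sum, ← Finset.sum_add_distrib]
  rw [Finset.sum_eq_single w]
  · rw [hD, Y_same _ _ _ _ _ _ h, Y_same _ _ _ _ _ _ h]
    have e1 : tO k p w (iO k p w f) = f - iO k p w (tO k p w f) := by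
      rw [iO_tO, if_pos rfl]; abel
    have e2 : oO (mN k p) w (iO k p w (tO k p w f)) = oO (mN k p) w f := by
      rw [iO_tO, if_pos rfl, map_sub, ← tO_oO, DS_N hf]; simp
    have e3 : mW k p * mV k p = 1 - mN k p - mU k p * mT k p := by
      rw [← mU_mT]; abel
    rw [e3, mV_mW, mT_mU, e1]
    simp only [oO_sub, oO_one, map_sub, e2]
    abel
  · intro e _ he
    rw [hD, Y_anti _ _ _ _ _ _ he f h]; abel
  · simp

/-- number of coordinates in state none -/
def nn (x : St p Ω) : ℤ := ∑ w, if x w = none then 1 else 0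

theorem nn_update (x : St p Ω) (w : Ω) (o) :
    nn (Function.update x w o) = nn x - (if x w = none then 1 else 0) + (if o = none then 1 else 0) := by
  unfold nn
  rw [← Finset.add_sum_erase _ _ (Finset.mem_univ w), ← Finset.add_sum_erase _ (fun v => if x v = none then (1 : ℤ) else 0) (Finset.mem_univ w)]
  have : ∑ v ∈ Finset.univ.erase w, (if Function.update x w o v = none then (1 : ℤ) else 0)
     = ∑ v ∈ Finset.univ.erase w, (if x v = none then (1 : ℤ) else 0) := by
    refine Finset.sum_congr rfl fun v hv => ?_
    rw [Function.update_of_ne (Finset.ne_of_mem_erase hv)]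
  rw [this]; simp only [Function.update_self]; ring

def Deg (i : ℤ) (f : Fn k p Ω) : Prop := ∀ L x, f L x ≠ 0 → (L.length : ℤ) + 2 * nn x = i

theorem Deg.add {i} {f g : Fn k p Ω} (hf : Deg i f) (hg : Deg i g) : Deg i (f + g) := by
  intro L x h
  by_cases h1 : f L x = 0
  · exact hg L x (by simpa [h1] using h)
  · exact hf L x h1
theorem Deg.zero {i} : Deg i (0 : Fn k p Ω) := by
  intro L x h; simp at h
theorem Deg.smul {i} {f : Fn k p Ω} (c : k) (hf : Deg i f) : Deg i (c • f) := by
  intro L x h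
  apply hf L x; intro h0; simp [h0] at h
theorem Deg.sum {ι : Type} {i} (s : Finset ι) (f : ι → Fn k p Ω) (hf : ∀ a ∈ s, Deg i (f a)) :
    Deg i (∑ a ∈ s, f a) := by
  induction s using Finset.induction_on with
  | empty => simpa using Deg.zero
  | insert a s ha ih =>
    rw [Finset.sum_insert ha]
    exact (hf a (by simp)).add (ih fun b hb => hf b (by simp [hb]))
theorem Deg.iO {i} {f : Fn k p Ω} (hf : Deg i f) (w) : Deg (i - 1) (iO k p w f) := by
  intro L x h
  have := hf _ _ h
  push_cast [List.length_cons] at this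
  linarith
theorem Deg.tO {i} {f : Fn k p Ω} (hf : Deg i f) (w) : Deg (i + 1) (tO k p w f) := by
  intro L x h
  induction L generalizing f i with
  | nil => simp [tO_nil] at h
  | cons y L ih =>
    rw [tO_cons] at h
    by_cases h1 : ExtProof.tO k p w (ExtProof.iO k p y f) L x = 0
    · have : f L x ≠ 0 := by
        intro h0; apply h; simp only [Pi.sub_apply, h1]; split_ifs <;> simp [h0]
      have := hf _ _ this
      push_cast [List.length_cons]; linarith
    · have := ih (hf.iO y) h1
      push_cast [List.length_cons]; linarith
theorem Deg.oO {i} {f : Fn k p Ω} (hf : Deg i f) (A) (w) (δ : ℤ)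
    (hA : ∀ o1 o2, A o1 o2 ≠ 0 → (if o1 = none then 1 else 0) = (if o2 = none then 1 else 0) + δ) :
    Deg (i + 2 * δ) (oO A w f) := by
  intro L x h
  rw [oO_apply] at h
  obtain ⟨o, _, ho⟩ := Finset.exists_ne_zero_of_sum_ne_zero h
  have h1 := hf _ _ (right_ne_zero_of_mul ho)
  have h2 := hA _ _ (left_ne_zero_of_mul ho)
  rw [nn_update] at h1
  linarith

theorem Deg.dD {i} {f : Fn k p Ω} (hf : Deg i f) : Deg (i + 1) (dD k p Ω f) := by
  rw [dD_apply]
  refine Deg.sum _ _ fun w _ => ?_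
  rw [Yop_apply]
  refine Deg.add ?_ ?_
  · have := (hf.tO w).oO (mU k p) w 0 (by
      rintro (_ | c) (_ | c') <;> simp [mU])
    simpa using this
  · have := (hf.iO w).oO (mV k p) w 1 (by
      rintro (_ | c) (_ | c') <;> simp [mV])
    convert this using 1; ring
theorem Deg.hD {i} {f : Fn k p Ω} (hf : Deg i f) (w) : Deg (i - 1) (hD k p w f) := by
  rw [ExtProof.hD, Yop_apply]
  refine Deg.add ?_ ?_
  · have := (hf.tO w).oO (mW k p) w (-1) (by
      rintro (_ | c) (_ | c') <;> simp [mW])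
    convert this using 1; ring
  · have := (hf.iO w).oO (mT k p) w 0 (by
      rintro (_ | c) (_ | c') <;> simp [mT])
    simpa using this

variable (k p Ω) in
/-- unit -/
def oneD : Fn k p Ω := fun L x => if L = [] ∧ ∀ w, x w ≠ none then 1 else 0
variable (k p Ω) in
/-- top class -/
def topD : Fn k p Ω := fun L x => if L = [] ∧ ∀ w, x w = none then 1 else 0

theorem mE_none (w : Ω) (f : Fn k p Ω) (L x) (h : x w = none) : oO (mE k p) w f L x = 0 := by
  rw [oO_apply, h]; simp [mE]
theorem mE_some (w : Ω) (f : Fn k p Ω) (L x) (h : x w ≠ none) :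
    oO (mE k p) w f L x = f L (Function.update x w (some 0)) := by
  obtain ⟨c, hc⟩ := Option.ne_none_iff_exists'.1 h
  rw [oO_apply, hc]; simp [mE, Fintype.sum_option]

theorem reduced_const (g : Fn k p Ω) (h : ∀ w, oO (mE k p) w g = g ∧ iO k p w g = 0) :
    g = g [] (fun _ => some 0) • oneD k p Ω := by
  funext L x
  rcases L with _ | ⟨y, L⟩
  · by_cases hx : ∀ w, x w ≠ none
    · have hS : ∀ S : Finset Ω, g [] x = g [] (fun w => if w ∈ S then some 0 else x w) := by
        intro S
        induction S using Finset.induction_on with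
        | empty => simp
        | insert a S ha ih =>
          rw [ih]
          conv_lhs => rw [← (h a).1]
          rw [mE_some _ _ _ _ (by simpa [ha] using hx a)]
          congr 1
          funext w
          by_cases hw : w = a
          · subst hw; simp
          · rw [Function.update_of_ne hw]; simp [hw]
      have := hS Finset.univ
      simp only [Finset.mem_univ, if_true] at this
      simp [oneD, hx, this]
    · have hx' := hx
      push Not at hx'
      obtain ⟨w, hw⟩ := hx'
      have : g [] x = 0 := by
        rw [← (h w).1, mE_none _ _ _ _ hw]
      rw [this]; simp [oneD]
      intro h'; exact absurd hw (h' w)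
  · have : g (y :: L) = 0 := congrFun (h y).2 L
    rw [this]; simp [oneD]

theorem exact_aux (S : Finset Ω) (i : ℤ) (f : Fn k p Ω) (hf : f ∈ DS k p Ω) (hi : Deg i f)
    (hd : dD k p Ω f = 0) : ∃ w ∈ DS k p Ω, Deg (i - 1) w ∧ f - dD k p Ω w ∈ DS k p Ω ∧
      ∀ v ∈ S, oO (mE k p) v (f - dD k p Ω w) = (f - dD k p Ω w) ∧ iO k p v (f - dD k p Ω w) = 0 := by
  induction S using Finset.induction_on with
  | empty => exact ⟨0, Submodule.zero_mem _, Deg.zero, by simpa using hf, by simp⟩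
  | insert a S ha ih =>
    obtain ⟨w, hw, hwd, hfw, hS⟩ := ih
    set g := f - dD k p Ω w with hg
    have hgd : dD k p Ω g = 0 := by rw [hg, map_sub, hd, dD_dD hw, sub_zero]
    have hgdeg : Deg i g := by
      rw [hg, sub_eq_add_neg]
      have := hwd.dD.smul (-1)
      rw [sub_add_cancel] at this
      exact hi.add (by simpa using this)
    have hh := homotopy a hfw
    rw [hgd, map_zero, add_zero] at hh
    refine ⟨w + hD k p a g, Submodule.add_mem _ hw (hD_mem a hfw), hwd.add (hgdeg.hD a), ?_, ?_⟩
    · rw [map_add, ← sub_sub, ← hg]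
      exact Submodule.sub_mem _ hfw (dD_mem (hD_mem a hfw))
    · have key : f - dD k p Ω (w + hD k p a g) = oO (mE k p) a (iO k p a (tO k p a g)) := by
        rw [map_add, ← sub_sub, ← hg, hh]; abel
      rw [key]
      have h := DS_alt hfw
      intro v hv
      by_cases hva : v = a
      · subst hva
        refine ⟨by rw [oO_mul, mE_mE], ?_⟩
        rw [iO_oO, (h.tO v).sq, map_zero]
      · have hvS : v ∈ S := by simpa [hva] using hv
        obtain ⟨h1, h2⟩ := hS v hvS
        constructor
        · rw [oO_comm _ _ _ _ hva, ← iO_oO, ← tO_oO, h1]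
        · rw [iO_oO, (h.tO a).ii, iO_tO v a, if_neg hva, h2]; simp

theorem exactD (i : ℤ) (f : Fn k p Ω) (hf : f ∈ DS k p Ω) (hi : Deg i f)
    (hd : dD k p Ω f = 0) : ∃ w ∈ DS k p Ω, Deg (i - 1) w ∧ ∃ c : k, f = dD k p Ω w + c • oneD k p Ω := by
  obtain ⟨w, hw, hwd, _, hS⟩ := exact_aux Finset.univ i f hf hi hd
  refine ⟨w, hw, hwd, (f - dD k p Ω w) [] (fun _ => some 0), ?_⟩
  rw [← reduced_const (f - dD k p Ω w) (fun v => hS v (Finset.mem_univ v))]; abel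

theorem nn_nonneg (x : St p Ω) : 0 ≤ nn x :=
  Finset.sum_nonneg fun w _ => by split_ifs <;> simp

theorem Deg.eq_zero_of_neg {i : ℤ} (hi : i < 0) {f : Fn k p Ω} (hf : Deg i f) : f = 0 := by
  funext L x
  by_contra h
  have := hf L x h
  have := nn_nonneg x
  omega

/-- exactness in positive degrees -/
theorem exactD_pos (i : ℤ) (h0 : 0 < i) (f : Fn k p Ω) (hf : f ∈ DS k p Ω) (hi : Deg i f)
    (hd : dD k p Ω f = 0) : ∃ w ∈ DS k p Ω, Deg (i - 1) w ∧ dD k p Ω w = f := by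
  obtain ⟨w, hw, hwd, c, hc⟩ := exactD i f hf hi hd
  refine ⟨w, hw, hwd, ?_⟩
  have hx : c = 0 := by
    by_contra hc0
    have e0 : dD k p Ω w [] (fun _ => some 0) = 0 := by
      by_contra h
      have := hwd.dD _ _ h
      simp [nn] at this; omega
    have e1 : f [] (fun _ => some 0) = 0 := by
      by_contra h
      have := hi _ _ h
      simp [nn] at this; omega
    have := congrFun (congrFun hc []) (fun _ => some 0)
    rw [e1] at this
    simp [e0, oneD] at this
    exact hc0 this.symm
  rw [hc, hx]; simp

theorem exactD_zero (f : Fn k p Ω) (hf : f ∈ DS k p Ω) (hi : Deg 0 f)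
    (hd : dD k p Ω f = 0) : ∃ c : k, f = c • oneD k p Ω := by
  obtain ⟨w, hw, hwd, c, hc⟩ := exactD 0 f hf hi hd
  rw [hwd.eq_zero_of_neg (by norm_num)] at hc
  exact ⟨c, by simpa using hc⟩

theorem topD_mem : topD k p Ω ∈ DS k p Ω := by
  refine ⟨fun L1 x y L2 => ⟨?_, ?_⟩, fun e => ?_⟩
  · funext s; simp [topD]
  · funext s; simp [topD]
  · funext L s; simp [oO_apply, iO_apply, topD]
theorem topD_deg : Deg (2 * (Fintype.card Ω : ℤ)) (topD k p Ω) := by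
  intro L x h
  have : L = [] ∧ ∀ w, x w = none := by by_contra h'; simp [topD, h'] at h
  simp [this.1, nn, this.2]
theorem topD_d : dD k p Ω (topD k p Ω) = 0 := by
  funext L x
  by_contra h
  have h1 := topD_deg.dD L x h
  have hm := dD_mem (topD_mem (k := k) (p := p) (Ω := Ω))
  rcases L with _ | ⟨y, L⟩
  · have : nn x ≤ Fintype.card Ω := by
      unfold nn
      calc _ ≤ ∑ w : Ω, (1 : ℤ) := Finset.sum_le_sum fun w _ => by split_ifs <;> simp
        _ = _ := by simp
    simp at h1; omega
  · apply h
    rw [dD_apply]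
    simp only [Yop_apply, Finset.sum_apply, Pi.add_apply, oO_apply]
    refine Finset.sum_eq_zero fun w _ => ?_
    have e1 : ∀ s, (tO k p w (topD k p Ω)) (y :: L) s = (if y = w then topD k p Ω L s else 0) := by
      intro s
      have : iO k p y (topD k p Ω) = 0 := by funext L s; simp [iO_apply, topD]
      rw [tO_cons, this, map_zero]; split_ifs <;> simp
    have e2 : ∀ s, (iO k p w (topD k p Ω)) (y :: L) s = 0 := by intro s; simp [iO_apply, topD]
    simp only [e1, e2, mul_zero, Finset.sum_const_zero, add_zero]
    refine Finset.sum_eq_zero fun o _ => ?_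
    rcases o with _ | c
    · simp [mU]
    · have : topD k p Ω L (Function.update x w (some c)) = 0 := by
        have hh : ¬ (L = [] ∧ ∀ v, (Function.update x w (some c)) v = none) := by
          rintro ⟨_, h'⟩; have := h' w; simp at this
        unfold topD; rw [if_neg hh]
      rw [this]; simp

end Koszul2
end
end ExtProof
open CategoryTheory
set_option linter.all false

namespace ExtProof
noncomputable section
open scoped Classical

section Act
variable {k : Type} [Field k] {p : ℕ} [NeZero p] {G : Type} [Group G] [Fintype G]

/-- action of the group and of the cyclic group on the Koszul module -/
def act (g : G) (c : ZMod p) : Module.End k (Fn k p G) where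
  toFun f := fun L x => f (L.map (g⁻¹ * ·)) (fun w => (x (g * w)).map (· - c))
  map_add' _ _ := rfl
  map_smul' _ _ := rfl

theorem act_apply (g : G) (c : ZMod p) (f : Fn k p G) (L x) :
    act g c f L x = f (L.map (g⁻¹ * ·)) (fun w => (x (g * w)).map (· - c)) := rfl

theorem act_act (g g' : G) (c c' : ZMod p) (f : Fn k p G) :
    act g c (act g' c' f) = act (g * g') (c + c') f := by
  funext L x
  simp only [act_apply, List.map_map, Option.map_map]
  congr 1
  · apply congrArg₂ _ _ rfl
    funext y; simp [mul_assoc]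
  · funext w
    rw [mul_assoc]
    congr 1
    funext y; simp; ring

theorem act_one (f : Fn k p G) : act 1 0 f = f := by
  funext L x
  simp only [act_apply]
  congr 1
  · simp
  · funext w; simp

theorem iO_act (g : G) (c : ZMod p) (w : G) (f : Fn k p G) :
    iO k p w (act g c f) = act g c (iO k p (g⁻¹ * w) f) := rfl

theorem tO_act (g : G) (c : ZMod p) (w : G) (f : Fn k p G) :
    tO k p w (act g c f) = act g c (tO k p (g⁻¹ * w) f) := by
  funext L
  induction L generalizing f with
  | nil => funext x; simp [tO_nil, act_apply]
  | cons y L ih =>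
    rw [tO_cons, iO_act, ih]
    funext x
    simp only [act_apply, List.map_cons, tO_cons, Pi.sub_apply, mul_right_inj]
    congr 1
    split_ifs <;> rfl

theorem oO_act (A : Matrix (Option (ZMod p)) (Option (ZMod p)) k) (g : G) (c : ZMod p) (w : G)
    (hA : ∀ o1 o2, A (o1.map (· - c)) (o2.map (· - c)) = A o1 o2) (f : Fn k p G) :
    oO A w (act g c f) = act g c (oO A (g⁻¹ * w) f) := by
  funext L x
  simp only [act_apply, oO_apply]
  conv_rhs => rw [← Equiv.sum_comp (Equiv.optionCongr (Equiv.subRight c))]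
  refine Finset.sum_congr rfl fun o _ => ?_
  have e1 : (Equiv.optionCongr (Equiv.subRight c)) o = o.map (· - c) := rfl
  rw [e1, mul_inv_cancel_left, hA]
  congr 2
  funext v
  by_cases hv : v = g⁻¹ * w
  · subst hv; simp
  · have : g * v ≠ w := fun h => hv (by rw [← h]; simp)
    rw [Function.update_of_ne hv, Function.update_of_ne this]

theorem mU_shift (c : ZMod p) (o1 o2) :
    mU k p (Option.map (· - c) o1) (Option.map (· - c) o2) = mU k p o1 o2 := by
  rcases o1 with _ | a <;> rcases o2 with _ | b <;> simp [mU]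
  have : b - c = a - c + 1 ↔ b = a + 1 := by
    rw [sub_add_eq_add_sub, sub_left_inj]
  simp only [this]
theorem mV_shift (c : ZMod p) (o1 o2) :
    mV k p (Option.map (· - c) o1) (Option.map (· - c) o2) = mV k p o1 o2 := by
  rcases o1 with _ | a <;> rcases o2 with _ | b <;> simp [mV]
theorem mN_shift (c : ZMod p) (o1 o2) :
    mN k p (Option.map (· - c) o1) (Option.map (· - c) o2) = mN k p o1 o2 := by
  rcases o1 with _ | a <;> rcases o2 with _ | b <;> simp [mN]

theorem dD_act (g : G) (c : ZMod p) (f : Fn k p G) :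
    dD k p G (act g c f) = act g c (dD k p G f) := by
  rw [dD_apply, dD_apply, map_sum, ← Equiv.sum_comp (Equiv.mulLeft g)]
  refine Finset.sum_congr rfl fun w _ => ?_
  simp only [Equiv.coe_mulLeft, Yop_apply, map_add]
  rw [tO_act, iO_act, oO_act _ _ _ _ (mU_shift c), oO_act _ _ _ _ (mV_shift c)]
  simp

theorem act_mem (g : G) (c : ZMod p) {f : Fn k p G} (hf : f ∈ DS k p G) : act g c f ∈ DS k p G := by
  refine ⟨fun L1 x y L2 => ⟨?_, ?_⟩, fun e => ?_⟩
  · funext s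
    simp only [act_apply, List.map_append, List.map_cons, Pi.neg_apply]
    rw [(DS_alt hf _ _ _ _).1]; rfl
  · funext s
    simp only [act_apply, List.map_append, List.map_cons]
    rw [(DS_alt hf _ (g⁻¹ * x) (g⁻¹ * x) _).2]; rfl
  · rw [iO_act, oO_act _ _ _ _ (mN_shift c), DS_N hf, map_zero]

theorem act_deg (g : G) (c : ZMod p) {i : ℤ} {f : Fn k p G} (hf : Deg i f) : Deg i (act g c f) := by
  intro L x h
  have := hf _ _ h
  rw [List.length_map] at this
  have e : nn (fun w => (x (g * w)).map (· - c)) = nn x := by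
    unfold nn
    rw [← Equiv.sum_comp (Equiv.mulLeft g) (fun w => if x w = none then (1 : ℤ) else 0)]
    refine Finset.sum_congr rfl fun w _ => ?_
    by_cases hw : x (g * w) = none <;> simp [hw]
  rwa [e] at this

theorem act_oneD (g : G) (c : ZMod p) : act g c (oneD k p G) = oneD k p G := by
  funext L x
  simp only [act_apply, oneD, List.map_eq_nil_iff, ne_eq, Option.map_eq_none_iff]
  have : (∀ w, ¬ x (g * w) = none) ↔ (∀ w, ¬ x w = none) :=
    (Equiv.mulLeft g).forall_congr (by simp)
  simp only [this]
theorem act_topD (g : G) (c : ZMod p) : act g c (topD k p G) = topD k p G := by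
  funext L x
  simp only [act_apply, topD, List.map_eq_nil_iff, Option.map_eq_none_iff]
  have : (∀ w, x (g * w) = none) ↔ (∀ w, x w = none) :=
    (Equiv.mulLeft g).forall_congr (by simp)
  simp only [this]

variable (k p G) in
/-- homogeneous part -/
def DI (i : ℤ) : Submodule k (Fn k p G) where
  carrier := {f | f ∈ DS k p G ∧ Deg i f}
  zero_mem' := ⟨Submodule.zero_mem _, Deg.zero⟩
  add_mem' h h' := ⟨Submodule.add_mem _ h.1 h'.1, h.2.add h'.2⟩
  smul_mem' c _ h := ⟨Submodule.smul_mem _ _ h.1, h.2.smul c⟩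

theorem dD_DI {i : ℤ} {f : Fn k p G} (h : f ∈ DI k p G i) : dD k p G f ∈ DI k p G (i + 1) :=
  ⟨dD_mem h.1, h.2.dD⟩
theorem act_DI {i : ℤ} {f : Fn k p G} (h : f ∈ DI k p G i) (g c) : act g c f ∈ DI k p G i :=
  ⟨act_mem g c h.1, act_deg g c h.2⟩

/-- selection of a coordinate -/
def sel (S : Set G) : G := if h : S.Nonempty then h.choose else 1
theorem sel_mem (S : Set G) (h : S.Nonempty) : sel S ∈ S := by
  unfold sel; rw [dif_pos h]; exact h.choose_spec

/-- cut-off function -/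
def chi (x : St p G) : k := if x (sel {w | x w ≠ none}) = some 0 then 1 else 0

variable (k p G) in
def mulChi : Module.End k (Fn k p G) where
  toFun f := fun L x => chi x * f L x
  map_add' f g := by funext L x; simp [mul_add]
  map_smul' r f := by funext L x; simp; ring

theorem mN_apply (w : G) (f : Fn k p G) (L x) :
    oO (mN k p) w f L x = if x w = none then f L x else 0 := by
  rw [oO_apply, Fintype.sum_option]
  rcases h : x w with _ | c
  · simp [mN]
    congr 1
    rw [← h]; simp
  · simp [mN]

theorem mulChi_DI {i : ℤ} {f : Fn k p G} (h : f ∈ DI k p G i) : mulChi k p G f ∈ DI k p G i := by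
  refine ⟨⟨fun L1 x y L2 => ⟨?_, ?_⟩, fun e => ?_⟩, ?_⟩
  · funext s
    have := congrFun (DS_alt h.1 L1 x y L2).1 s
    show (chi s : k) * f (L1 ++ x :: y :: L2) s = - (chi s * f (L1 ++ y :: x :: L2) s)
    rw [this]; simp
  · funext s
    have := congrFun (DS_alt h.1 L1 x y L2).2 s
    show (chi s : k) * f (L1 ++ x :: x :: L2) s = 0
    rw [this]; simp
  · funext L s
    have := congrFun (congrFun (DS_N h.1 e) L) s
    rw [mN_apply] at this ⊢
    show (if s e = none then (chi s : k) * f (e :: L) s else 0) = 0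
    by_cases hs : s e = none
    · rw [if_pos hs] at this ⊢
      rw [show f (e :: L) s = 0 from this]; simp
    · rw [if_neg hs]
  · intro L x hx
    exact h.2 L x (right_ne_zero_of_mul hx)

theorem chi_sum (x : St p G) (h : ∃ w, x w ≠ none) :
    ∑ c : ZMod p, (chi (k := k) (fun w : G => (x (1 * w)).map (· - c))) = 1 := by
  have e : ∀ c : ZMod p, {w : G | (x (1 * w)).map (· - c) ≠ none} = {w | x w ≠ none} := by
    intro c; ext w; simp
  have hm := sel_mem {w | x w ≠ none} h
  obtain ⟨b, hb⟩ := Option.ne_none_iff_exists'.1 hm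
  have hc : ∀ c : ZMod p, chi (k := k) (fun w : G => (x (1 * w)).map (· - c)) =
      if b = c then 1 else 0 := by
    intro c
    unfold chi
    rw [e]
    by_cases hbc : b = c
    · simp [hb, hbc]
    · simp [hb, hbc, sub_eq_zero]
  rw [Finset.sum_congr rfl fun c _ => hc c]
  simp

theorem some_of_deg {i : ℤ} (hi : i < 2 * Fintype.card G) {f : Fn k p G} (h : Deg i f) (L x)
    (hx : f L x ≠ 0) : ∃ w, x w ≠ none := by
  by_contra hn
  push Not at hn
  have := h L x hx
  simp [nn, hn] at this
  omega

theorem higman {i : ℤ} (hi : i < 2 * Fintype.card G) {f : Fn k p G} (h : f ∈ DI k p G i) :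
    ∑ c : ZMod p, act 1 c (mulChi k p G (act 1 (-c) f)) = f := by
  funext L x
  simp only [Finset.sum_apply]
  have e : ∀ c : ZMod p, act 1 c (mulChi k p G (act 1 (-c) f)) L x =
      chi (fun w : G => (x (1 * w)).map (· - c)) * f L x := by
    intro c
    have : act 1 c (act 1 (-c) f) L x = f L x := by
      rw [act_act]; simp [act_one]
    rw [← this]; rfl
  rw [Finset.sum_congr rfl fun c _ => e c, ← Finset.sum_mul]
  by_cases hx : f L x = 0
  · simp [hx]
  · rw [chi_sum x (some_of_deg hi h.2 L x hx), one_mul]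

theorem ker_sigma {i : ℤ} (hi : i < 2 * Fintype.card G) {f : Fn k p G} (h : f ∈ DI k p G i)
    (hs : act 1 1 f - f = 0) : ∃ w ∈ DI k p G i, f = ∑ c : ZMod p, act 1 c w := by
  have hs' : act 1 1 f = f := sub_eq_zero.1 hs
  have hn : ∀ y : ℕ, act 1 (y : ZMod p) f = f := by
    intro y
    induction y with
    | zero => simp [act_one]
    | succ y ih =>
      have := act_act (1 : G) 1 1 (y : ZMod p) f
      rw [ih, hs'] at this
      rw [Nat.cast_succ, add_comm]
      simpa using this.symm
  have hc : ∀ c : ZMod p, act 1 c f = f := fun c => by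
    have := hn c.val
    simpa using this
  refine ⟨mulChi k p G f, mulChi_DI h, ?_⟩
  conv_lhs => rw [← higman hi h]
  simp only [hc]

theorem ker_trace {i : ℤ} (hi : i < 2 * Fintype.card G) {f : Fn k p G} (h : f ∈ DI k p G i)
    (hs : ∑ c : ZMod p, act 1 c f = 0) : ∃ w ∈ DI k p G i, f = act 1 1 w - w := by
  set m : ZMod p → Fn k p G := fun c => mulChi k p G (act 1 (-c) f) with hm
  have hmD : ∀ c, m c ∈ DI k p G i := fun c => mulChi_DI (act_DI h _ _)
  have hm0 : ∑ c, m c = 0 := by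
    simp only [hm]
    rw [← map_sum]
    have : ∑ c : ZMod p, act (1 : G) (-c) f = 0 := by
      rw [← hs]
      exact Equiv.sum_comp (Equiv.neg (ZMod p)) (fun c => act (1 : G) c f)
    rw [this, map_zero]
  have hy : ∀ y : ℕ, ∀ v : Fn k p G, act 1 (y : ZMod p) v - v =
      act 1 1 (∑ z ∈ Finset.range y, act 1 (z : ZMod p) v) -
        ∑ z ∈ Finset.range y, act 1 (z : ZMod p) v := by
    intro y v
    induction y with
    | zero => simp [act_one]
    | succ y ih =>
      rw [Finset.sum_range_succ, map_add, act_act]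
      have : act (1 * 1 : G) (1 + (y : ZMod p)) v = act 1 ((y + 1 : ℕ) : ZMod p) v := by
        rw [Nat.cast_succ, add_comm, mul_one]
      rw [this, add_sub_add_comm, ← ih]; abel
  refine ⟨∑ c, ∑ z ∈ Finset.range c.val, act 1 (z : ZMod p) (m c), ?_, ?_⟩
  · exact Submodule.sum_mem _ fun c _ => Submodule.sum_mem _ fun z _ => act_DI (hmD c) _ _
  · rw [map_sum, ← Finset.sum_sub_distrib]
    conv_lhs => rw [← higman hi h]
    rw [← sub_zero (∑ c : ZMod p, act 1 c (mulChi k p G (act 1 (-c) f))), ← hm0, ← Finset.sum_sub_distrib]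
    refine Finset.sum_congr rfl fun c _ => ?_
    rw [← hy]; simp [hm]

end Act
end
end ExtProof
open CategoryTheory
set_option linter.all false

namespace ExtProof
noncomputable section
open scoped Classical

section Mem
variable {k : Type} [Field k] {p : ℕ} [NeZero p] {X V : Type} [AddCommGroup V] [Module k V]

theorem dL_mem (S : Submodule k V) (f : List X → V) (h : ∀ L, f L ∈ S) (L) : dL f L ∈ S := by
  induction L generalizing f with
  | nil => simp
  | cons x L ih => rw [dL_cons]; exact S.sub_mem (h _) (ih _ fun L => h _)
theorem EE_mem (S : Submodule k V) (f : ℕ → ZMod p → V) (h : ∀ j c, f j c ∈ S) (j c) : EE f j c ∈ S := by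
  rcases j with _ | j
  · simp [EE]
  · simp only [EE]; split_ifs
    · exact S.sub_mem (h _ _) (h _ _)
    · exact S.sum_mem fun c _ => h _ _
theorem DD_mem (S : Submodule k V) (f : List X → ℕ → ZMod p → V) (h : ∀ L j c, f L j c ∈ S) (L j c) :
    DD f L j c ∈ S := by
  rw [DD_apply]
  exact S.add_mem (dL_mem S _ (fun L => h _ _ _) L) (zsmul_mem (EE_mem S _ (h L) j c) _)
end Mem

section KeyP
variable {k : Type} [Field k] {p : ℕ} [NeZero p] {G : Type} [Group G] [Fintype G]

structure Good (m : ℕ) (i : ℤ) (w : List G → ℕ → ZMod p → Fn k p G) : Prop where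
  mem : ∀ L j c, w L j c ∈ DI k p G i
  supp : ∀ L j c, L.length + j ≠ m → w L j c = 0
  nil : ∀ j c, w [] j c = 0
  inv : ∀ g b L j c, w (L.map (g * ·)) j (c + b) = act g b (w L j c)

theorem Good.DD {m : ℕ} {i : ℤ} {w : List G → ℕ → ZMod p → Fn k p G} (h : Good m i w) :
    Good (m + 1) i (DD w) where
  mem := DD_mem _ _ h.mem
  supp := DD_supp w m h.supp
  nil j c := by
    rw [DD_apply, dL_nil]
    have : EE (w []) j c = 0 := by
      have e : w [] = fun j c => 0 := by funext j c; exact h.nil j c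
      rw [e]
      rcases j with _ | j <;> simp [EE]
    rw [this]; simp
  inv g b L j c := by
    rw [← DD_shift (g * ·) b w L j c]
    simp only [h.inv]
    exact DD_map (act g b).toAddMonoidHom w L j c

/-- chosen primitive -/
def hh (i : ℤ) (v : Fn k p G) : Fn k p G :=
  if h : v ≠ 0 ∧ ∃ w ∈ DI k p G (i - 1), dD k p G w = v then h.2.choose else 0

theorem hh_zero (i : ℤ) : hh i (0 : Fn k p G) = 0 := by simp [hh]
theorem hh_mem (i : ℤ) (v : Fn k p G) : hh i v ∈ DI k p G (i - 1) := by
  unfold hh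
  split_ifs with h
  · exact h.2.choose_spec.1
  · exact Submodule.zero_mem _
theorem hh_d (i : ℤ) (hi : 0 < i) (v : Fn k p G) (hv : v ∈ DI k p G i) (hd : dD k p G v = 0) :
    dD k p G (hh i v) = v := by
  by_cases h0 : v = 0
  · subst h0; rw [hh_zero, map_zero]
  obtain ⟨w, hw, hwd, e⟩ := exactD_pos i hi v hv.1 hv.2 hd
  have h : v ≠ 0 ∧ ∃ w ∈ DI k p G (i - 1), dD k p G w = v := ⟨h0, w, ⟨hw, hwd⟩, e⟩
  unfold hh
  rw [dif_pos h]
  exact h.2.choose_spec.2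

/-- equivariant lift -/
def lift (i : ℤ) (w : List G → ℕ → ZMod p → Fn k p G) : List G → ℕ → ZMod p → Fn k p G
  | [], _, _ => 0
  | g :: L, j, c => act g c (hh i (act g⁻¹ (-c) (w (g :: L) j c)))

theorem lift_good {m : ℕ} {i : ℤ} {w : List G → ℕ → ZMod p → Fn k p G} (h : Good m i w) :
    Good m (i - 1) (lift i w) where
  mem L j c := by
    rcases L with _ | ⟨g, L⟩
    · exact Submodule.zero_mem _
    · exact act_DI (hh_mem _ _) _ _
  supp L j c hL := by
    rcases L with _ | ⟨g, L⟩
    · rfl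
    · simp only [lift]; rw [h.supp _ _ _ hL, map_zero, hh_zero, map_zero]
  nil _ _ := rfl
  inv g b L j c := by
    rcases L with _ | ⟨x, L⟩
    · simp [lift]
    · have := h.inv g b (x :: L) j c
      simp only [List.map_cons] at this ⊢
      simp only [lift]
      rw [this, act_act, act_act]
      congr 1
      · rw [add_comm]
      · congr 3
        · group
        · ring

theorem lift_d {m : ℕ} {i : ℤ} (hi : 0 < i) {w : List G → ℕ → ZMod p → Fn k p G} (h : Good m i w)
    (hd : ∀ L j c, dD k p G (w L j c) = 0) (L j c) : dD k p G (lift i w L j c) = w L j c := by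
  rcases L with _ | ⟨g, L⟩
  · simp only [lift]; rw [map_zero, h.nil]
  · simp only [lift]
    rw [dD_act, hh_d i hi _ (act_DI (h.mem _ _ _) _ _), act_act]
    · simp [act_one]
    · rw [dD_act, hd, map_zero]

variable (k p G) in
def zfam : List G → ℕ → ZMod p → Fn k p G := fun L j _ =>
  if L.length = 1 ∧ j = 0 then topD k p G else 0

theorem zfam_good : Good 1 (2 * (Fintype.card G : ℤ)) (zfam k p G) where
  mem L j c := by
    unfold zfam; split_ifs
    · exact ⟨topD_mem, topD_deg⟩
    · exact Submodule.zero_mem _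
  supp L j c h := by
    unfold zfam; rw [if_neg]; rintro ⟨h1, h2⟩; omega
  nil j c := by simp [zfam]
  inv g b L j c := by
    unfold zfam
    rw [List.length_map]
    split_ifs
    · rw [act_topD]
    · rw [map_zero]

theorem zfam_d (L j c) : dD k p G (zfam k p G L j c) = 0 := by
  unfold zfam; split_ifs
  · exact topD_d
  · exact map_zero _

theorem zfam_DD (L j c) : DD (zfam k p G) L j c = 0 := by
  rw [DD_apply]
  have h1 : EE (zfam k p G L) j c = 0 := by
    rcases j with _ | _ | j <;> simp [EE, zfam]
  rw [h1, smul_zero, add_zero]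
  by_cases hL : L.length = 2
  · obtain ⟨x, y, rfl⟩ := List.length_eq_two.1 hL
    simp [dL_cons, zfam]
  · exact dL_supp _ 1 (fun L h => by simp [zfam, h]) L hL

variable (k p G) in
def WW : ℕ → List G → ℕ → ZMod p → Fn k p G
  | 0 => zfam k p G
  | a + 1 => DD (lift (2 * (Fintype.card G : ℤ) - a) (WW a))

variable (k p G) in
def UU (a : ℕ) : List G → ℕ → ZMod p → Fn k p G := lift (2 * (Fintype.card G : ℤ) - a) (WW k p G a)

theorem WW_succ (a : ℕ) : WW k p G (a + 1) = DD (UU k p G a) := rfl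

theorem WW_spec (a : ℕ) (ha : a ≤ 2 * Fintype.card G) :
    Good (a + 1) (2 * (Fintype.card G : ℤ) - a) (WW k p G a) ∧ (∀ L j c, dD k p G (WW k p G a L j c) = 0) ∧
    ∀ L j c, DD (WW k p G a) L j c = 0 := by
  induction a with
  | zero => exact ⟨by simpa [WW] using zfam_good, zfam_d, zfam_DD⟩
  | succ a ih =>
    obtain ⟨h1, h2, h3⟩ := ih (by omega)
    have hp : 0 < 2 * (Fintype.card G : ℤ) - a := by omega
    refine ⟨?_, ?_, ?_⟩
    · have := (lift_good h1).DD
      rw [WW_succ]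
      have e : 2 * (Fintype.card G : ℤ) - (a + 1 : ℕ) = 2 * (Fintype.card G : ℤ) - a - 1 := by
        push_cast; ring
      rw [e]; exact this
    · intro L j c
      rw [WW_succ, ← h3 L j c]
      have := DD_map (dD k p G).toAddMonoidHom (UU k p G a) L j c
      refine this.symm.trans ?_
      congr 1
      funext L j c
      exact lift_d hp h1 h2 L j c
    · intro L j c
      rw [WW_succ, DD_DD]

theorem UU_good (a : ℕ) (ha : a < 2 * Fintype.card G) :
    Good (a + 1) (2 * (Fintype.card G : ℤ) - a - 1) (UU k p G a) := lift_good (WW_spec a ha.le).1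
theorem UU_d (a : ℕ) (ha : a < 2 * Fintype.card G) (L j c) :
    dD k p G (UU k p G a L j c) = WW k p G a L j c :=
  lift_d (by omega) (WW_spec a ha.le).1 (WW_spec a ha.le).2.1 L j c

/-- norm or difference -/
def NN (a : ℕ) (v : Fn k p G) : Fn k p G :=
  if Even a then act 1 1 v - v else ∑ c : ZMod p, act 1 c v

variable (k p G) in
def vv (a : ℕ) : Fn k p G := UU k p G a [1] a 0

theorem UU_vv (a : ℕ) (ha : a < 2 * Fintype.card G) (c) : UU k p G a [1] a c = act 1 c (vv k p G a) := by
  have := (UU_good (k := k) (p := p) a ha).inv 1 c [1] a 0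
  simpa [vv] using this

theorem WW_vv (a : ℕ) (ha : a < 2 * Fintype.card G) : WW k p G (a + 1) [1] (a + 1) 0 = - NN a (vv k p G a) := by
  rw [WW_succ, DD_apply, dL_cons, dL_nil]
  rw [(UU_good a ha).nil]
  simp only [EE, UU_vv a ha, NN]
  split_ifs <;> simp [act_one]

theorem vv_d (a : ℕ) (ha : a + 1 < 2 * Fintype.card G) : dD k p G (vv k p G (a + 1)) = - NN a (vv k p G a) := by
  rw [vv, UU_d _ ha, WW_vv a (by omega)]

theorem NN_sub (a : ℕ) (v w : Fn k p G) : NN a (v - w) = NN a v - NN a w := by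
  unfold NN; split_ifs
  · rw [map_sub]; abel
  · simp
theorem NN_d (a : ℕ) (v : Fn k p G) : dD k p G (NN a v) = NN a (dD k p G v) := by
  unfold NN; split_ifs
  · rw [map_sub, dD_act]
  · simp [dD_act]

theorem NN_ker (a : ℕ) {i : ℤ} (hi : i < 2 * Fintype.card G) {f : Fn k p G} (h : f ∈ DI k p G i)
    (hs : NN (a + 1) f = 0) : ∃ w ∈ DI k p G i, f = NN a w := by
  unfold NN at hs ⊢
  by_cases ha : Even a
  · have ha' : ¬ Even (a + 1) := by simpa [Nat.even_add_one] using ha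
    rw [if_neg ha'] at hs
    simp only [if_pos ha]
    exact ker_trace hi h hs
  · have ha' : Even (a + 1) := by simpa [Nat.even_add_one] using ha
    rw [if_pos ha'] at hs
    simp only [if_neg ha]
    exact ker_sigma hi h hs

theorem vv_ne [CharP k p] (h : NN (2 * Fintype.card G - 1) (vv k p G (2 * Fintype.card G - 1)) = 0) : False := by
  have hc : 0 < Fintype.card G := Fintype.card_pos
  set n := 2 * Fintype.card G with hn
  have hmem : ∀ a, a < n → vv k p G a ∈ DI k p G (2 * (Fintype.card G : ℤ) - a - 1) :=
    fun a ha => (UU_good a ha).mem _ _ _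
  have hd : ∀ b, b < n → ∃ y ∈ DI k p G (2 * (Fintype.card G : ℤ) - (n - 1 - b : ℕ) - 2),
      NN (n - 1 - b) (vv k p G (n - 1 - b) - dD k p G y) = 0 := by
    intro b
    induction b with
    | zero => intro _; exact ⟨0, Submodule.zero_mem _, by simpa using h⟩
    | succ b ih =>
      intro hb
      obtain ⟨y, hy, hN⟩ := ih (by omega)
      obtain ⟨a, ha⟩ : ∃ a, a = n - 1 - (b + 1) := ⟨_, rfl⟩
      have ha1 : n - 1 - b = a + 1 := by omega
      rw [← ha]
      rw [ha1] at hy hN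
      have hya := dD_DI hy
      have hva := hmem (a + 1) (by omega)
      rw [show 2 * (Fintype.card G : ℤ) - (a + 1 : ℕ) - 2 + 1 = 2 * (Fintype.card G : ℤ) - (a + 1 : ℕ) - 1 by ring] at hya
      obtain ⟨w, hw, he⟩ := NN_ker a (by omega) (Submodule.sub_mem _ hva hya) hN
      refine ⟨-w, Submodule.neg_mem _ ?_, ?_⟩
      · convert hw using 2; push_cast; ring
      · have e2 := congrArg (dD k p G) he
        rw [map_sub, dD_dD hy.1, vv_d a (by omega), NN_d, sub_zero] at e2
        rw [map_neg, NN_sub]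
        rw [← neg_eq_iff_eq_neg.2 e2.symm]
        have : NN a (-(dD k p G w)) = - NN a (dD k p G w) := by
          have := NN_sub a 0 (dD k p G w)
          have h0 : NN a (0 : Fn k p G) = 0 := by unfold NN; split_ifs <;> simp
          rw [h0] at this; simpa using this
        rw [this]; simp
  obtain ⟨y, hy, hN⟩ := hd (n - 1) (by omega)
  rw [show n - 1 - (n - 1) = 0 by omega] at hy hN
  have hya := dD_DI hy
  have hva := hmem 0 (by omega)
  rw [show 2 * (Fintype.card G : ℤ) - (0 : ℕ) - 2 + 1 = 2 * (Fintype.card G : ℤ) - (0 : ℕ) - 1 by ring] at hya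
  have hN' : act 1 1 (vv k p G 0 - dD k p G y) - (vv k p G 0 - dD k p G y) = 0 := by
    simpa [NN] using hN
  obtain ⟨w, hw, he⟩ := ker_sigma (by push_cast; omega) (Submodule.sub_mem _ hva hya) hN'
  have e2 := congrArg (dD k p G) he
  rw [map_sub, dD_dD hy.1, sub_zero, vv, UU_d 0 (by omega), map_sum] at e2
  have e3 := congrFun (congrFun e2 []) (fun _ => none)
  simp only [dD_act, Finset.sum_apply, act_apply] at e3
  simp [WW, zfam, topD] at e3

variable (k p G) in
/-- scalar family -/
def sf (L : List G) (j : ℕ) (c : ZMod p) : k := WW k p G (2 * Fintype.card G) L j c [] (fun _ => some 0)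

theorem sf_spec (L j c) : WW k p G (2 * Fintype.card G) L j c = sf k p G L j c • oneD k p G := by
  obtain ⟨h1, h2, h3⟩ := WW_spec (k := k) (p := p) (G := G) (2 * Fintype.card G) le_rfl
  have hm := h1.mem L j c
  have e0 : 2 * (Fintype.card G : ℤ) - (2 * Fintype.card G : ℕ) = 0 := by push_cast; ring
  rw [e0] at hm
  obtain ⟨t, ht⟩ := exactD_zero _ hm.1 hm.2 (h2 L j c)
  have : sf k p G L j c = t := by
    rw [sf, ht]; simp [oneD]
  rw [this, ht]

theorem sf_inv (g : G) (b : ZMod p) (L j c) : sf k p G (L.map (g * ·)) j (c + b) = sf k p G L j c := by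
  obtain ⟨h1, h2, h3⟩ := WW_spec (k := k) (p := p) (G := G) (2 * Fintype.card G) le_rfl
  rw [sf, h1.inv, sf_spec, map_smul, act_oneD]
  simp [oneD]

theorem sf_const (L j) (c : ZMod p) : sf k p G L j c = sf k p G L j 0 := by
  have := sf_inv (k := k) (G := G) 1 c L j 0
  simpa using this

theorem sf_dL [CharP k p] (L j c) : dL (fun L => sf k p G L j c) L = 0 := by
  obtain ⟨h1, h2, h3⟩ := WW_spec (k := k) (p := p) (G := G) (2 * Fintype.card G) le_rfl
  have e : DD (sf k p G) L j c = 0 := by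
    have := congrFun (congrFun (h3 L j c) []) (fun _ => some 0)
    let φ : Fn k p G →+ k :=
      { toFun := fun f => f [] (fun _ => some 0), map_zero' := rfl, map_add' := fun _ _ => rfl }
    exact (DD_map φ (WW k p G (2 * Fintype.card G)) L j c).trans this
  rw [DD_apply] at e
  have e2 : EE (sf k p G L) j c = 0 := by
    have : sf k p G L = fun j _ => sf k p G L j 0 := by
      funext j c; exact sf_const L j c
    rw [this]
    exact EE_const (fun v => by simp) _ j c
  rwa [e2, smul_zero, add_zero] at e

theorem key [CharP k p] : ∃ s : ℕ → List G → k,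
    (∀ i ≤ 2 * Fintype.card G, ∀ L, L.length ≠ i + 1 → s i L = 0) ∧
    (∀ i L, dL (s i) L = 0) ∧
    (∀ i g L, s i (L.map (g * ·)) = s i L) ∧ s 0 [1] ≠ 0 ∧
    ∀ (P : Subgroup G) (lam : G → ZMod p), (∀ g ∈ P, ∀ h ∈ P, lam (g * h) = lam g + lam h) →
      ∃ h : List G → ℕ → ZMod p → k,
        (∀ L j c, L.length + j ≠ 2 * Fintype.card G → h L j c = 0) ∧
        (∀ j c, h [] j c = 0) ∧
        (∀ g ∈ P, ∀ L j c, h (L.map (g * ·)) j (c + lam g) = h L j c) ∧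
        ∀ L c, ∀ j ≤ 2 * Fintype.card G, DD h L j c = s (2 * Fintype.card G - j) L := by
  have hc : 0 < Fintype.card G := Fintype.card_pos
  obtain ⟨h1, h2, h3⟩ := WW_spec (k := k) (p := p) (G := G) (2 * Fintype.card G) le_rfl
  obtain ⟨a, ha⟩ : ∃ a, 2 * Fintype.card G = a + 1 := ⟨2 * Fintype.card G - 1, by omega⟩
  have hU := UU_good (k := k) (p := p) (G := G) a (by omega)
  refine ⟨fun i L => sf k p G L (2 * Fintype.card G - i) 0, ?_, ?_, ?_, ?_, ?_⟩
  · intro i hi L hL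
    show sf k p G L _ 0 = 0
    rw [sf, h1.supp _ _ _ (by omega)]; rfl
  · intro i L; exact sf_dL L _ _
  · intro i g L
    have := sf_inv (k := k) (p := p) g 0 L (2 * Fintype.card G - i) 0
    simpa using this
  · intro h0
    apply vv_ne (k := k) (p := p) (G := G)
    have e := sf_spec (k := k) (p := p) (G := G) [1] (2 * Fintype.card G) 0
    simp only [Nat.sub_zero] at h0
    rw [h0, zero_smul, ha, WW_vv a (by omega)] at e
    rw [ha]
    simpa using e
  · intro P lam hlam
    let r : G → G := fun w => (Quotient.mk (QuotientGroup.rightRel P) w).out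
    have hr : ∀ w, w * (r w)⁻¹ ∈ P := by
      intro w
      have : (QuotientGroup.rightRel P) (r w) w := Quotient.exact (Quotient.out_eq _)
      rwa [QuotientGroup.rightRel_apply] at this
    have hr2 : ∀ g ∈ P, ∀ w, r (g * w) = r w := by
      intro g hg w
      have : Quotient.mk (QuotientGroup.rightRel P) (g * w) = Quotient.mk (QuotientGroup.rightRel P) w := by
        apply Quotient.sound
        show (QuotientGroup.rightRel P) _ _
        rw [QuotientGroup.rightRel_apply]
        have : w * (g * w)⁻¹ = g⁻¹ := by group
        rw [this]; exact P.inv_mem hg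
      simp only [r, this]
    let ξ : G → ZMod p := fun w => lam (w * (r w)⁻¹)
    have hξ : ∀ g ∈ P, ∀ w, ξ (g * w) = lam g + ξ w := by
      intro g hg w
      simp only [ξ]
      rw [hr2 g hg, mul_assoc, hlam g hg _ (hr w)]
    refine ⟨fun L j c => UU k p G a L j c [] (fun w => some (ξ w)), ?_, ?_, ?_, ?_⟩
    · intro L j c hL
      simp only []
      rw [hU.supp L j c (by omega)]; rfl
    · intro j c; simp only []; rw [hU.nil]; rfl
    · intro g hg L j c
      simp only []
      rw [hU.inv, act_apply]
      simp only [List.map_nil]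
      congr 1
      funext w
      rw [hξ g hg]; simp
    · intro L c j hj
      let φ : Fn k p G →+ k :=
        { toFun := fun f => f [] (fun w => some (ξ w)), map_zero' := rfl, map_add' := fun _ _ => rfl }
      refine (DD_map φ (UU k p G a) L j c).trans ?_
      have e := sf_spec (k := k) (p := p) (G := G) L j c
      rw [ha, WW_succ] at e
      rw [e, sf_const]
      show _ = sf k p G L (2 * Fintype.card G - (2 * Fintype.card G - j)) 0
      rw [show 2 * Fintype.card G - (2 * Fintype.card G - j) = j by omega]
      simp [φ, oneD]

end KeyP
end
end ExtProof
open CategoryTheory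
set_option linter.all false

namespace ExtProof
noncomputable section
open scoped Classical

/-- bundled representations -/
structure GMod (k G : Type) [Field k] [Group G] where
  V : Type
  [ac : AddCommGroup V]
  [md : Module k V]
  ρ : Representation k G V

attribute [instance] GMod.ac GMod.md

section GM
variable {k : Type} [Field k] {G : Type} [Group G] [Fintype G]
variable {A B C D : GMod k G}

def Eqv (f : A.V →ₗ[k] B.V) : Prop := ∀ g a, f (A.ρ g a) = B.ρ g (f a)

theorem Eqv.comp {f : B.V →ₗ[k] C.V} {g : A.V →ₗ[k] B.V} (hf : Eqv f) (hg : Eqv g) :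
    Eqv (A := A) (B := C) (f ∘ₗ g) := fun x a => by simp [hg x a, hf x]
theorem Eqv.id : Eqv (A := A) (B := A) LinearMap.id := fun x a => rfl
theorem Eqv.sub {f g : A.V →ₗ[k] B.V} (hf : Eqv f) (hg : Eqv g) :
    Eqv (A := A) (B := B) (f - g) := fun x a => by simp [hf x a, hg x a]
theorem Eqv.zero : Eqv (A := A) (B := B) 0 := fun x a => by simp

theorem rho_inv (g : G) (a : A.V) : A.ρ g⁻¹ (A.ρ g a) = a := by simp
theorem rho_inv' (g : G) (a : A.V) : A.ρ g (A.ρ g⁻¹ a) = a := by simp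
theorem rho_mul (g h : G) (a : A.V) : A.ρ (g * h) a = A.ρ g (A.ρ h a) := by simp

/-- trace -/
def Tr (Q : Subgroup G) (φ : A.V →ₗ[k] B.V) : A.V →ₗ[k] B.V :=
  ∑ g : Q, B.ρ g ∘ₗ φ ∘ₗ A.ρ (g : G)⁻¹

theorem Tr_apply (Q : Subgroup G) (φ : A.V →ₗ[k] B.V) (a) :
    Tr Q φ a = ∑ g : Q, B.ρ g (φ (A.ρ (g : G)⁻¹ a)) := by simp [Tr]

theorem Tr_top (φ : A.V →ₗ[k] B.V) (a) :
    Tr ⊤ φ a = ∑ g : G, B.ρ g (φ (A.ρ g⁻¹ a)) := by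
  rw [Tr_apply]
  exact Equiv.sum_comp Subgroup.topEquiv.toEquiv (fun g : G => B.ρ g (φ (A.ρ g⁻¹ a)))

theorem Tr_left (Q : Subgroup G) (φ : A.V →ₗ[k] B.V) {f : B.V →ₗ[k] C.V} (hf : Eqv f) :
    f ∘ₗ Tr Q φ = Tr (A := A) (B := C) Q (f ∘ₗ φ) := by
  ext a; simp only [LinearMap.comp_apply, Tr_apply, map_sum]
  exact Finset.sum_congr rfl fun g _ => hf _ _
theorem Tr_right (Q : Subgroup G) (φ : B.V →ₗ[k] C.V) {f : A.V →ₗ[k] B.V} (hf : Eqv f) :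
    Tr Q φ ∘ₗ f = Tr (A := A) (B := C) Q (φ ∘ₗ f) := by
  ext a; simp only [LinearMap.comp_apply, Tr_apply]
  exact Finset.sum_congr rfl fun g _ => by rw [hf]
theorem Tr_add (Q : Subgroup G) (φ ψ : A.V →ₗ[k] B.V) :
    Tr (A := A) (B := B) Q (φ + ψ) = Tr Q φ + Tr Q ψ := by
  ext a; simp [Tr_apply, Finset.sum_add_distrib]
theorem Tr_smul (Q : Subgroup G) (c : k) (φ : A.V →ₗ[k] B.V) :
    Tr (A := A) (B := B) Q (c • φ) = c • Tr Q φ := by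
  ext a; simp [Tr_apply, Finset.smul_sum]

theorem Tr_mem (Q : Subgroup G) (φ : A.V →ₗ[k] B.V) (g : G) (hg : g ∈ Q) (a) :
    Tr Q φ (A.ρ g a) = B.ρ g (Tr Q φ a) := by
  simp only [Tr_apply, map_sum]
  rw [← Equiv.sum_comp (Equiv.mulLeft (⟨g, hg⟩ : Q))]
  refine Finset.sum_congr rfl fun h _ => ?_
  simp only [Equiv.coe_mulLeft, Subgroup.coe_mul, mul_inv_rev, rho_mul, rho_inv]
theorem Tr_eqv (φ : A.V →ₗ[k] B.V) : Eqv (A := A) (B := B) (Tr ⊤ φ) :=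
  fun g a => Tr_mem ⊤ φ g (Subgroup.mem_top g) a

def Null (Q : Subgroup G) (f : A.V →ₗ[k] B.V) : Prop := ∃ φ : A.V →ₗ[k] B.V, f = Tr Q φ

theorem Null.left {Q : Subgroup G} {φ : A.V →ₗ[k] B.V} (h : Null Q φ) {f : B.V →ₗ[k] C.V} (hf : Eqv f) :
    Null (A := A) (B := C) Q (f ∘ₗ φ) := by
  obtain ⟨ψ, rfl⟩ := h; exact ⟨_, Tr_left Q ψ hf⟩
theorem Null.right {Q : Subgroup G} {φ : B.V →ₗ[k] C.V} (h : Null Q φ) {f : A.V →ₗ[k] B.V} (hf : Eqv f) :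
    Null (A := A) (B := C) Q (φ ∘ₗ f) := by
  obtain ⟨ψ, rfl⟩ := h; exact ⟨_, Tr_right Q ψ hf⟩
theorem Null.add {Q : Subgroup G} {f g : A.V →ₗ[k] B.V} (hf : Null Q f) (hg : Null Q g) :
    Null (A := A) (B := B) Q (f + g) := by
  obtain ⟨ψ, rfl⟩ := hf; obtain ⟨χ, rfl⟩ := hg; exact ⟨_, (Tr_add Q ψ χ).symm⟩
theorem Null.smul {Q : Subgroup G} {f : A.V →ₗ[k] B.V} (hf : Null Q f) (c : k) :
    Null (A := A) (B := B) Q (c • f) := by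
  obtain ⟨ψ, rfl⟩ := hf; exact ⟨_, (Tr_smul Q c ψ).symm⟩
theorem Null.sub {Q : Subgroup G} {f g : A.V →ₗ[k] B.V} (hf : Null Q f) (hg : Null Q g) :
    Null (A := A) (B := B) Q (f - g) := by
  have := hf.add (hg.smul (-1)); simpa [sub_eq_add_neg] using this
theorem Null.zero {Q : Subgroup G} : Null (A := A) (B := B) Q 0 := ⟨0, by ext a; simp [Tr_apply]⟩

theorem Null.bot (Q : Subgroup G) (hQ : Q = ⊥) (f : A.V →ₗ[k] B.V) : Null Q f := by
  refine ⟨f, ?_⟩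
  ext a; rw [Tr_apply, Finset.sum_eq_single (1 : Q)]
  · simp
  · intro b _ hb
    exact absurd (Subtype.ext ((Subgroup.mem_bot).1 (hQ ▸ b.2))) hb
  · intro h; exact absurd (Finset.mem_univ _) h

def cosetEquiv (Q : Subgroup G) : (G ⧸ Q) × Q ≃ G where
  toFun x := x.1.out * x.2
  invFun g := (QuotientGroup.mk g, ⟨(Quotient.out (QuotientGroup.mk g : G ⧸ Q))⁻¹ * g, by
    rw [← QuotientGroup.eq]; exact Quotient.out_eq _⟩)
  left_inv x := by
    obtain ⟨q, h⟩ := x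
    have e : (QuotientGroup.mk (q.out * h) : G ⧸ Q) = q := by
      rw [QuotientGroup.mk_mul_of_mem _ h.2]; exact Quotient.out_eq _
    apply Prod.ext
    · exact e
    · apply Subtype.ext
      show (Quotient.out (QuotientGroup.mk (q.out * h) : G ⧸ Q))⁻¹ * (q.out * h) = h
      rw [e]; simp
  right_inv g := by simp

theorem sum_coset {V : Type} [AddCommMonoid V] (Q : Subgroup G) (F : G → V) :
    ∑ g, F g = ∑ q : G ⧸ Q, ∑ h : Q, F (q.out * h) := by
  rw [← Fintype.sum_prod_type', ← Equiv.sum_comp (cosetEquiv Q)]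
  rfl

theorem Null.of_top {f : A.V →ₗ[k] B.V} (h : Null (⊤ : Subgroup G) f) (Q : Subgroup G) : Null Q f := by
  obtain ⟨φ, rfl⟩ := h
  refine ⟨∑ q : G ⧸ Q, B.ρ (q.out)⁻¹ ∘ₗ φ ∘ₗ A.ρ q.out, ?_⟩
  ext a
  rw [Tr_top, Tr_apply, ← Equiv.sum_comp (Equiv.inv G), sum_coset Q, Finset.sum_comm,
    ← Equiv.sum_comp (Equiv.inv Q)]
  refine Finset.sum_congr rfl fun h _ => ?_
  simp [map_sum]

theorem Null.of_index {f : A.V →ₗ[k] B.V} (hf : Eqv f) (Q : Subgroup G) (h : Null Q f)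
    (hi : (Q.index : k) ≠ 0) : Null (⊤ : Subgroup G) f := by
  obtain ⟨φ, rfl⟩ := h
  have : Tr ⊤ φ = (Q.index : k) • Tr Q φ := by
    ext a
    rw [Tr_top, sum_coset Q]
    have : ∀ q : G ⧸ Q, ∑ h : Q, B.ρ (q.out * h) (φ (A.ρ (q.out * h)⁻¹ a)) = Tr Q φ a := by
      intro q
      have e := hf q.out (A.ρ (q.out)⁻¹ a)
      rw [rho_inv'] at e
      rw [e, Tr_apply, map_sum]
      refine Finset.sum_congr rfl fun h _ => ?_
      simp
    rw [Finset.sum_congr rfl fun q _ => this q]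
    simp only [Finset.sum_const, Finset.card_univ, LinearMap.smul_apply]
    rw [← Nat.card_eq_fintype_card, ← Subgroup.index, Nat.cast_smul_eq_nsmul]
  refine ⟨(Q.index : k)⁻¹ • φ, ?_⟩
  rw [Tr_smul, this, smul_smul, inv_mul_cancel₀ hi, one_smul]

end GM

section Letters
variable {k : Type} [Field k] {G : Type} [Group G] [Fintype G]

/-- all functions on lists -/
def Big (Y : GMod k G) : GMod k G where
  V := List G → Y.V
  ρ := 
    { toFun := fun g =>
        { toFun := fun f L => Y.ρ g (f (L.map (g⁻¹ * ·)))
          map_add' := fun f f' => by funext L; simp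
          map_smul' := fun c f => by funext L; simp }
      map_one' := by ext f L; simp
      map_mul' := fun g h => by
        apply LinearMap.ext; intro f
        funext L
        simp only [LinearMap.coe_mk, AddHom.coe_mk, Module.End.mul_apply, rho_mul, List.map_map]
        congr 3
        apply congrArg₂ _ _ rfl
        funext y; simp [mul_assoc] }

inductive Let | T (j : ℕ) | Om

/-- the underlying submodules -/
def Lsub (k : Type) [Field k] (G : Type) [Fintype G] (V : Type) [AddCommGroup V] [Module k V] :
    Let → Submodule k (List G → V)
  | .T j => 
    { carrier := {f | (∀ L, L.length ≠ j + 1 → f L = 0) ∧ ∀ L, dL f L = 0}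
      zero_mem' := ⟨fun _ _ => rfl, fun L => dL_zero L⟩
      add_mem' := fun {f g} hf hg => ⟨fun L hL => by simp [hf.1 L hL, hg.1 L hL], fun L => by
        have := dL_add f g L
        rw [hf.2, hg.2, add_zero] at this; exact this⟩
      smul_mem' := fun c f hf => ⟨fun L hL => by simp [hf.1 L hL], fun L => by
        have := dL_map (LinearMap.toAddMonoidHom (c • (LinearMap.id : V →ₗ[k] V))) f L
        rw [hf.2, map_zero] at this; exact this⟩ }
  | .Om => 
    { carrier := {f | (∀ L, L.length ≠ 1 → f L = 0) ∧ ∑ g : G, f [g] = 0}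
      zero_mem' := ⟨fun _ _ => rfl, by simp⟩
      add_mem' := fun {f g} hf hg => ⟨fun L hL => by simp [hf.1 L hL, hg.1 L hL], by
        simp only [Pi.add_apply, Finset.sum_add_distrib, hf.2, hg.2, add_zero]⟩
      smul_mem' := fun c f hf => ⟨fun L hL => by simp [hf.1 L hL], by
        simp only [Pi.smul_apply, ← Finset.smul_sum, hf.2, smul_zero]⟩ }

theorem mem_T {V : Type} [AddCommGroup V] [Module k V] {j : ℕ} {f : List G → V} :
    f ∈ Lsub k G V (.T j) ↔ (∀ L, L.length ≠ j + 1 → f L = 0) ∧ ∀ L, dL f L = 0 := Iff.rfl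
theorem mem_Om {V : Type} [AddCommGroup V] [Module k V] {f : List G → V} :
    f ∈ Lsub k G V .Om ↔ (∀ L, L.length ≠ 1 → f L = 0) ∧ ∑ g : G, f [g] = 0 := Iff.rfl

theorem Lsub_map {V W : Type} [AddCommGroup V] [Module k V] [AddCommGroup W] [Module k W]
    (φ : V →ₗ[k] W) (l : Let) {f : List G → V} (hf : f ∈ Lsub k G V l) :
    (fun L => φ (f L)) ∈ Lsub k G W l := by
  cases l with
  | T j =>
    refine ⟨fun L hL => by simp only [hf.1 L hL, map_zero], fun L => ?_⟩
    have := dL_map φ.toAddMonoidHom f L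
    rw [hf.2, map_zero] at this; exact this
  | Om =>
    refine ⟨fun L hL => by simp only [hf.1 L hL, map_zero], ?_⟩
    rw [← map_sum, hf.2, map_zero]

theorem Lsub_shift {V : Type} [AddCommGroup V] [Module k V] (g : G) (l : Let)
    {f : List G → V} (hf : f ∈ Lsub k G V l) :
    (fun L => f (L.map (g * ·))) ∈ Lsub k G V l := by
  cases l with
  | T j =>
    refine ⟨fun L hL => hf.1 _ (by simpa using hL), fun L => ?_⟩
    rw [dL_listmap, hf.2]
  | Om =>
    refine ⟨fun L hL => hf.1 _ (by simpa using hL), ?_⟩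
    have := Equiv.sum_comp (Equiv.mulLeft g) (fun x => f [x])
    rw [hf.2] at this; simpa using this

theorem Lsub_rho (Y : GMod k G) (l : Let) (g : G) {f : List G → Y.V} (hf : f ∈ Lsub k G Y.V l) :
    (Big Y).ρ g f ∈ Lsub k G Y.V l := Lsub_map (Y.ρ g) l (Lsub_shift g⁻¹ l hf)

/-- letter representations -/
def FLrho (l : Let) (Y : GMod k G) : Representation k G (Lsub k G Y.V l) where
  toFun g := 
    { toFun := fun f => ⟨(Big Y).ρ g f.1, Lsub_rho Y l g f.2⟩
      map_add' := fun f f' => Subtype.ext (map_add ((Big Y).ρ g) f.1 f'.1)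
      map_smul' := fun c f => Subtype.ext (map_smul ((Big Y).ρ g) c f.1) }
  map_one' := by
    apply LinearMap.ext; intro f; apply Subtype.ext
    show (Big Y).ρ 1 f.1 = f.1
    rw [map_one]; rfl
  map_mul' g h := by
    apply LinearMap.ext; intro f; apply Subtype.ext
    show (Big Y).ρ (g * h) f.1 = (Big Y).ρ g ((Big Y).ρ h f.1)
    rw [map_mul]; rfl

/-- letter functors -/
def FL (l : Let) (Y : GMod k G) : GMod k G where
  V := Lsub k G Y.V l
  ρ := FLrho l Y

theorem FL_rho (l : Let) (Y : GMod k G) (g : G) (f : (FL l Y).V) (L) :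
    ((FL l Y).ρ g f).1 L = Y.ρ g (f.1 (L.map (g⁻¹ * ·))) := rfl

def FLmap (l : Let) {Y Z : GMod k G} (φ : Y.V →ₗ[k] Z.V) : (FL l Y).V →ₗ[k] (FL l Z).V where
  toFun f := ⟨fun L => φ (f.1 L), Lsub_map φ l f.2⟩
  map_add' f g := by apply Subtype.ext; funext L; exact map_add φ _ _
  map_smul' c f := by apply Subtype.ext; funext L; exact map_smul φ c _

theorem FLmap_apply (l : Let) {Y Z : GMod k G} (φ : Y.V →ₗ[k] Z.V) (f : (FL l Y).V) (L) :
    (FLmap l φ f).1 L = φ (f.1 L) := rfl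
theorem FLmap_comp (l : Let) {X Y Z : GMod k G} (φ : Y.V →ₗ[k] Z.V) (ψ : X.V →ₗ[k] Y.V) :
    FLmap (Y := X) (Z := Z) l (φ ∘ₗ ψ) = FLmap l φ ∘ₗ FLmap l ψ := rfl
theorem FLmap_id (l : Let) {X : GMod k G} :
    FLmap (Y := X) (Z := X) l LinearMap.id = LinearMap.id := rfl
theorem FLmap_add (l : Let) {Y Z : GMod k G} (φ ψ : Y.V →ₗ[k] Z.V) :
    FLmap (Y := Y) (Z := Z) l (φ + ψ) = FLmap l φ + FLmap l ψ := rfl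
theorem FLmap_eqv (l : Let) {Y Z : GMod k G} {φ : Y.V →ₗ[k] Z.V} (h : Eqv φ) : Eqv (FLmap l φ) := by
  intro g f
  apply Subtype.ext; funext L
  rw [FLmap_apply, FL_rho, FL_rho, h]; rfl

/-- words -/
def ev : List Let → GMod k G → GMod k G
  | [], Y => Y
  | l :: w, Y => FL l (ev w Y)

def evmap : (w : List Let) → {Y Z : GMod k G} → (Y.V →ₗ[k] Z.V) → ((ev w Y).V →ₗ[k] (ev w Z).V)
  | [], _, _, φ => φ
  | l :: w, _, _, φ => FLmap l (evmap w φ)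

theorem evmap_comp (w : List Let) {X Y Z : GMod k G} (φ : Y.V →ₗ[k] Z.V) (ψ : X.V →ₗ[k] Y.V) :
    evmap (Y := X) (Z := Z) w (φ ∘ₗ ψ) = evmap w φ ∘ₗ evmap w ψ := by
  induction w with
  | nil => rfl
  | cons l w ih => simp only [evmap]; rw [ih]; rfl
theorem evmap_id (w : List Let) {X : GMod k G} :
    evmap (Y := X) (Z := X) w LinearMap.id = LinearMap.id := by
  induction w with
  | nil => rfl
  | cons l w ih => simp only [evmap]; rw [ih]; rfl
theorem evmap_add (w : List Let) {Y Z : GMod k G} (φ ψ : Y.V →ₗ[k] Z.V) :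
    evmap (Y := Y) (Z := Z) w (φ + ψ) = evmap w φ + evmap w ψ := by
  induction w with
  | nil => rfl
  | cons l w ih => simp only [evmap]; rw [ih]; rfl
theorem evmap_eqv (w : List Let) {Y Z : GMod k G} {φ : Y.V →ₗ[k] Z.V} (h : Eqv φ) : Eqv (evmap w φ) := by
  induction w with
  | nil => exact h
  | cons l w ih => exact FLmap_eqv l ih

theorem ev_append (w : List Let) (l : Let) (Y : GMod k G) : ev (w ++ [l]) Y = ev w (FL l Y) := by
  induction w with
  | nil => rfl
  | cons a w ih => simp only [List.cons_append, ev]; rw [ih]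

end Letters
end
end ExtProof
open CategoryTheory
set_option linter.all false

namespace ExtProof
noncomputable section
open scoped Classical

/-- the invariant cocycles -/
structure SD (k G : Type) [Field k] [Group G] where
  s : ℕ → List G → k
  supp : ∀ i L, L.length ≠ i + 1 → s i L = 0
  cocyc : ∀ i L, dL (s i) L = 0
  inv : ∀ i g L, s i (L.map (g * ·)) = s i L

section Zeta
variable {k : Type} [Field k] {G : Type} [Group G] [Fintype G] (S : SD k G)
variable {A B C : GMod k G}

def zeta (j : ℕ) (Y : GMod k G) : Y.V →ₗ[k] (FL (.T j) Y).V where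
  toFun y := ⟨fun L => S.s j L • y, fun L hL => by simp [S.supp j L hL], fun L => by
    have := dL_map ((LinearMap.toSpanSingleton k Y.V y).toAddMonoidHom) (S.s j) L
    rw [S.cocyc, map_zero] at this
    exact this⟩
  map_add' y z := by apply Subtype.ext; funext L; exact smul_add _ _ _
  map_smul' c y := by apply Subtype.ext; funext L; exact smul_comm _ _ _

theorem zeta_apply (j : ℕ) (Y : GMod k G) (y L) : (zeta S j Y y).1 L = S.s j L • y := rfl

theorem zeta_eqv (j : ℕ) (Y : GMod k G) : Eqv (zeta S j Y) := by
  intro g y; apply Subtype.ext; funext L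
  rw [zeta_apply, FL_rho, zeta_apply, S.inv, map_smul]

theorem zeta_nat (j : ℕ) {Y Z : GMod k G} (φ : Y.V →ₗ[k] Z.V) :
    zeta S j Z ∘ₗ φ = FLmap (.T j) φ ∘ₗ zeta S j Y := by
  apply LinearMap.ext; intro y; apply Subtype.ext; funext L
  show S.s j L • φ y = φ (S.s j L • y)
  rw [map_smul]

def Tit (j : ℕ) : ℕ → GMod k G → GMod k G
  | 0, Y => Y
  | a + 1, Y => Tit j a (FL (.T j) Y)

def zit (j : ℕ) : (a : ℕ) → (Y : GMod k G) → (Y.V →ₗ[k] (Tit j a Y).V)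
  | 0, _ => LinearMap.id
  | a + 1, Y => zit j a (FL (.T j) Y) ∘ₗ zeta S j Y

theorem zit_eqv (j a : ℕ) (Y : GMod k G) : Eqv (zit S j a Y) := by
  induction a generalizing Y with
  | zero => exact Eqv.id
  | succ a ih => exact (ih _).comp (zeta_eqv S j Y)

theorem zit_nat (j a : ℕ) {Y Z : GMod k G} {φ : Y.V →ₗ[k] Z.V} (h : Eqv φ) :
    ∃ Φ : (Tit j a Y).V →ₗ[k] (Tit j a Z).V, Eqv Φ ∧ zit S j a Z ∘ₗ φ = Φ ∘ₗ zit S j a Y := by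
  induction a generalizing Y Z with
  | zero => exact ⟨φ, h, rfl⟩
  | succ a ih =>
    obtain ⟨Φ, h1, h2⟩ := ih (FLmap_eqv (.T j) h)
    refine ⟨Φ, h1, ?_⟩
    show (zit S j a (FL (.T j) Z) ∘ₗ zeta S j Z) ∘ₗ φ = Φ ∘ₗ (zit S j a (FL (.T j) Y) ∘ₗ zeta S j Y)
    rw [LinearMap.comp_assoc, zeta_nat, ← LinearMap.comp_assoc, h2, LinearMap.comp_assoc]

def Kills (j c : ℕ) (f : A.V →ₗ[k] B.V) : Prop :=
  Null (A := A) (B := Tit j c B) ⊤ (zit S j c B ∘ₗ f)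

variable {S}
theorem Kills.left {j c : ℕ} {f : A.V →ₗ[k] B.V} (h : Kills S j c f) {φ : B.V →ₗ[k] C.V} (hφ : Eqv φ) :
    Kills (A := A) (B := C) S j c (φ ∘ₗ f) := by
  obtain ⟨Φ, h1, h2⟩ := zit_nat S j c hφ
  unfold Kills
  rw [← LinearMap.comp_assoc, h2, LinearMap.comp_assoc]
  exact Null.left h h1
theorem Kills.right {j c : ℕ} {f : B.V →ₗ[k] C.V} (h : Kills S j c f) {φ : A.V →ₗ[k] B.V} (hφ : Eqv φ) :
    Kills (A := A) (B := C) S j c (f ∘ₗ φ) := by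
  unfold Kills
  rw [← LinearMap.comp_assoc]
  exact Null.right h hφ
theorem Kills.of_null {j c : ℕ} {f : A.V →ₗ[k] B.V} (h : Null ⊤ f) : Kills S j c f :=
  Null.left h (zit_eqv S j c B)
theorem Kills.add {j c : ℕ} {f g : A.V →ₗ[k] B.V} (h : Kills S j c f) (h' : Kills S j c g) :
    Kills (A := A) (B := B) S j c (f + g) := by
  unfold Kills
  rw [LinearMap.comp_add]; exact Null.add h h'

theorem mid {M A B C : GMod k G} (i : A.V →ₗ[k] B.V) (l : B.V →ₗ[k] C.V) (r : B.V →ₗ[k] A.V)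
    (σ : C.V →ₗ[k] B.V) (hi : Eqv i) (hl : Eqv l) (h1 : r ∘ₗ i = LinearMap.id)
    (h2 : l ∘ₗ σ = LinearMap.id) (h3 : i ∘ₗ r + σ ∘ₗ l = LinearMap.id)
    (x : M.V →ₗ[k] B.V) (hx : Eqv x) (hn : Null (A := M) (B := C) ⊤ (l ∘ₗ x)) :
    ∃ x' : M.V →ₗ[k] A.V, Eqv x' ∧ ∃ ν : M.V →ₗ[k] B.V, Null ⊤ ν ∧ x = i ∘ₗ x' + ν := by
  obtain ⟨φ, hφ⟩ := hn
  set ν : M.V →ₗ[k] B.V := Tr (A := M) (B := B) ⊤ (σ ∘ₗ φ) with hν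
  have hνe : Eqv ν := Tr_eqv _
  have e0 : l ∘ₗ (x - ν) = 0 := by
    rw [LinearMap.comp_sub, hφ, hν, Tr_left _ _ hl, ← LinearMap.comp_assoc, h2]; simp
  have e1 : i ∘ₗ (r ∘ₗ (x - ν)) = x - ν := by
    have := congrArg (fun t => t ∘ₗ (x - ν)) h3
    simp only [LinearMap.add_comp, LinearMap.id_comp, LinearMap.comp_assoc, e0, LinearMap.comp_zero, add_zero] at this
    exact this
  refine ⟨r ∘ₗ (x - ν), ?_, ν, ⟨_, rfl⟩, by rw [e1]; abel⟩
  intro g m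
  have inj : ∀ a b, i a = i b → a = b := fun a b h => by
    have := congrArg r h
    have ha := LinearMap.congr_fun h1 a
    have hb := LinearMap.congr_fun h1 b
    simp at ha hb; rw [ha, hb] at this; exact this
  apply inj
  have em : ∀ m, i ((r ∘ₗ (x - ν)) m) = (x - ν) m := fun m => LinearMap.congr_fun e1 m
  rw [em, hi, em]
  exact (hx.sub hνe) g m

variable (S) in
/-- power-torsion modules -/
def Tors (n : ℕ) (M Y : GMod k G) : Prop := ∀ (w : List Let) (x : M.V →ₗ[k] (ev w Y).V), Eqv x →
  ∀ j, 1 ≤ j → j ≤ n → ∃ c, Kills S j c x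

theorem Tors.FL {n : ℕ} {M Y : GMod k G} (h : Tors S n M Y) (l : Let) : Tors S n M (FL l Y) := by
  intro w
  have := h (w ++ [l])
  rw [ev_append] at this
  exact this

theorem Tors.Tit {n : ℕ} {M Y : GMod k G} (h : Tors S n M Y) (j a : ℕ) : Tors S n M (Tit j a Y) := by
  induction a generalizing Y with
  | zero => exact h
  | succ a ih => exact ih (h.FL _)

theorem Tors.mid {n : ℕ} {M A B C : GMod k G} (i : A.V →ₗ[k] B.V) (l : B.V →ₗ[k] C.V) (r : B.V →ₗ[k] A.V)
    (σ : C.V →ₗ[k] B.V) (hi : Eqv i) (hl : Eqv l) (h1 : r ∘ₗ i = LinearMap.id)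
    (h2 : l ∘ₗ σ = LinearMap.id) (h3 : i ∘ₗ r + σ ∘ₗ l = LinearMap.id)
    (hA : Tors S n M A) (hC : Tors S n M C) : Tors S n M B := by
  have claim : ∀ j, 1 ≤ j → j ≤ n → ∀ c w (x : M.V →ₗ[k] (ev w B).V), Eqv x →
      Kills (A := M) (B := ev w C) S j c (evmap w l ∘ₗ x) → ∃ c', Kills S j c' x := by
    intro j hj1 hj2 c
    induction c with
    | zero =>
      intro w x hx hk
      obtain ⟨x', hx', ν, hν, e⟩ := ExtProof.mid (evmap w i) (evmap w l) (evmap w r) (evmap w σ)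
        (evmap_eqv w hi) (evmap_eqv w hl) (by rw [← evmap_comp, h1, evmap_id])
        (by rw [← evmap_comp, h2, evmap_id])
        (by rw [← evmap_comp, ← evmap_comp, ← evmap_add, h3, evmap_id]) x hx hk
      obtain ⟨c', hc'⟩ := hA w x' hx' j hj1 hj2
      exact ⟨c', e ▸ (hc'.left (evmap_eqv w hi)).add (Kills.of_null hν)⟩
    | succ c ih =>
      intro w x hx hk
      have : Kills (A := M) (B := ev (Let.T j :: w) C) S j c
          (evmap (Let.T j :: w) l ∘ₗ (zeta S j (ev w B) ∘ₗ x)) := by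
        have e : evmap (Let.T j :: w) l ∘ₗ (zeta S j (ev w B) ∘ₗ x) =
            zeta S j (ev w C) ∘ₗ (evmap w l ∘ₗ x) := by
          apply LinearMap.ext; intro m
          exact (LinearMap.congr_fun (zeta_nat S j (evmap w l)) (x m)).symm
        rw [e]; exact hk
      obtain ⟨c', hc'⟩ := ih (Let.T j :: w) _ ((zeta_eqv S j _).comp hx) this
      exact ⟨c' + 1, hc'⟩
  intro w x hx j hj1 hj2
  obtain ⟨c, hc⟩ := hC w _ ((evmap_eqv w hl).comp hx) j hj1 hj2
  exact claim j hj1 hj2 c w x hx hc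

end Zeta

section LL
variable {k : Type} [Field k] {G : Type} [Group G] [Fintype G] {S : SD k G}
variable {Y Z : GMod k G}

/-- the pull-back module -/
def LLsub (θ : Y.V →ₗ[k] Z.V) : Submodule k (Y.V × (List G → Z.V)) where
  carrier := {x | (∀ L, L.length ≠ 1 → x.2 L = 0) ∧ ∑ g : G, x.2 [g] = θ x.1}
  zero_mem' := ⟨fun _ _ => rfl, by simp⟩
  add_mem' := fun {x y} hx hy => ⟨fun L hL => by simp [hx.1 L hL, hy.1 L hL], by
    simp only [Prod.fst_add, Prod.snd_add, Pi.add_apply, Finset.sum_add_distrib, hx.2, hy.2, map_add]⟩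
  smul_mem' := fun c x hx => ⟨fun L hL => by simp [hx.1 L hL], by
    simp only [Prod.smul_fst, Prod.smul_snd, Pi.smul_apply, ← Finset.smul_sum, hx.2, map_smul]⟩

theorem LLsub_rho {θ : Y.V →ₗ[k] Z.V} (h : Eqv θ) (g : G) {x : Y.V × (List G → Z.V)}
    (hx : x ∈ LLsub θ) : (Y.ρ g x.1, (Big Z).ρ g x.2) ∈ LLsub θ := by
  refine ⟨fun L hL => ?_, ?_⟩
  · show Z.ρ g (x.2 (L.map _)) = 0
    rw [hx.1 _ (by simpa using hL), map_zero]
  · show ∑ y : G, Z.ρ g (x.2 [g⁻¹ * y]) = _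
    have e : ∑ y : G, x.2 [g⁻¹ * y] = ∑ y : G, x.2 [y] :=
      Equiv.sum_comp (Equiv.mulLeft g⁻¹) (fun y => x.2 [y])
    rw [← map_sum, e, hx.2]
    exact (h g x.1).symm

def LLrho {θ : Y.V →ₗ[k] Z.V} (h : Eqv θ) : Representation k G (LLsub θ) where
  toFun g := 
    { toFun := fun x => ⟨(Y.ρ g x.1.1, (Big Z).ρ g x.1.2), LLsub_rho h g x.2⟩
      map_add' := fun f f' => Subtype.ext (Prod.ext (map_add (Y.ρ g) f.1.1 f'.1.1) (map_add ((Big Z).ρ g) f.1.2 f'.1.2))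
      map_smul' := fun c f => Subtype.ext (Prod.ext (map_smul (Y.ρ g) c f.1.1) (map_smul ((Big Z).ρ g) c f.1.2)) }
  map_one' := by
    apply LinearMap.ext; intro f; apply Subtype.ext
    show (Y.ρ 1 f.1.1, (Big Z).ρ 1 f.1.2) = f.1
    rw [map_one, map_one]; rfl
  map_mul' g h := by
    apply LinearMap.ext; intro f; apply Subtype.ext
    show (Y.ρ (g * h) f.1.1, (Big Z).ρ (g * h) f.1.2) = (Y.ρ g (Y.ρ h f.1.1), (Big Z).ρ g ((Big Z).ρ h f.1.2))
    rw [map_mul, map_mul]; rfl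

def LL {θ : Y.V →ₗ[k] Z.V} (h : Eqv θ) : GMod k G where
  V := LLsub θ
  ρ := LLrho h

def single1 (z : Z.V) : List G → Z.V := fun L => if L = [1] then z else 0

theorem single1_sum (z : Z.V) : ∑ g : G, single1 (G := G) z [g] = z := by
  simp [single1]
theorem single1_supp (z : Z.V) (L : List G) (h : L.length ≠ 1) : single1 (G := G) z L = 0 := by
  unfold single1; rw [if_neg]; rintro rfl; exact h rfl
theorem single1_add (z z' : Z.V) : single1 (G := G) (z + z') = single1 z + single1 z' := by
  funext L; rw [Pi.add_apply]; unfold single1; split_ifs <;> simp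
theorem single1_smul (c : k) (z : Z.V) : single1 (G := G) (c • z) = c • single1 z := by
  funext L; rw [Pi.smul_apply]; unfold single1; split_ifs <;> simp

variable {θ : Y.V →ₗ[k] Z.V} (h : Eqv θ)

def ell : (LL h).V →ₗ[k] Y.V where
  toFun x := x.1.1
  map_add' _ _ := rfl
  map_smul' _ _ := rfl

def sig : Y.V →ₗ[k] (LL h).V where
  toFun y := ⟨(y, single1 (θ y)), single1_supp _, single1_sum _⟩
  map_add' y z := Subtype.ext (Prod.ext rfl (by
    show single1 (θ (y + z)) = _
    rw [map_add, single1_add]; rfl))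
  map_smul' c y := Subtype.ext (Prod.ext rfl (by
    show single1 (θ (c • y)) = _
    rw [map_smul, single1_smul]; rfl))

def inc : (FL .Om Z).V →ₗ[k] (LL h).V where
  toFun f := ⟨(0, f.1), f.2.1, by rw [map_zero]; exact f.2.2⟩
  map_add' f g := Subtype.ext (Prod.ext (add_zero 0).symm rfl)
  map_smul' c f := Subtype.ext (Prod.ext (smul_zero c).symm rfl)

def ret : (LL h).V →ₗ[k] (FL .Om Z).V where
  toFun x := ⟨x.1.2 - single1 (θ x.1.1), fun L hL => by
      rw [Pi.sub_apply, x.2.1 L hL, single1_supp _ _ hL, sub_zero], by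
      simp only [Pi.sub_apply, Finset.sum_sub_distrib, single1_sum, x.2.2, sub_self]⟩
  map_add' x y := Subtype.ext (by
    show x.1.2 + y.1.2 - single1 (θ (x.1.1 + y.1.1)) = (x.1.2 - single1 (θ x.1.1)) + (y.1.2 - single1 (θ y.1.1))
    rw [map_add, single1_add]; abel)
  map_smul' c x := Subtype.ext (by
    show c • x.1.2 - single1 (θ (c • x.1.1)) = c • (x.1.2 - single1 (θ x.1.1))
    rw [map_smul, single1_smul, smul_sub])

theorem ell_eqv : Eqv (ell h) := fun _ _ => rfl
theorem inc_eqv : Eqv (inc h) := fun g f => Subtype.ext (Prod.ext (map_zero (Y.ρ g)).symm rfl)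

theorem Tors.LL {n : ℕ} {M : GMod k G} (hY : Tors S n M Y) (hZ : Tors S n M (ExtProof.FL Let.Om Z)) :
    Tors S n M (ExtProof.LL h) := by
  refine Tors.mid (inc h) (ell h) (ret h) (sig h) (inc_eqv h) (ell_eqv h) ?_ ?_ ?_ hZ hY
  · apply LinearMap.ext; intro f; apply Subtype.ext
    show f.1 - single1 (θ 0) = f.1
    have : single1 (G := G) (0 : Z.V) = 0 := by funext L; simp [single1]
    rw [map_zero, this, sub_zero]
  · rfl
  · apply LinearMap.ext; intro x; apply Subtype.ext
    refine Prod.ext (zero_add _) ?_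
    show x.1.2 - single1 (θ x.1.1) + single1 (θ x.1.1) = x.1.2
    abel

theorem LL_lift {M : GMod k G} {x : M.V →ₗ[k] Y.V} (hx : Eqv x) (hn : Null (A := M) (B := Z) ⊤ (θ ∘ₗ x)) :
    ∃ y : M.V →ₗ[k] (LL h).V, Eqv y ∧ x = ell h ∘ₗ y := by
  obtain ⟨φ, hφ⟩ := hn
  let q : M.V → List G → Z.V := fun m L => match L with
    | [g] => Z.ρ g (φ (M.ρ g⁻¹ m))
    | _ => 0
  have q1 : ∀ m g, q m [g] = Z.ρ g (φ (M.ρ g⁻¹ m)) := fun _ _ => rfl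
  have q0 : ∀ m L, L.length ≠ 1 → q m L = 0 := by
    intro m L hL
    rcases L with _ | ⟨g, _ | ⟨g', L⟩⟩
    · rfl
    · simp at hL
    · rfl
  have qx : ∀ {F F' : List G → Z.V}, (∀ L, L.length ≠ 1 → F L = 0) → (∀ L, L.length ≠ 1 → F' L = 0) →
      (∀ g, F [g] = F' [g]) → F = F' := by
    intro F F' h1 h2 h3
    funext L
    by_cases hL : L.length = 1
    · obtain ⟨g, rfl⟩ := List.length_eq_one_iff.1 hL; exact h3 g
    · rw [h1 L hL, h2 L hL]
  refine ⟨{ toFun := fun m => ⟨(x m, q m), q0 m, ?_⟩, map_add' := ?_, map_smul' := ?_ }, ?_, rfl⟩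
  · show ∑ g : G, Z.ρ g (φ (M.ρ g⁻¹ m)) = θ (x m)
    rw [← Tr_top, ← hφ]; rfl
  · intro m m'
    apply Subtype.ext
    refine Prod.ext (map_add x m m') (qx (q0 _) ?_ ?_)
    · intro L hL
      show q m L + q m' L = 0
      rw [q0 _ _ hL, q0 _ _ hL, add_zero]
    · intro g
      show q (m + m') [g] = q m [g] + q m' [g]
      simp only [q1, map_add]
  · intro c m
    apply Subtype.ext
    refine Prod.ext (map_smul x c m) (qx (q0 _) ?_ ?_)
    · intro L hL
      show c • q m L = 0
      rw [q0 _ _ hL, smul_zero]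
    · intro g
      show q (c • m) [g] = c • q m [g]
      simp only [q1, map_smul]
  · intro g m
    apply Subtype.ext
    refine Prod.ext (hx g m) (qx (q0 _) ?_ ?_)
    · intro L hL
      show Z.ρ g (q m (L.map _)) = 0
      rw [q0 _ _ (by simpa using hL), map_zero]
    · intro y
      show q (M.ρ g m) [y] = Z.ρ g (q m [g⁻¹ * y])
      simp only [q1, ← rho_mul]
      simp

theorem ell_null : Null (A := LL h) (B := Z) ⊤ (θ ∘ₗ ell h) := by
  refine ⟨{ toFun := fun x => x.1.2 [1], map_add' := fun _ _ => rfl, map_smul' := fun _ _ => rfl }, ?_⟩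
  apply LinearMap.ext; intro x
  rw [Tr_top]
  show θ x.1.1 = ∑ g : G, Z.ρ g (Z.ρ g⁻¹ (x.1.2 [g⁻¹⁻¹ * 1]))
  rw [← x.2.2]
  refine Finset.sum_congr rfl fun g _ => ?_
  simp

end LL
end
end ExtProof
open CategoryTheory
set_option linter.all false

namespace ExtProof
noncomputable section
open scoped Classical

section Elim
variable {k : Type} [Field k] {p : ℕ} [NeZero p] {G : Type} [Group G] [Fintype G]
variable {A B Z : GMod k G}

theorem sum_sub {V : Type} [AddCommMonoid V] (Q : Subgroup G) (F : G → V) :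
    ∑ g : Q, F g = ∑ g : G, if g ∈ Q then F g else 0 := by
  rw [← Finset.sum_filter]
  exact (Finset.sum_subtype (Finset.univ.filter (· ∈ Q)) (by simp) F).symm

theorem dL_lin {V W : Type} [AddCommGroup V] [Module k V] [AddCommGroup W] [Module k W] (φ : V →ₗ[k] W)
    (f : List G → V) (L) : dL (fun L' => φ (f L')) L = φ (dL f L) := dL_map φ.toAddMonoidHom f L
theorem DD_lin {V W : Type} [AddCommGroup V] [Module k V] [AddCommGroup W] [Module k W] (φ : V →ₗ[k] W)
    (f : List G → ℕ → ZMod p → V) (L j c) : DD (fun L j c => φ (f L j c)) L j c = φ (DD f L j c) :=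
  DD_map φ.toAddMonoidHom f L j c
theorem DD_smr {V : Type} [AddCommGroup V] [Module k V] (v : V)
    (f : List G → ℕ → ZMod p → k) (L j c) : DD (fun L j c => f L j c • v) L j c = DD f L j c • v :=
  DD_lin (LinearMap.toSpanSingleton k V v) f L j c

theorem map_inv_map (g : G) (L : List G) : (L.map (g⁻¹ * ·)).map (g * ·) = L := by
  simp
theorem map_map_inv (g : G) (L : List G) : (L.map (g * ·)).map (g⁻¹ * ·) = L := by
  simp
theorem map_map_inv2 (x g : G) (L : List G) : (L.map (g * ·)).map ((x⁻¹ * g⁻¹) * ·) = L.map (x⁻¹ * ·) := by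
  rw [List.map_map]; congr 1; funext y; simp [mul_assoc]

/-- coboundary as a linear map -/
def DDl (V : Type) [AddCommGroup V] [Module k V] :
    (List G → ℕ → ZMod p → V) →ₗ[k] (List G → ℕ → ZMod p → V) where
  toFun f := DD f
  map_add' f g := by funext L j c; exact DD_add f g L j c
  map_smul' a f := by
    funext L j c
    exact DD_map (LinearMap.toAddMonoidHom (a • (LinearMap.id : V →ₗ[k] V))) f L j c

theorem EE_low (V : Type) [AddCommGroup V] (f : ℕ → ZMod p → V) (m : ℕ) (h : ∀ j c, j < m → f j c = 0)
    (j c) (hj : j ≤ m) : EE f j c = 0 := by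
  rcases j with _ | j
  · rfl
  · simp [EE, h j _ (by omega)]

variable (S : SD k G) (P : Subgroup G) (lam : G → ZMod p) (n : ℕ)

/-- elimination datum of level m -/
def ED (F : A.V →ₗ[k] Z.V) (m : ℕ) : Prop :=
  ∃ H : A.V →ₗ[k] (List G → ℕ → ZMod p → Z.V),
    (∀ g ∈ P, ∀ a L j c, H (A.ρ g a) (L.map (g * ·)) j (c + lam g) = Z.ρ g (H a L j c)) ∧
    (∃ R : A.V →ₗ[k] Z.V, Null P R ∧ ∀ a c, H a [] n c = R a) ∧
    (∀ a L c, ∀ j ≤ n, DD (H a) L j c = if j = n then S.s 0 L • F a else 0) ∧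
    (∀ a L j c, j < m → H a L j c = 0)

theorem ED_final (hs : S.s 0 [1] ≠ 0) {F : A.V →ₗ[k] Z.V} (h : ED S P lam n F n) : Null P F := by
  obtain ⟨H, h1, ⟨R, hR, h2⟩, h3, h4⟩ := h
  have : R = S.s 0 [1] • F := by
    ext a
    have := h3 a [1] 0 n le_rfl
    rw [DD_apply, EE_low _ _ n (fun j c hj => h4 a _ j c hj) n 0 le_rfl, dL_cons, h2, if_pos rfl] at this
    have e : dL (fun L' => H a (1 :: L') n 0) ([] : List G) = 0 := by simp [dL]
    rw [e] at this
    simpa using this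
  have e : F = (S.s 0 [1])⁻¹ • R := by
    rw [this, smul_smul, inv_mul_cancel₀ hs, one_smul]
  rw [e]; exact hR.smul _

variable {P lam}

theorem lam_one (hadd : ∀ g ∈ P, ∀ h ∈ P, lam (g * h) = lam g + lam h) : lam 1 = 0 := by
  have := hadd 1 P.one_mem 1 P.one_mem
  simpa using this

variable {S n}
theorem ED_step (hadd : ∀ g ∈ P, ∀ h ∈ P, lam (g * h) = lam g + lam h)
    (hsur : ∀ c, ∃ t ∈ P, lam t = c) (Q : Subgroup G) (hQ : ∀ g, g ∈ Q ↔ g ∈ P ∧ lam g = 0)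
    (hn : Even n) {F : A.V →ₗ[k] Z.V} {m : ℕ} (hm : m < n) (h : ED S P lam n F m)
    {π : B.V →ₗ[k] A.V} (hπ : Eqv π) (hN : Null Q π) :
    ED (A := B) (Z := Z) S P lam n (F ∘ₗ π) (m + 1) := by
  obtain ⟨H, h1, ⟨R, hR, h2⟩, h3, h4⟩ := h
  obtain ⟨φ, hφ⟩ := hN
  -- cocycle property
  have hco : ∀ a c L, dL (fun L' => H a L' m c) L = 0 := by
    intro a c L
    have := h3 a L c m hm.le
    rw [DD_apply, EE_low _ _ m (fun j c hj => h4 a _ j c hj) m c le_rfl, if_neg hm.ne] at this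
    simpa using this
  -- sums over cosets
  have hcos : ∀ c (b : B.V), ∑ g : P, (if lam g = c then A.ρ g (φ (B.ρ (g : G)⁻¹ b)) else 0) = π b := by
    intro c b
    obtain ⟨t, ht, rfl⟩ := hsur c
    rw [← Equiv.sum_comp (Equiv.mulLeft (⟨t, ht⟩ : P))]
    change ∑ g : P, (if lam (t * g) = lam t then A.ρ (t * g) (φ (B.ρ (t * g)⁻¹ b)) else 0) = π b
    have e : π b = A.ρ t (π (B.ρ t⁻¹ b)) := by rw [← hπ, rho_inv']
    rw [e, hφ, Tr_apply, sum_sub Q (fun g => A.ρ g (φ (B.ρ (g : G)⁻¹ (B.ρ t⁻¹ b)))), map_sum,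
      sum_sub P (fun g => if lam (t * g) = lam t then A.ρ (t * g) (φ (B.ρ (t * g)⁻¹ b)) else 0)]
    refine Finset.sum_congr rfl fun g _ => ?_
    by_cases hg : g ∈ P
    · by_cases h0 : lam g = 0
      · rw [if_pos hg, if_pos (by rw [hadd t ht g hg, h0, add_zero]), if_pos ((hQ g).2 ⟨hg, h0⟩)]
        simp
      · rw [if_pos hg, if_neg (by rw [hadd t ht g hg]; simpa using h0),
          if_neg (fun hh => h0 ((hQ g).1 hh).2), map_zero]
    · rw [if_neg hg, if_neg (fun hh => hg ((hQ g).1 hh).1), map_zero]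
  let Ψ : B.V →ₗ[k] (List G → ℕ → ZMod p → Z.V) :=
    { toFun := fun b L j c => if j = m then ∑ g : P, (if lam g = c then
        Z.ρ g (H (φ (B.ρ (g : G)⁻¹ b)) (1 :: L.map ((g : G)⁻¹ * ·)) m 0) else 0) else 0
      map_add' := fun b b' => by
        funext L j c
        simp only [Pi.add_apply]
        split_ifs
        · rw [← Finset.sum_add_distrib]
          refine Finset.sum_congr rfl fun g _ => ?_
          split_ifs <;> simp
        · simp
      map_smul' := fun r b => by
        funext L j c
        simp only [Pi.smul_apply, RingHom.id_apply]
        split_ifs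
        · rw [Finset.smul_sum]
          refine Finset.sum_congr rfl fun g _ => ?_
          split_ifs <;> simp
        · simp }
  have hΨ : ∀ b L j c, Ψ b L j c = if j = m then ∑ g : P, (if lam g = c then
        Z.ρ g (H (φ (B.ρ (g : G)⁻¹ b)) (1 :: L.map ((g : G)⁻¹ * ·)) m 0) else 0) else 0 :=
    fun _ _ _ _ => rfl
  have hΨ0 : ∀ b L j c, j ≠ m → Ψ b L j c = 0 := fun b L j c hj => by rw [hΨ, if_neg hj]
  have hΨd : ∀ b L c, dL (fun L' => Ψ b L' m c) L = H (π b) L m c := by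
    intro b L c
    simp only [hΨ, if_true]
    rw [dL_sum, ← hcos c b, map_sum]
    simp only [Finset.sum_apply]
    refine Finset.sum_congr rfl fun g _ => ?_
    by_cases hg : lam g = c
    · simp only [if_pos hg]
      rw [dL_lin (Z.ρ g)
        (fun L' => H (φ (B.ρ (g : G)⁻¹ b)) (1 :: L'.map ((g : G)⁻¹ * ·)) m 0) L,
        dL_listmap ((g : G)⁻¹ * ·) (fun L' => H (φ (B.ρ (g : G)⁻¹ b)) (1 :: L') m 0) L,
        dL_contr _ (fun L => hco _ _ L)]
      rw [← h1 g g.2, hg, zero_add, map_inv_map]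
    · simp only [if_neg hg, dL_zero, map_zero, Pi.zero_apply]
  have hΨe : ∀ g ∈ P, ∀ b L j c, Ψ (B.ρ g b) (L.map (g * ·)) j (c + lam g) = Z.ρ g (Ψ b L j c) := by
    intro g hg b L j c
    rw [hΨ, hΨ]
    split_ifs
    · rw [map_sum, ← Equiv.sum_comp (Equiv.mulLeft (⟨g, hg⟩ : P))]
      refine Finset.sum_congr rfl fun x _ => ?_
      have e : ((Equiv.mulLeft (⟨g, hg⟩ : P)) x : G) = g * x := rfl
      rw [e]
      have e2 : lam (g * x) = c + lam g ↔ lam x = c := by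
        rw [hadd g hg x x.2, add_comm, add_left_inj]
      by_cases hx : lam x = c
      · rw [if_pos (e2.2 hx), if_pos hx, mul_inv_rev, rho_mul, rho_mul, rho_inv, map_map_inv2]
      · rw [if_neg (fun hh => hx (e2.1 hh)), if_neg hx, map_zero]
    · simp
  refine ⟨H ∘ₗ π - (DDl Z.V) ∘ₗ Ψ, ?_, ?_, ?_, ?_⟩
  · intro g hg b L j c
    show H (π (B.ρ g b)) _ _ _ - DD (Ψ (B.ρ g b)) _ _ _ = Z.ρ g (H (π b) L j c - DD (Ψ b) L j c)
    rw [hπ, h1 g hg, map_sub]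
    congr 1
    rw [← DD_shift (g * ·) (lam g) (Ψ (B.ρ g b))]
    have : (fun L j c => Ψ (B.ρ g b) (L.map (g * ·)) j (c + lam g)) =
      fun L j c => Z.ρ g (Ψ b L j c) := by funext L j c; exact hΨe g hg b L j c
    rw [this]
    exact DD_lin (Z.ρ g) (Ψ b) L j c
  · let T : B.V →ₗ[k] Z.V := (LinearMap.proj (0 : ZMod p) ∘ₗ LinearMap.proj m ∘ₗ LinearMap.proj [1]) ∘ₗ H ∘ₗ φ
    have hT : ∀ b, T b = H (φ b) [1] m 0 := fun _ => rfl
    refine ⟨R ∘ₗ π - (if m + 1 = n then Tr P T else 0), ?_, ?_⟩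
    · refine (hR.right hπ).sub ?_
      split_ifs
      · exact ⟨T, rfl⟩
      · exact Null.zero
    · intro b c
      show H (π b) [] n c - DD (Ψ b) [] n c = R (π b) - _
      rw [h2]
      congr 1
      rw [DD_apply, dL_nil]
      obtain ⟨n', rfl⟩ : ∃ n', n = n' + 1 := ⟨n - 1, by omega⟩
      have ho : ¬ Even n' := by
        intro hh; exact (Nat.even_add_one.1 hn) hh
      simp only [EE, if_neg ho]
      by_cases hmn : m = n'
      · subst hmn
        simp only [if_true, hΨ]
        rw [Finset.sum_comm, Tr_apply]
        simp [hT]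
      · rw [if_neg (by omega)]
        simp [hΨ0 _ _ _ _ (Ne.symm hmn)]
  · intro b L c j hj
    show DD (fun L j c => H (π b) L j c - DD (Ψ b) L j c) L j c = _
    rw [DD_sub, DD_DD, sub_zero]
    exact h3 _ _ _ _ hj
  · intro b L j c hj
    show H (π b) L j c - DD (Ψ b) L j c = 0
    have e := EE_low _ (Ψ b L) m (fun j c hj => hΨ0 _ _ _ _ hj.ne) j c (by omega)
    rw [DD_apply, e, smul_zero, add_zero]
    by_cases hjm : j = m
    · subst hjm; rw [hΨd, sub_self]
    · have : (fun L' => Ψ b L' j c) = fun _ => 0 := by funext L'; exact hΨ0 _ _ _ _ hjm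
      rw [this, dL_zero, h4 _ _ _ _ (by omega), sub_zero]

theorem ED_init [CharP k p] (hadd : ∀ g ∈ P, ∀ h ∈ P, lam (g * h) = lam g + lam h)
    (h : List G → ℕ → ZMod p → k) (hh0 : ∀ j c, h [] j c = 0)
    (hh1 : ∀ g ∈ P, ∀ L j c, h (L.map (g * ·)) j (c + lam g) = h L j c)
    (hh2 : ∀ L c, ∀ j ≤ n, DD h L j c = S.s (n - j) L)
    {F : A.V →ₗ[k] Z.V} (hF : Eqv F)
    (hz : ∀ i, 1 ≤ i → i ≤ n → Null (A := A) (B := FL (.T i) Z) P (zeta S i Z ∘ₗ F)) :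
    ED S P lam n F 0 := by
  have hV : ∀ v : Z.V, p • v = 0 := by
    intro v
    rw [← Nat.cast_smul_eq_nsmul k, CharP.cast_eq_zero, zero_smul]
  have hq : ∀ i, ∃ q : A.V →ₗ[k] (List G → Z.V), (1 ≤ i → i ≤ n → ∀ a L, dL (q a) L = S.s i L • F a) ∧
      ∀ g ∈ P, ∀ a L, q (A.ρ g a) (L.map (g * ·)) = Z.ρ g (q a L) := by
    intro i
    by_cases hi : 1 ≤ i ∧ i ≤ n
    · obtain ⟨φ, hφ⟩ := hz i hi.1 hi.2
      let q0 : A.V →ₗ[k] (Big Z).V :=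
        { toFun := fun a L => (φ a).1 (1 :: L)
          map_add' := fun a b => by funext L; rw [map_add]; rfl
          map_smul' := fun r b => by funext L; rw [map_smul]; rfl }
      have hTr : ∀ a L, Tr (A := A) (B := Big Z) P q0 a L =
          ∑ g : P, Z.ρ g ((φ (A.ρ (g : G)⁻¹ a)).1 (1 :: L.map ((g : G)⁻¹ * ·))) := by
        intro a L
        rw [Tr_apply]
        exact Finset.sum_apply _ _ _
      refine ⟨Tr (A := A) (B := Big Z) P q0, fun _ _ a L => ?_, fun g hg a L => ?_⟩
      · have e1 : dL (Tr (A := A) (B := Big Z) P q0 a) L = dL (fun L =>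
          ∑ g : P, Z.ρ g ((φ (A.ρ (g : G)⁻¹ a)).1 (1 :: L.map ((g : G)⁻¹ * ·)))) L := by
          congr 1; funext L; exact hTr a L
        refine e1.trans ?_
        rw [dL_sum]
        have e2 : S.s i L • F a = (zeta S i Z (F a)).1 L := rfl
        have e3 : zeta S i Z (F a) = Tr P φ a := LinearMap.congr_fun hφ a
        rw [e2, e3, Tr_apply]
        have e4 : (∑ g : P, (FL (.T i) Z).ρ g (φ (A.ρ (g : G)⁻¹ a))).1 L =
            ∑ g : P, ((FL (.T i) Z).ρ g (φ (A.ρ (g : G)⁻¹ a))).1 L := by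
          have := map_sum ((LinearMap.proj L ∘ₗ (Lsub k G Z.V (.T i)).subtype))
            (fun g : P => (FL (.T i) Z).ρ g (φ (A.ρ (g : G)⁻¹ a))) Finset.univ
          exact this
        rw [e4]
        refine Finset.sum_congr rfl fun g _ => ?_
        rw [dL_lin (Z.ρ g)
          (fun L' => (φ (A.ρ (g : G)⁻¹ a)).1 (1 :: L'.map ((g : G)⁻¹ * ·))) L,
          dL_listmap ((g : G)⁻¹ * ·) (fun L' => (φ (A.ρ (g : G)⁻¹ a)).1 (1 :: L')) L,
          dL_contr _ (φ (A.ρ (g : G)⁻¹ a)).2.2]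
        rfl
      · refine (congrFun (Tr_mem (A := A) (B := Big Z) P q0 g hg a) (L.map (g * ·))).trans ?_
        show Z.ρ g (Tr (A := A) (B := Big Z) P q0 a ((L.map _).map _)) = _
        rw [map_map_inv]; rfl
    · exact ⟨0, fun h1 h2 => absurd ⟨h1, h2⟩ hi, fun g _ a L => by simp⟩
  choose q hq1 hq2 using hq
  refine ⟨{ toFun := fun a L j c => h L j c • F a - (if j < n then q (n - j) a L else 0)
            map_add' := fun a b => by
              funext L j c; simp only [Pi.add_apply, map_add, smul_add]; split_ifs
              · abel
              · abel
            map_smul' := fun r b => by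
              funext L j c
              simp only [Pi.smul_apply, map_smul, RingHom.id_apply, smul_sub]
              rw [smul_comm]
              split_ifs <;> simp }, ?_, ⟨0, Null.zero, ?_⟩, ?_, ?_⟩
  · intro g hg a L j c
    show h _ _ _ • F (A.ρ g a) - (if j < n then q (n - j) (A.ρ g a) (L.map _) else 0) =
      Z.ρ g (h L j c • F a - (if j < n then q (n - j) a L else 0))
    rw [hh1 g hg, hF, hq2 _ g hg, map_sub, map_smul]
    split_ifs <;> simp
  · intro a c
    show h [] n c • F a - (if n < n then q (n - n) a [] else 0) = 0
    rw [hh0]; simp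
  · intro a L c j hj
    show DD (fun L j c => h L j c • F a - (if j < n then q (n - j) a L else 0)) L j c = _
    rw [DD_sub, DD_smr, hh2 L c j hj]
    rw [DD_apply, EE_const hV (fun j => if j < n then q (n - j) a L else 0) j c, smul_zero, add_zero]
    by_cases hjn : j = n
    · subst hjn
      simp [dL_zero]
    · have : j < n := by omega
      simp only [if_pos this, if_neg hjn]
      rw [hq1 (n - j) (by omega) (by omega) a L, sub_self]
  · intro a L j c hj; omega

end Elim
end
end ExtProof
open CategoryTheory
set_option linter.all false

namespace ExtProof
noncomputable section
open scoped Classical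

section Grp
variable {p : ℕ} [Fact p.Prime] {G : Type} [Group G] [Fintype G]

theorem exists_lam (P : Subgroup G) (hP : IsPGroup p P) (hne : P ≠ ⊥) :
    ∃ lam : G → ZMod p, ∃ Q : Subgroup G, (∀ g ∈ P, ∀ h ∈ P, lam (g * h) = lam g + lam h) ∧
      (∀ c, ∃ t ∈ P, lam t = c) ∧ (∀ g, g ∈ Q ↔ g ∈ P ∧ lam g = 0) := by
  have hp : p.Prime := Fact.out
  obtain ⟨r, hr⟩ := (IsPGroup.iff_card).1 hP
  have hr0 : r ≠ 0 := by
    rintro rfl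
    apply hne
    exact Subgroup.card_eq_one.1 (by simpa using hr)
  obtain ⟨r, rfl⟩ := Nat.exists_eq_succ_of_ne_zero hr0
  obtain ⟨K, hK⟩ := Sylow.exists_subgroup_card_pow_prime (G := P) p (n := r) (by
    rw [hr]; exact pow_dvd_pow p (Nat.le_succ r))
  have hidx : K.index = p := by
    have := K.card_mul_index
    rw [hK, hr, pow_succ] at this
    exact Nat.eq_of_mul_eq_mul_left (pow_pos hp.pos r) this
  have hnorm : K.Normal := by
    apply Subgroup.normal_of_index_eq_minFac_card
    rw [hidx, hr, hp.pow_minFac (by omega)]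
  have hc : Nat.card (P ⧸ K) = p := hidx
  have e : (P ⧸ K) ≃* Multiplicative (ZMod p) := mulEquivOfPrimeCardEq hc (by simp)
  let f : P →* Multiplicative (ZMod p) := e.toMonoidHom.comp (QuotientGroup.mk' K)
  have hf : Function.Surjective f := e.surjective.comp (QuotientGroup.mk'_surjective K)
  let lam : G → ZMod p := fun g => if h : g ∈ P then (f ⟨g, h⟩).toAdd else 0
  have hl : ∀ g (h : g ∈ P), lam g = (f ⟨g, h⟩).toAdd := fun g h => by simp only [lam, dif_pos h]
  refine ⟨lam, f.ker.map P.subtype, ?_, ?_, ?_⟩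
  · intro g hg h hh
    rw [hl _ hg, hl _ hh, hl _ (P.mul_mem hg hh), ← toAdd_mul, ← map_mul]; rfl
  · intro c
    obtain ⟨t, ht⟩ := hf (Multiplicative.ofAdd c)
    exact ⟨t, t.2, by rw [hl _ t.2, ht]; rfl⟩
  · intro g
    constructor
    · rintro ⟨x, hx, rfl⟩
      refine ⟨x.2, ?_⟩
      rw [P.subtype_apply, hl _ x.2]
      have : f x = 1 := hx
      rw [this]; rfl
    · rintro ⟨hg, h0⟩
      refine ⟨⟨g, hg⟩, ?_, rfl⟩
      rw [hl _ hg] at h0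
      exact h0

end Grp

section Kill
variable {k : Type} [Field k] {p : ℕ} [Fact p.Prime] [CharP k p] {G : Type} [Group G] [Fintype G]
variable (S : SD k G) (n : ℕ) (M : GMod k G)

/-- existence of a factorization through a torsion module with a property -/
def Cover {A : GMod k G} (x : M.V →ₗ[k] A.V) (Φ : (B : GMod k G) → (B.V →ₗ[k] A.V) → Prop) : Prop :=
  ∃ (B : GMod k G) (y : M.V →ₗ[k] B.V) (g : B.V →ₗ[k] A.V), Eqv y ∧ Eqv g ∧ x = g ∘ₗ y ∧
    Tors S n M B ∧ Φ B g

def Claim (Q : Subgroup G) : Prop := ∀ (A : GMod k G) (x : M.V →ₗ[k] A.V), Eqv x → Tors S n M A →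
  Cover S n M x (fun _ g => Null Q g)

variable {S n M}

theorem Cover.self {A : GMod k G} {x : M.V →ₗ[k] A.V} {Φ : (B : GMod k G) → (B.V →ₗ[k] A.V) → Prop}
    (hx : Eqv x) (hA : Tors S n M A) (h : Φ A LinearMap.id) : Cover S n M x Φ :=
  ⟨A, x, LinearMap.id, hx, Eqv.id, rfl, hA, h⟩

theorem Cover.trans {A : GMod k G} {x : M.V →ₗ[k] A.V} {Φ Φ' : (B : GMod k G) → (B.V →ₗ[k] A.V) → Prop}
    (h : Cover S n M x Φ)
    (hs : ∀ (B : GMod k G) (y : M.V →ₗ[k] B.V) (g : B.V →ₗ[k] A.V), Eqv y → Eqv g →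
      Tors S n M B → Φ B g → Cover S n M y (fun C g' => Φ' C (g ∘ₗ g'))) : Cover S n M x Φ' := by
  obtain ⟨B, y, g, hy, hg, rfl, hB, hΦ⟩ := h
  obtain ⟨C, z, g', hz, hg', rfl, hC, hΦ'⟩ := hs B y g hy hg hB hΦ
  exact ⟨C, z, g ∘ₗ g', hz, hg.comp hg', rfl, hC, hΦ'⟩

theorem nil_cover {A : GMod k G} {x : M.V →ₗ[k] A.V} (hx : Eqv x) (hA : Tors S n M A) (J : ℕ) (hJ : J ≤ n) :
    Cover S n M x (fun B g => ∀ j, 1 ≤ j → j ≤ J → ∃ a, Kills S j a g) := by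
  induction J with
  | zero => exact Cover.self hx hA (fun j h1 h2 => by omega)
  | succ J ih =>
    refine (ih (by omega)).trans ?_
    intro B y g hy hg hB hk
    obtain ⟨a, ha⟩ := hB [] y hy (J + 1) (by omega) hJ
    have hθ := zit_eqv S (J + 1) a B
    obtain ⟨z, hz, rfl⟩ := LL_lift (M := M) hθ hy ha
    refine ⟨LL hθ, z, ell hθ, hz, ell_eqv hθ, rfl, Tors.LL hθ hB ((hB.Tit (J + 1) a).FL Let.Om), ?_⟩
    intro j h1 h2
    by_cases hj : j ≤ J
    · obtain ⟨a, ha⟩ := hk j h1 hj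
      exact ⟨a, ha.right (ell_eqv hθ)⟩
    · have : j = J + 1 := by omega
      subst this
      refine ⟨a, Kills.left (A := LL hθ) ?_ hg⟩
      exact ell_null hθ

variable (S n) in
/-- the homotopies provided by the key construction -/
def KeyH (p : ℕ) [NeZero p] : Prop :=
  ∀ (P : Subgroup G) (lam : G → ZMod p), (∀ g ∈ P, ∀ h ∈ P, lam (g * h) = lam g + lam h) →
      ∃ h : List G → ℕ → ZMod p → k, (∀ j c, h [] j c = 0) ∧
        (∀ g ∈ P, ∀ L j c, h (L.map (g * ·)) j (c + lam g) = h L j c) ∧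
        ∀ L c, ∀ j ≤ n, DD h L j c = S.s (n - j) L

theorem elim (hs : S.s 0 [1] ≠ 0) (hn : Even n) (hkey : KeyH S n p) {P Q : Subgroup G} {lam : G → ZMod p}
    (hadd : ∀ g ∈ P, ∀ h ∈ P, lam (g * h) = lam g + lam h)
    (hsur : ∀ c, ∃ t ∈ P, lam t = c) (hQ : ∀ g, g ∈ Q ↔ g ∈ P ∧ lam g = 0) (hcl : Claim S n M Q)
    {B Y : GMod k G} {y : M.V →ₗ[k] B.V} (hy : Eqv y) (hB : Tors S n M B)
    {f : B.V →ₗ[k] Y.V} (hf : Eqv f)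
    (hz : ∀ j, 1 ≤ j → j ≤ n → Null (A := B) (B := FL (.T j) Y) P (zeta S j Y ∘ₗ f)) :
    Cover S n M y (fun C g => Null (A := C) (B := Y) P (f ∘ₗ g)) := by
  obtain ⟨h, h0, h1, h2⟩ := hkey P lam hadd
  have h3 := ED_init hadd h h0 h1 h2 hf hz
  have main : ∀ m ≤ n, Cover S n M y (fun C g => ED (A := C) (Z := Y) S P lam n (f ∘ₗ g) m) := by
    intro m
    induction m with
    | zero => intro _; exact Cover.self hy hB h3
    | succ m ih =>
      intro hm
      refine (ih (by omega)).trans ?_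
      intro C z g hz hg hC hE
      obtain ⟨D, u, π, hu, hπ, rfl, hD, hN⟩ := hcl C z hz hC
      exact ⟨D, u, π, hu, hπ, rfl, hD, ED_step hadd hsur Q hQ hn (by omega) hE hπ hN⟩
  obtain ⟨D, u, π, hu, hπ, e, hD, hE⟩ := main n le_rfl
  exact ⟨D, u, π, hu, hπ, e, hD, ED_final S P lam n hs hE⟩

theorem kill (hs : S.s 0 [1] ≠ 0) (hn : Even n) (hkey : KeyH S n p) {P Q : Subgroup G} {lam : G → ZMod p}
    (hadd : ∀ g ∈ P, ∀ h ∈ P, lam (g * h) = lam g + lam h)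
    (hsur : ∀ c, ∃ t ∈ P, lam t = c) (hQ : ∀ g, g ∈ Q ↔ g ∈ P ∧ lam g = 0) (hcl : Claim S n M Q)
    (N : ℕ) : ∀ (a : ℕ → ℕ), ∑ j ∈ Finset.Icc 1 n, a j = N →
    ∀ (B Y : GMod k G) (y : M.V →ₗ[k] B.V), Eqv y → Tors S n M B →
    ∀ (f : B.V →ₗ[k] Y.V), Eqv f → (∀ j, 1 ≤ j → j ≤ n → Kills S j (a j) f) →
    Cover S n M y (fun C g => Null (A := C) (B := Y) P (f ∘ₗ g)) := by
  induction N with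
  | zero =>
    intro a ha B Y y hy hB f hf hk
    have h0 : ∀ j, 1 ≤ j → j ≤ n → a j = 0 := by
      intro j h1 h2
      exact (Finset.sum_eq_zero_iff.1 ha) j (Finset.mem_Icc.2 ⟨h1, h2⟩)
    refine elim hs hn hkey hadd hsur hQ hcl hy hB hf ?_
    intro j h1 h2
    have := hk j h1 h2
    rw [h0 j h1 h2] at this
    have hN : Null ⊤ f := this
    exact (hN.of_top P).left (zeta_eqv S j Y)
  | succ N ih =>
    intro a ha B Y y hy hB f hf hk
    by_cases hex : ∃ j, 1 ≤ j ∧ j ≤ n ∧ a j = 0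
    · obtain ⟨j, h1, h2, h3⟩ := hex
      have := hk j h1 h2
      rw [h3] at this
      have hN : Null ⊤ f := this
      exact Cover.self hy hB (hN.of_top P)
    push Not at hex
    have inner : ∀ J ≤ n, Cover S n M y (fun C g => ∀ j, 1 ≤ j → j ≤ J →
        Null (A := C) (B := FL (.T j) Y) P (zeta S j Y ∘ₗ (f ∘ₗ g))) := by
      intro J
      induction J with
      | zero => intro _; exact Cover.self hy hB (fun j h1 h2 => by omega)
      | succ J ihJ =>
        intro hJ
        refine (ihJ (by omega)).trans ?_
        intro C z g hz hg hC hE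
        have hpos := hex (J + 1) (by omega) hJ
        obtain ⟨b, hb⟩ := Nat.exists_eq_succ_of_ne_zero hpos
        have hsum : ∑ j ∈ Finset.Icc 1 n, Function.update a (J + 1) b j = N := by
          have hmem : J + 1 ∈ Finset.Icc 1 n := Finset.mem_Icc.2 ⟨by omega, hJ⟩
          rw [Finset.sum_update_of_mem hmem]
          rw [← Finset.add_sum_erase _ _ hmem] at ha
          rw [Finset.sdiff_singleton_eq_erase]
          omega
        have := ih (Function.update a (J + 1) b) hsum C (FL (.T (J + 1)) Y) z hz hC
          (zeta S (J + 1) Y ∘ₗ (f ∘ₗ g)) ((zeta_eqv S _ Y).comp (hf.comp hg)) (by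
            intro j h1 h2
            by_cases hj : j = J + 1
            · subst hj
              rw [Function.update_self]
              have h5 := hk (J + 1) h1 h2
              rw [hb] at h5
              exact Kills.right (S := S) (j := J + 1) (c := b) (f := zeta S (J + 1) Y ∘ₗ f) h5 hg
            · rw [Function.update_of_ne hj]
              exact Kills.left ((hk j h1 h2).right hg) (zeta_eqv S (J + 1) Y))
        obtain ⟨D, u, π, hu, hπ, e, hD, hN⟩ := this
        refine ⟨D, u, π, hu, hπ, e, hD, ?_⟩
        intro j h1 h2
        by_cases hj : j ≤ J
        · exact Null.right (hE j h1 hj) hπ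
        · have : j = J + 1 := by omega
          subst this
          exact hN
    refine (inner n le_rfl).trans ?_
    intro C z g hz hg hC hE
    exact elim hs hn hkey hadd hsur hQ hcl hz hC (hf.comp hg) hE

theorem claim_all (hs : S.s 0 [1] ≠ 0) (hn : Even n) (hkey : KeyH S n p) (P : Subgroup G) (hP : IsPGroup p P) :
    Claim S n M P := by
  induction P using WellFoundedLT.induction with
  | ind P ih =>
  by_cases hb : P = ⊥
  · intro A x hx hA
    exact Cover.self hx hA (Null.bot P hb _)
  obtain ⟨lam, Q, hadd, hsur, hQ⟩ := exists_lam P hP hb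
  have hle : Q ≤ P := fun g hg => ((hQ g).1 hg).1
  have hlt : Q < P := by
    refine lt_of_le_of_ne hle ?_
    rintro rfl
    obtain ⟨t, ht, h1⟩ := hsur 1
    have := ((hQ t).1 ht).2
    rw [h1] at this
    exact one_ne_zero this
  have hcl := ih Q hlt (hP.to_le hle)
  intro A x hx hA
  refine (nil_cover hx hA n le_rfl).trans ?_
  intro B y g hy hg hB hk
  choose! a ha using hk
  exact kill hs hn hkey hadd hsur hQ hcl _ a rfl B A y hy hB g hg ha

theorem tors_null (hs : S.s 0 [1] ≠ 0) (hn : Even n) (hkey : KeyH S n p) {A : GMod k G}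
    (hA : Tors S n M A) {x : M.V →ₗ[k] A.V} (hx : Eqv x) : Null ⊤ x := by
  obtain ⟨P⟩ : Nonempty (Sylow p G) := inferInstance
  obtain ⟨B, y, g, hy, hg, rfl, hB, hN⟩ := claim_all hs hn hkey P.1 P.2 A x hx hA
  have hi : (P.1.index : k) ≠ 0 := by
    rw [Ne, CharP.cast_eq_zero_iff k p]
    exact P.not_dvd_index
  exact (Null.of_index hg P.1 hN hi).right hy

end Kill

section Fin

theorem main_null (k : Type) [Field k] (p : ℕ) [Fact p.Prime] [CharP k p]
    (G : Type) [Group G] [Fintype G] : ∃ (S : SD k G) (n : ℕ), ∀ (M A : GMod k G), Tors S n M A →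
    ∀ x : M.V →ₗ[k] A.V, Eqv x → Null ⊤ x := by
  obtain ⟨s, h1, h2, h3, h4, h5⟩ := key (k := k) (p := p) (G := G)
  set n := 2 * Fintype.card G with hn
  let S : SD k G := 
    { s := fun i L => if i ≤ n then s i L else 0
      supp := fun i L hL => by
        split_ifs with hi
        · exact h1 i hi L hL
        · rfl
      cocyc := fun i L => by
        by_cases hi : i ≤ n
        · simp only [if_pos hi]; exact h2 i L
        · simp only [if_neg hi]; exact dL_zero L
      inv := fun i g L => by
        by_cases hi : i ≤ n
        · simp only [if_pos hi]; exact h3 i g L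
        · simp only [if_neg hi] }
  have hS : ∀ i ≤ n, S.s i = s i := fun i hi => by funext L; exact if_pos hi
  refine ⟨S, n, fun M A hA x hx => tors_null (p := p) ?_ ⟨Fintype.card G, by omega⟩ ?_ hA hx⟩
  · rw [hS 0 (Nat.zero_le _)]; exact h4
  · intro P lam hadd
    obtain ⟨h, e1, e2, e3, e4⟩ := h5 P lam hadd
    refine ⟨h, e2, e3, fun L c j hj => ?_⟩
    rw [hS _ (Nat.sub_le _ _)]; exact e4 L c j hj

end Fin
end
end ExtProof
open CategoryTheory
set_option linter.all false

namespace ExtProof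
noncomputable section
open scoped Classical

section Lin
variable {k : Type} [Field k] {U V W : Type} [AddCommGroup U] [Module k U] [AddCommGroup V] [Module k V]
  [AddCommGroup W] [Module k W]

theorem lin_lift (q : V →ₗ[k] W) (f : U →ₗ[k] W) (h : ∀ u, ∃ v, q v = f u) :
    ∃ f' : U →ₗ[k] V, f = q ∘ₗ f' := by
  have hr : ∀ u, f u ∈ LinearMap.range q := fun u => by obtain ⟨v, hv⟩ := h u; exact ⟨v, hv⟩
  obtain ⟨σ, hσ⟩ := (q.rangeRestrict).exists_rightInverse_of_surjective (LinearMap.range_rangeRestrict q)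
  refine ⟨σ ∘ₗ f.codRestrict _ hr, ?_⟩
  ext u
  have := congrArg Subtype.val (LinearMap.congr_fun hσ ⟨f u, hr u⟩)
  exact this.symm

theorem lin_factor (q : U →ₗ[k] V) (h : U →ₗ[k] W) (hk : ∀ u, q u = 0 → h u = 0) :
    ∃ g : V →ₗ[k] W, h = g ∘ₗ q := by
  obtain ⟨σ, hσ⟩ := (q.rangeRestrict).exists_rightInverse_of_surjective (LinearMap.range_rangeRestrict q)
  obtain ⟨g, hg⟩ := LinearMap.exists_extend (h ∘ₗ σ)
  refine ⟨g, ?_⟩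
  ext u
  have e1 : g (q u) = h (σ ⟨q u, ⟨u, rfl⟩⟩) := LinearMap.congr_fun hg ⟨q u, ⟨u, rfl⟩⟩
  have e2 : q (σ ⟨q u, ⟨u, rfl⟩⟩) = q u := congrArg Subtype.val (LinearMap.congr_fun hσ ⟨q u, ⟨u, rfl⟩⟩)
  have e3 := hk (u - σ ⟨q u, ⟨u, rfl⟩⟩) (by rw [map_sub, e2, sub_self])
  rw [map_sub, sub_eq_zero] at e3
  rw [LinearMap.comp_apply, e1, e3]
end Lin

section Hig
variable {k : Type} [Field k] {G : Type} [Group G] [Fintype G]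

/-- Higman's criterion -/
def Hig (X : GMod k G) : Prop := Null (A := X) (B := X) ⊤ LinearMap.id

variable {A B C X : GMod k G}

theorem eqv_of_inj {i : B.V →ₗ[k] C.V} (hi : Eqv i) (inj : Function.Injective i) {f : A.V →ₗ[k] B.V}
    (h : Eqv (A := A) (B := C) (i ∘ₗ f)) : Eqv f := by
  intro g a; apply inj
  have := h g a
  simp only [LinearMap.comp_apply] at this
  rw [this, hi]
theorem eqv_of_surj {q : A.V →ₗ[k] B.V} (hq : Eqv q) (sur : Function.Surjective q) {f : B.V →ₗ[k] C.V}
    (h : Eqv (A := A) (B := C) (f ∘ₗ q)) : Eqv f := by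
  intro g b; obtain ⟨a, rfl⟩ := sur b
  have := h g a
  simp only [LinearMap.comp_apply] at this
  rw [← hq, this]

theorem Hig.lift (hX : Hig X) {q : A.V →ₗ[k] B.V} (hq : Eqv q) {f : X.V →ₗ[k] B.V} (hf : Eqv f)
    (h : ∀ u, ∃ v, q v = f u) : ∃ f' : X.V →ₗ[k] A.V, Eqv f' ∧ f = q ∘ₗ f' := by
  obtain ⟨θ, hθ⟩ := hX
  obtain ⟨f0, hf0⟩ := lin_lift q f h
  refine ⟨Tr ⊤ (f0 ∘ₗ θ), Tr_eqv _, ?_⟩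
  rw [Tr_left _ _ hq, ← LinearMap.comp_assoc, ← hf0, ← Tr_left _ _ hf, ← hθ]; rfl

theorem Hig.factor (hX : Hig X) {q : A.V →ₗ[k] B.V} (hq : Eqv q) {h : A.V →ₗ[k] X.V} (hh : Eqv h)
    (hk : ∀ u, q u = 0 → h u = 0) : ∃ g : B.V →ₗ[k] X.V, Eqv g ∧ h = g ∘ₗ q := by
  obtain ⟨θ, hθ⟩ := hX
  obtain ⟨g0, hg0⟩ := lin_factor q h hk
  refine ⟨Tr ⊤ (θ ∘ₗ g0), Tr_eqv _, ?_⟩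
  rw [Tr_right _ _ hq, LinearMap.comp_assoc, ← hg0, ← Tr_right _ _ hh, ← hθ]; rfl

/-- short exact sequences with Higman middle term -/
structure SES (A F B : GMod k G) where
  i : A.V →ₗ[k] F.V
  q : F.V →ₗ[k] B.V
  hi : Eqv i
  hq : Eqv q
  inj : Function.Injective i
  sur : Function.Surjective q
  comp : ∀ a, q (i a) = 0
  ex : ∀ z, q z = 0 → ∃ a, i a = z
  hig : Hig F

theorem SES.lift {F : GMod k G} (E : SES A F B) {f : X.V →ₗ[k] F.V} (hf : Eqv f) (h : ∀ x, E.q (f x) = 0) :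
    ∃ u : X.V →ₗ[k] A.V, Eqv u ∧ f = E.i ∘ₗ u := by
  obtain ⟨u, hu⟩ := lin_lift E.i f (fun x => E.ex _ (h x))
  exact ⟨u, eqv_of_inj E.hi E.inj (hu ▸ hf), hu⟩

/-- projective resolutions -/
structure Res (M : GMod k G) where
  P : ℕ → GMod k G
  d : ∀ i, (P (i + 1)).V →ₗ[k] (P i).V
  ε : (P 0).V →ₗ[k] M.V
  hd : ∀ i, Eqv (d i)
  hε : Eqv ε
  dd : ∀ i x, d i (d (i + 1) x) = 0
  dε : ∀ x, ε (d 0 x) = 0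
  ex : ∀ i x, d i x = 0 → ∃ y, d (i + 1) y = x
  exε : ∀ x, ε x = 0 → ∃ y, d 0 y = x
  sur : Function.Surjective ε
  hig : ∀ i, Hig (P i)

variable {M : GMod k G} (R : Res M)

/-- nonvanishing of the Ext group in degree e+1 -/
def XX (e : ℕ) (V : GMod k G) : Prop := ∃ f : (R.P (e + 1)).V →ₗ[k] V.V, Eqv f ∧
  (∀ x, f (R.d (e + 1) x) = 0) ∧ ¬ ∃ g : (R.P e).V →ₗ[k] V.V, Eqv g ∧ f = g ∘ₗ R.d e

def NNul (M V : GMod k G) : Prop := ∃ x : M.V →ₗ[k] V.V, Eqv x ∧ ¬ Null ⊤ x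

variable {R}
variable {V F V' : GMod k G}

theorem XX.retract {e : ℕ} (h : XX R e A) (φ : A.V →ₗ[k] B.V) (ψ : B.V →ₗ[k] A.V) (hφ : Eqv φ) (hψ : Eqv ψ)
    (hc : ψ ∘ₗ φ = LinearMap.id) : XX R e B := by
  obtain ⟨f, hf, h1, h2⟩ := h
  refine ⟨φ ∘ₗ f, hφ.comp hf, fun x => by simp [h1], ?_⟩
  rintro ⟨g, hg, e⟩
  refine h2 ⟨ψ ∘ₗ g, hψ.comp hg, ?_⟩
  rw [LinearMap.comp_assoc, ← e, ← LinearMap.comp_assoc, hc]; rfl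

theorem XX.up (E : SES V F V') {e : ℕ} (h : XX R e V') : XX R (e + 1) V := by
  obtain ⟨f, hf, h1, h2⟩ := h
  obtain ⟨f', hf', e1⟩ := (R.hig (e + 1)).lift E.hq hf (fun u => E.sur _)
  obtain ⟨u, hu, e2⟩ := E.lift (hf'.comp (R.hd (e + 1))) (fun x => by
    have := h1 x
    rw [e1] at this; exact this)
  refine ⟨u, hu, fun x => E.inj ?_, ?_⟩
  · rw [map_zero, ← LinearMap.comp_apply, ← e2, LinearMap.comp_apply, R.dd, map_zero]
  · rintro ⟨g, hg, rfl⟩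
    obtain ⟨t, ht, e3⟩ := E.hig.factor (R.hd e) (hf'.sub (E.hi.comp hg)) (by
      intro x hx
      obtain ⟨y, rfl⟩ := R.ex e x hx
      have := LinearMap.congr_fun e2 y
      simp only [LinearMap.comp_apply] at this
      simp [this])
    refine h2 ⟨E.q ∘ₗ t, E.hq.comp ht, ?_⟩
    rw [LinearMap.comp_assoc, ← e3, e1]
    ext x; simp [E.comp]

theorem XX.down (E : SES V F V') {e : ℕ} (h : XX R (e + 1) V) : XX R e V' := by
  obtain ⟨f, hf, h1, h2⟩ := h
  obtain ⟨t, ht, e1⟩ := E.hig.factor (R.hd (e + 1)) (E.hi.comp hf) (by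
    intro x hx
    obtain ⟨y, rfl⟩ := R.ex (e + 1) x hx
    simp [h1])
  refine ⟨E.q ∘ₗ t, E.hq.comp ht, fun x => ?_, ?_⟩
  · have := LinearMap.congr_fun e1 x
    simp only [LinearMap.comp_apply] at this ⊢
    rw [← this, E.comp]
  · rintro ⟨g, hg, e2⟩
    obtain ⟨g', hg', rfl⟩ := (R.hig e).lift E.hq hg (fun u => E.sur _)
    obtain ⟨u, hu, e3⟩ := E.lift (ht.sub (hg'.comp (R.hd e))) (fun x => by
      have := LinearMap.congr_fun e2 x
      simp only [LinearMap.comp_apply] at this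
      simp [this])
    refine h2 ⟨u, hu, ?_⟩
    ext x
    apply E.inj
    have a1 := LinearMap.congr_fun e1 x
    have a2 := LinearMap.congr_fun e3 (R.d (e + 1) x)
    simp only [LinearMap.comp_apply, LinearMap.sub_apply, R.dd, map_zero, sub_zero] at a1 a2 ⊢
    rw [a1, a2]

theorem NNul.up (E : SES V F V') (h : NNul M V') : XX R 0 V := by
  obtain ⟨x, hx, h2⟩ := h
  obtain ⟨f', hf', e1⟩ := (R.hig 0).lift E.hq (hx.comp R.hε) (fun u => E.sur _)
  obtain ⟨u, hu, e2⟩ := E.lift (hf'.comp (R.hd 0)) (fun y => by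
    have := LinearMap.congr_fun e1 (R.d 0 y)
    simp only [LinearMap.comp_apply, R.dε, map_zero] at this ⊢
    exact this.symm)
  refine ⟨u, hu, fun x => E.inj ?_, ?_⟩
  · rw [map_zero, ← LinearMap.comp_apply, ← e2, LinearMap.comp_apply, R.dd, map_zero]
  · rintro ⟨g, hg, rfl⟩
    obtain ⟨t, ht, e3⟩ := E.hig.factor R.hε (hf'.sub (E.hi.comp hg)) (by
      intro x hx
      obtain ⟨y, rfl⟩ := R.exε x hx
      have := LinearMap.congr_fun e2 y
      simp only [LinearMap.comp_apply] at this
      simp [this])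
    apply h2
    have : x = E.q ∘ₗ t := by
      ext m
      obtain ⟨y, rfl⟩ := R.sur m
      have a1 := LinearMap.congr_fun e1 y
      have a3 := LinearMap.congr_fun e3 y
      simp only [LinearMap.comp_apply, LinearMap.sub_apply] at a1 a3 ⊢
      rw [a1, ← a3, map_sub, E.comp, sub_zero]
    rw [this]
    exact Null.left (B := F) (Null.right (φ := LinearMap.id) E.hig ht) E.hq

theorem NNul.down (E : SES V F V') (h : XX R 0 V) : NNul M V' := by
  obtain ⟨f, hf, h1, h2⟩ := h
  obtain ⟨t, ht, e1⟩ := E.hig.factor (R.hd 0) (E.hi.comp hf) (by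
    intro x hx
    obtain ⟨y, rfl⟩ := R.ex 0 x hx
    simp [h1])
  obtain ⟨x, hx⟩ := lin_factor R.ε (E.q ∘ₗ t) (by
    intro z hz
    obtain ⟨y, rfl⟩ := R.exε z hz
    have := LinearMap.congr_fun e1 y
    simp only [LinearMap.comp_apply] at this ⊢
    rw [← this, E.comp])
  refine ⟨x, eqv_of_surj R.hε R.sur (hx ▸ E.hq.comp ht), ?_⟩
  rintro ⟨φ, rfl⟩
  obtain ⟨φ', rfl⟩ := lin_lift E.q φ (fun u => E.sur _)
  rw [← Tr_left (A := M) (B := F) _ _ E.hq] at hx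
  have hg : Eqv (A := M) (B := F) (Tr ⊤ φ') := Tr_eqv _
  obtain ⟨u, hu, e3⟩ := E.lift (ht.sub (hg.comp R.hε)) (fun x => by
    have := LinearMap.congr_fun hx x
    simp only [LinearMap.comp_apply] at this
    simp [this])
  refine h2 ⟨u, hu, ?_⟩
  ext x
  apply E.inj
  have a1 := LinearMap.congr_fun e1 x
  have a2 := LinearMap.congr_fun e3 (R.d 0 x)
  simp only [LinearMap.comp_apply, LinearMap.sub_apply, R.dε, map_zero, sub_zero] at a1 a2 ⊢
  rw [a1, a2]

end Hig
end
end ExtProof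
open CategoryTheory
set_option linter.all false

namespace ExtProof
noncomputable section
open scoped Classical

section FunM
variable {k : Type} [Field k] {G : Type} [Group G] [Fintype G]

/-- functions supported on lists of a given length -/
def Fsub (k : Type) [Field k] (G : Type) (V : Type) [AddCommGroup V] [Module k V] (m : ℕ) :
    Submodule k (List G → V) where
  carrier := {f | ∀ L, L.length ≠ m → f L = 0}
  zero_mem' := fun _ _ => rfl
  add_mem' := fun {f g} hf hg L hL => by simp [hf L hL, hg L hL]
  smul_mem' := fun c f hf L hL => by simp [hf L hL]

def FunM (m : ℕ) (Y : GMod k G) : GMod k G where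
  V := Fsub k G Y.V m
  ρ := 
    { toFun := fun g => 
        { toFun := fun f => ⟨(Big Y).ρ g f.1, fun L hL => by
            show Y.ρ g (f.1 (L.map _)) = 0
            rw [f.2 _ (by simpa using hL), map_zero]⟩
          map_add' := fun f f' => Subtype.ext (map_add ((Big Y).ρ g) f.1 f'.1)
          map_smul' := fun c f => Subtype.ext (map_smul ((Big Y).ρ g) c f.1) }
      map_one' := by
        apply LinearMap.ext; intro f; apply Subtype.ext
        show (Big Y).ρ 1 f.1 = f.1
        rw [map_one]; rfl
      map_mul' := fun g h => by
        apply LinearMap.ext; intro f; apply Subtype.ext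
        show (Big Y).ρ (g * h) f.1 = (Big Y).ρ g ((Big Y).ρ h f.1)
        rw [map_mul]; rfl }

theorem FunM_rho (m : ℕ) (Y : GMod k G) (g : G) (f : (FunM m Y).V) (L) :
    ((FunM m Y).ρ g f).1 L = Y.ρ g (f.1 (L.map (g⁻¹ * ·))) := rfl

theorem FunM_hig (m : ℕ) (Y : GMod k G) : Hig (FunM (m + 1) Y) := by
  let θ : (FunM (m + 1) Y).V →ₗ[k] (FunM (m + 1) Y).V :=
    { toFun := fun f => ⟨fun L => if L.head? = some 1 then f.1 L else 0, fun L hL => by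
        show (if L.head? = some 1 then f.1 L else 0) = 0
        rw [f.2 L hL]; simp⟩
      map_add' := fun f g => by
        apply Subtype.ext; funext L
        show (if L.head? = some 1 then f.1 L + g.1 L else 0) =
          (if L.head? = some 1 then f.1 L else 0) + (if L.head? = some 1 then g.1 L else 0)
        split_ifs <;> simp
      map_smul' := fun c f => by
        apply Subtype.ext; funext L
        show (if L.head? = some 1 then c • f.1 L else 0) = c • (if L.head? = some 1 then f.1 L else 0)
        split_ifs <;> simp }
  have hθ : ∀ f L, (θ f).1 L = if L.head? = some 1 then f.1 L else 0 := fun _ _ => rfl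
  refine ⟨θ, ?_⟩
  apply LinearMap.ext; intro f; apply Subtype.ext; funext L
  rw [Tr_top]
  have e : (∑ g : G, (FunM (m + 1) Y).ρ g (θ ((FunM (m + 1) Y).ρ g⁻¹ f))).1 L =
      ∑ g : G, ((FunM (m + 1) Y).ρ g (θ ((FunM (m + 1) Y).ρ g⁻¹ f))).1 L :=
    map_sum ((LinearMap.proj L ∘ₗ (Fsub k G Y.V (m + 1)).subtype))
            (fun g : G => (FunM (m + 1) Y).ρ g (θ ((FunM (m + 1) Y).ρ g⁻¹ f))) Finset.univ
  rw [e]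
  show f.1 L = _
  rcases L with _ | ⟨x, L⟩
  · rw [f.2 [] (by simp)]
    symm; apply Finset.sum_eq_zero; intro g _
    rw [FunM_rho, hθ]; simp
  · rw [Finset.sum_eq_single x]
    · rw [FunM_rho, hθ, if_pos (by simp), FunM_rho]
      rw [inv_inv, map_inv_map, rho_inv']
    · intro g _ hg
      rw [FunM_rho, hθ, if_neg, map_zero]
      simp only [List.map_cons, List.head?_cons, Option.some.injEq]
      intro h; exact hg (inv_mul_eq_one.1 h)
    · intro h; exact absurd (Finset.mem_univ _) h

def sesT (j : ℕ) (Y : GMod k G) : SES (FL (.T j) Y) (FunM (j + 1) Y) (FL (.T (j + 1)) Y) where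
  i := { toFun := fun f => ⟨f.1, f.2.1⟩, map_add' := fun _ _ => rfl, map_smul' := fun _ _ => rfl }
  q := { toFun := fun f => ⟨fun L => dL f.1 L, fun L hL => dL_supp f.1 (j + 1) f.2 L hL, fun L => dL_dL f.1 L⟩
         map_add' := fun f g => Subtype.ext (funext fun L => dL_add f.1 g.1 L)
         map_smul' := fun c f => Subtype.ext (funext fun L =>
           dL_lin (c • (LinearMap.id : Y.V →ₗ[k] Y.V)) f.1 L) }
  hi := fun g a => rfl
  hq := fun g a => by
    apply Subtype.ext; funext L
    show dL (fun L' => Y.ρ g (a.1 (L'.map (g⁻¹ * ·)))) L = Y.ρ g (dL a.1 (L.map (g⁻¹ * ·)))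
    rw [dL_lin (Y.ρ g) (fun L' => a.1 (L'.map (g⁻¹ * ·))), dL_listmap (g⁻¹ * ·) a.1]
  inj := fun a b h => Subtype.ext (congrArg (fun t => t.1) h)
  sur := fun f => ⟨⟨fun L => f.1 (1 :: L), fun L hL => f.2.1 _ (by simpa using hL)⟩,
    Subtype.ext (funext fun L => dL_contr f.1 f.2.2 1 L)⟩
  comp := fun a => Subtype.ext (funext fun L => a.2.2 L)
  ex := fun z hz => ⟨⟨z.1, z.2, fun L => congrFun (congrArg (fun t => t.1) hz) L⟩, rfl⟩
  hig := FunM_hig j Y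

def sesO (Y : GMod k G) : SES (FL .Om Y) (FunM 1 Y) Y where
  i := { toFun := fun f => ⟨f.1, f.2.1⟩, map_add' := fun _ _ => rfl, map_smul' := fun _ _ => rfl }
  q := { toFun := fun f => ∑ g : G, f.1 [g]
         map_add' := fun f g => Finset.sum_add_distrib
         map_smul' := fun c f => by
           show ∑ g : G, c • f.1 [g] = c • ∑ g : G, f.1 [g]
           rw [Finset.smul_sum] }
  hi := fun g a => rfl
  hq := fun g a => by
    show ∑ y : G, Y.ρ g (a.1 [g⁻¹ * y]) = Y.ρ g (∑ y : G, a.1 [y])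
    have e : ∑ y : G, a.1 [g⁻¹ * y] = ∑ y : G, a.1 [y] :=
      Equiv.sum_comp (Equiv.mulLeft g⁻¹) (fun y => a.1 [y])
    rw [← map_sum, e]
  inj := fun a b h => Subtype.ext (congrArg (fun t => t.1) h)
  sur := fun y => ⟨⟨single1 y, fun L hL => single1_supp y L hL⟩, single1_sum y⟩
  comp := fun a => a.2.2
  ex := fun z hz => ⟨⟨z.1, z.2, hz⟩, rfl⟩
  hig := FunM_hig 0 Y

def t0 (Y : GMod k G) : (FL (.T 0) Y).V →ₗ[k] Y.V where
  toFun f := f.1 [1]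
  map_add' _ _ := rfl
  map_smul' _ _ := rfl

theorem t0_const (Y : GMod k G) (f : (FL (.T 0) Y).V) (g : G) : f.1 [g] = f.1 [1] := by
  have := f.2.2 [1, g]
  simp only [dL_cons, dL_nil, sub_zero] at this
  exact sub_eq_zero.1 this

theorem t0_eqv (Y : GMod k G) : Eqv (t0 Y) := by
  intro g f
  show Y.ρ g (f.1 [g⁻¹ * 1]) = Y.ρ g (f.1 [1])
  rw [t0_const]

def u0 (Y : GMod k G) : Y.V →ₗ[k] (FL (.T 0) Y).V where
  toFun y := ⟨fun L => if L.length = 1 then y else 0, fun L hL => if_neg (by simpa using hL), fun L => by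
    by_cases hL : L.length = 2
    · obtain ⟨a, b, rfl⟩ := List.length_eq_two.1 hL
      simp [dL]
    · exact dL_supp _ 1 (fun L hL => if_neg hL) L hL⟩
  map_add' y z := by
    apply Subtype.ext; funext L
    show (if L.length = 1 then y + z else 0) = (if L.length = 1 then y else 0) + (if L.length = 1 then z else 0)
    split_ifs <;> simp
  map_smul' c y := by
    apply Subtype.ext; funext L
    show (if L.length = 1 then c • y else 0) = c • (if L.length = 1 then y else 0)
    split_ifs <;> simp

theorem u0_eqv (Y : GMod k G) : Eqv (u0 Y) := by
  intro g y
  apply Subtype.ext; funext L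
  show (if L.length = 1 then Y.ρ g y else 0) = Y.ρ g (if (L.map (g⁻¹ * ·)).length = 1 then y else 0)
  rw [List.length_map]
  split_ifs <;> simp

theorem t0_u0 (Y : GMod k G) : t0 Y ∘ₗ u0 Y = LinearMap.id := by
  apply LinearMap.ext; intro y
  show (if ([1] : List G).length = 1 then y else 0) = y
  simp
theorem u0_t0 (Y : GMod k G) : u0 Y ∘ₗ t0 Y = LinearMap.id := by
  apply LinearMap.ext; intro f
  apply Subtype.ext; funext L
  show (if L.length = 1 then f.1 [1] else 0) = f.1 L
  split_ifs with h
  · obtain ⟨g, rfl⟩ := List.length_eq_one_iff.1 h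
    rw [t0_const Y f g]
  · rw [f.2.1 L (by simpa using h)]

variable {M : GMod k G} {R : Res M}

theorem E1 {e i : ℕ} {Y : GMod k G} (h : XX R e (FL (.T i) Y)) : XX R (e + i) Y := by
  induction i generalizing e with
  | zero => exact h.retract (t0 Y) (u0 Y) (t0_eqv Y) (u0_eqv Y) (u0_t0 Y)
  | succ i ih =>
    have := ih (h.up (sesT i Y))
    rwa [show e + (i + 1) = e + 1 + i by omega]

theorem E2 {e : ℕ} {Y : GMod k G} (h : XX R (e + 1) (FL .Om Y)) : XX R e Y := h.down (sesO Y)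

theorem E3 {j : ℕ} {Y : GMod k G} (h : NNul M (FL (.T (j + 1)) Y)) : XX R j Y := by
  have := E1 (NNul.up (R := R) (sesT j Y) h)
  rwa [zero_add] at this

theorem E4 {e : ℕ} {Y : GMod k G} (h : XX R e Y) : NNul M (FL (.T (e + 1)) Y) := by
  have : ∀ i ≤ e, XX R (e - i) (FL (.T i) Y) := by
    intro i
    induction i with
    | zero => intro _; exact h.retract (u0 Y) (t0 Y) (u0_eqv Y) (t0_eqv Y) (t0_u0 Y)
    | succ i ih =>
      intro hi
      have := ih (by omega)
      rw [show e - i = e - (i + 1) + 1 by omega] at this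
      exact this.down (sesT i Y)
  have := this e le_rfl
  rw [Nat.sub_self] at this
  exact NNul.down (sesT e Y) this

theorem words (w : List Let) (Y : GMod k G) : ∃ u v, ∀ e, XX R (e + v) (ev w Y) → XX R (e + u) Y := by
  induction w with
  | nil => exact ⟨0, 0, fun e h => h⟩
  | cons l w ih =>
    obtain ⟨u, v, ih⟩ := ih
    cases l with
    | T i =>
      refine ⟨u + i, v, fun e h => ?_⟩
      have := E1 (R := R) h
      rw [show e + v + i = (e + i) + v by omega] at this
      rw [show e + (u + i) = e + i + u by omega]
      exact ih _ this
    | Om =>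
      exact ⟨u, v + 1, fun e h => ih e (E2 h)⟩

theorem E5 {j b : ℕ} {Y : GMod k G} (h : NNul M (Tit (j + 1) (b + 1) Y)) :
    XX R ((j + 1) * b + j) Y := by
  induction b generalizing Y with
  | zero => rw [mul_zero, zero_add]; exact E3 h
  | succ b ih =>
    have := E1 (ih (Y := FL (.T (j + 1)) Y) h)
    rwa [show (j + 1) * (b + 1) + j = (j + 1) * b + j + (j + 1) by ring]

theorem final (p : ℕ) [Fact p.Prime] [CharP k p] {M : GMod k G} (R : Res M) (N : GMod k G) (n0 : ℕ)
    (h : XX R n0 N) : ∃ d : ℕ, 0 < d ∧ ∃ j < d, ∃ m₀ : ℕ, ∀ n ≥ m₀, (n + 1) % d = j → XX R n N := by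
  obtain ⟨S, n, hS⟩ := main_null k p G
  have hT : ¬ Tors S n M N := by
    intro hT
    obtain ⟨x, hx, hnx⟩ := E4 h
    exact hnx (hS M _ (hT.FL _) x hx)
  unfold Tors at hT
  push Not at hT
  obtain ⟨w, x, hx, j, hj1, hj2, hk⟩ := hT
  obtain ⟨j, rfl⟩ : ∃ i, j = i + 1 := ⟨j - 1, by omega⟩
  obtain ⟨u, v, huv⟩ := words (R := R) w N
  refine ⟨j + 1, by omega, (u + v * j) % (j + 1), Nat.mod_lt _ (by omega), u, fun n hn hmod => ?_⟩
  obtain ⟨e, rfl⟩ : ∃ e, n = e + u := ⟨n - u, by omega⟩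
  apply huv
  have h1 : (e + 1 + v) % (j + 1) = 0 := by
    have h2 : (e + u + 1) ≡ u + v * j [MOD (j + 1)] := hmod
    have h3 := h2.add_right v
    have h4 : u + v * j + v ≡ u [MOD (j + 1)] := by
      have : u + v * j + v = u + (j + 1) * v := by ring
      rw [this]; simp [Nat.ModEq]
    have h5 := h3.trans h4
    have h6 : u + (e + 1 + v) ≡ u + 0 [MOD (j + 1)] := by
      rw [show u + (e + 1 + v) = e + u + 1 + v by ring]; exact h5
    exact Nat.ModEq.add_left_cancel' u h6
  obtain ⟨b, hb⟩ := Nat.dvd_of_mod_eq_zero h1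
  obtain ⟨b, rfl⟩ : ∃ i, b = i + 1 := by
    rcases b with _ | b
    · simp at hb
    · exact ⟨b, rfl⟩
  have : e + v = (j + 1) * b + j := by
    rw [mul_add, mul_one] at hb; omega
  rw [this]
  exact E5 ⟨_, (zit_eqv S (j + 1) (b + 1) _).comp hx, hk (b + 1)⟩

end FunM
end
end ExtProof
open CategoryTheory
set_option linter.all false
namespace ExtProof
noncomputable section
open scoped Classical
section ExtId
variable {k G : Type} [Field k] [Group G] [Fintype G]

open scoped ModuleCat

/-- the representation attached to a module over the group algebra -/
def gm (X : ModuleCat.{0} (MonoidAlgebra k G)) : GMod k G where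
  V := X
  ac := inferInstance
  md := ModuleCat.moduleOfAlgebraModule X
  ρ := { toFun := fun g => 
          { toFun := fun x => (MonoidAlgebra.of k G g) • x
            map_add' := fun x y => smul_add _ _ _
            map_smul' := fun c x => smul_comm (MonoidAlgebra.of k G g) c x }
         map_one' := by ext x; show (MonoidAlgebra.of k G 1) • x = x; rw [map_one, one_smul]
         map_mul' := fun g h => by
            ext x
            show (MonoidAlgebra.of k G (g * h)) • x = MonoidAlgebra.of k G g • MonoidAlgebra.of k G h • x
            rw [map_mul, mul_smul] }

variable {X Y : ModuleCat.{0} (MonoidAlgebra k G)}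

/-- the linear map of a morphism -/
def fw (f : X ⟶ Y) : (gm X).V →ₗ[k] (gm Y).V where
  toFun := fun x => f.hom x
  map_add' := fun x y => map_add f.hom x y
  map_smul' := fun c x => (f.hom.restrictScalars k).map_smul c x

theorem fw_eqv (f : X ⟶ Y) : Eqv (fw f) := fun g x =>
  f.hom.map_smul (MonoidAlgebra.of k G g) x

theorem exists_fw (f : (gm X).V →ₗ[k] (gm Y).V) (hf : Eqv f) : ∃ f' : X ⟶ Y, fw f' = f := by
  have key : ∀ (a : MonoidAlgebra k G) (x : X), (show Y from f (a • x : X)) = a • (show Y from f x) := by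
    intro a x
    induction a using MonoidAlgebra.induction_on with
    | of g => exact hf g x
    | add a b ha hb => 
      rw [add_smul, add_smul, ← ha, ← hb]
      exact f.map_add _ _
    | smul r a ha => 
      rw [smul_assoc, smul_assoc, ← ha]
      exact f.map_smul r _
  exact ⟨ModuleCat.ofHom { toFun := fun x => f x, map_add' := fun x y => f.map_add x y, map_smul' := key },
    rfl⟩

theorem hig_aux (X : ModuleCat.{0} (MonoidAlgebra k G)) (x : X) (a : MonoidAlgebra k G) :
    ∑ g : G, MonoidAlgebra.of k G g • ((MonoidAlgebra.of k G g⁻¹ * a).coeff 1 • x) = a • x := by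
  induction a using MonoidAlgebra.induction_on with
  | of h =>
    rw [Finset.sum_eq_single h]
    · rw [← map_mul, inv_mul_cancel]
      simp [MonoidAlgebra.of_apply]
    · intro g _ hg
      rw [← map_mul]
      have : (MonoidAlgebra.of k G (g⁻¹ * h)).coeff 1 = 0 := by
        simp only [MonoidAlgebra.of_apply]
        apply Finsupp.single_eq_of_ne
        intro h'
        exact hg (inv_mul_eq_one.1 h'.symm)
      rw [this, zero_smul, smul_zero]
    · simp
  | add a b ha hb =>
    rw [add_smul, ← ha, ← hb, ← Finset.sum_add_distrib]
    refine Finset.sum_congr rfl fun g _ => ?_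
    rw [mul_add, ← smul_add, ← add_smul]; rfl
  | smul r a ha =>
    rw [smul_assoc, ← ha, Finset.smul_sum]
    refine Finset.sum_congr rfl fun g _ => ?_
    rw [mul_smul_comm, smul_comm r, smul_smul]; rfl

theorem hig_proj (X : ModuleCat.{0} (MonoidAlgebra k G)) [Projective X] : Hig (gm X) := by
  have hP : Module.Projective (MonoidAlgebra k G) X := (IsProjective.iff_projective X).2 inferInstance
  obtain ⟨s, hs⟩ := Module.projective_def'.1 hP
  let T : (X →₀ MonoidAlgebra k G) → X := fun F => F.sum fun y a => a.coeff 1 • y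
  have Tadd : ∀ F F', T (F + F') = T F + T F' := fun F F' =>
    Finsupp.sum_add_index' (fun y => zero_smul k y) (fun y a b => add_smul (a.coeff 1) (b.coeff 1) y)
  have Tsingle : ∀ y a, T (Finsupp.single y a) = a.coeff 1 • y := fun y a =>
    Finsupp.sum_single_index (zero_smul k y)
  have Tzero : T 0 = 0 := Finsupp.sum_zero_index
  have Tsmul : ∀ (c : k) F, T (c • F) = c • T F := by
    intro c F
    induction F using Finsupp.induction_linear with
    | zero => simp [Tzero]
    | add F F' h h' => rw [smul_add, Tadd, Tadd, smul_add, h, h']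
    | single y a => rw [Finsupp.smul_single, Tsingle, Tsingle, smul_smul]; rfl
  have key : ∀ F : X →₀ MonoidAlgebra k G, ∑ g : G, MonoidAlgebra.of k G g • T (MonoidAlgebra.of k G g⁻¹ • F)
      = Finsupp.linearCombination (MonoidAlgebra k G) id F := by
    intro F
    induction F using Finsupp.induction_linear with
    | zero => simp [Tzero]
    | add F F' h h' => 
      rw [map_add, ← h, ← h', ← Finset.sum_add_distrib]
      refine Finset.sum_congr rfl fun g _ => ?_
      rw [smul_add, Tadd, smul_add]
    | single y a => 
      rw [Finsupp.linearCombination_single]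
      refine Eq.trans ?_ (hig_aux X y a)
      refine Finset.sum_congr rfl fun g _ => ?_
      rw [Finsupp.smul_single, Tsingle]; rfl
  have h1 : ∀ x y : X, T (s (x + y)) = T (s x) + T (s y) := fun x y => by rw [map_add, Tadd]
  have h2 : ∀ (c : k) (x : X), T (s (c • x)) = c • T (s x) := fun c x => by
    have : s (c • x) = c • s x := (s.restrictScalars k).map_smul c x
    rw [this, Tsmul]
  have h3 : ∀ x : X, x = ∑ g : G, MonoidAlgebra.of k G g • T (s (MonoidAlgebra.of k G g⁻¹ • x)) := fun x => by
    have e := key (s x)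
    have e2 : Finsupp.linearCombination (MonoidAlgebra k G) id (s x) = x := LinearMap.congr_fun hs x
    rw [e2] at e
    refine e.symm.trans ?_
    refine Finset.sum_congr rfl fun g _ => ?_
    rw [map_smul]
  let θ : (gm X).V →ₗ[k] (gm X).V :=
    { toFun := fun x => T (s x)
      map_add' := h1
      map_smul' := h2 }
  refine ⟨θ, ?_⟩
  ext x
  rw [Tr_top]
  exact h3 x

theorem fw_comp {X Y Z : ModuleCat.{0} (MonoidAlgebra k G)} (f : X ⟶ Y) (g : Y ⟶ Z) (x : X) :
    fw g (fw f x) = fw (f ≫ g) x := rfl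

/-- the resolution -/
def resOf {X : ModuleCat.{0} (MonoidAlgebra k G)} (P : ProjectiveResolution X) : Res (gm X) where
  P := fun i => gm (P.complex.X i)
  d := fun i => fw (P.complex.d (i + 1) i)
  ε := fw (P.π.f 0)
  hd := fun i => fw_eqv _
  hε := fw_eqv _
  dd := fun i x => by
    exact congrArg (fun f => f.hom x) (P.complex.d_comp_d (i + 1 + 1) (i + 1) i)
  dε := fun x => by
    have := P.complex_d_comp_π_f_zero
    exact congrArg (fun f => f.hom x) this
  ex := fun i x hx => ((ShortComplex.moduleCat_exact_iff _).1 (P.exact_succ i)) x hx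
  exε := fun x hx => ((ShortComplex.moduleCat_exact_iff _).1 (P.exact₀)) x hx
  sur := (ModuleCat.epi_iff_surjective (P.π.f 0)).1 inferInstance
  hig := fun i => hig_proj _

theorem nontriv_iff {X : ModuleCat.{0} (MonoidAlgebra k G)} (P : ProjectiveResolution X)
    (N : ModuleCat.{0} (MonoidAlgebra k G)) (e : ℕ) :
    Nontrivial (((_root_.Ext k (ModuleCat (MonoidAlgebra k G)) (e + 1)).obj (Opposite.op X)).obj N)
      ↔ XX (resOf P) e (gm N) := by
  rw [← not_subsingleton_iff_nontrivial, ← ModuleCat.isZero_iff_subsingleton,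
    (P.isoExt (R := k) (e + 1) N).isZero_iff, ← HomologicalComplex.exactAt_iff_isZero_homology,
    HomologicalComplex.exactAt_iff' _ e (e + 1) (e + 2) (by simp) (by simp),
    ShortComplex.moduleCat_exact_iff]
  push Not
  constructor
  · rintro ⟨f, hf, hn⟩
    change P.complex.X (e + 1) ⟶ N at f
    have hf' : P.complex.d (e + 2) (e + 1) ≫ f = 0 := hf
    refine ⟨fw f, fw_eqv f, fun x => ?_, ?_⟩
    · exact congrArg (fun f => f.hom x) hf'
    · rintro ⟨g, hg, hfg⟩
      obtain ⟨g', rfl⟩ := exists_fw g hg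
      refine hn g' ?_
      show P.complex.d (e + 1) e ≫ g' = f
      ext x
      exact (LinearMap.congr_fun hfg x).symm
  · rintro ⟨f, hf, h0, hn⟩
    obtain ⟨f', rfl⟩ := exists_fw f hf
    refine ⟨f', ?_, ?_⟩
    · show P.complex.d (e + 2) (e + 1) ≫ f' = 0
      ext x
      exact h0 x
    · intro g hg
      change P.complex.X e ⟶ N at g
      have hg' : P.complex.d (e + 1) e ≫ g = f' := hg
      refine hn ⟨fw g, fw_eqv g, ?_⟩
      rw [← hg']; rfl
end ExtId
end
end ExtProof

theorem stmt_13 (k : Type) [Field k] (p : ℕ) (hp : p.Prime) [CharP k p]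
    (G : Type) [Group G] [Fintype G] (hdvd : p ∣ Fintype.card G)
    (M N : Type) [AddCommGroup M] [Module (MonoidAlgebra k G) M]
    [Module.Finite (MonoidAlgebra k G) M]
    [AddCommGroup N] [Module (MonoidAlgebra k G) N]
    [Module.Finite (MonoidAlgebra k G) N] :
    (∀ n : ℕ, 0 < n → Subsingleton
      (((_root_.Ext k (ModuleCat (MonoidAlgebra k G)) n).obj
        (Opposite.op (ModuleCat.of (MonoidAlgebra k G) M))).obj
        (ModuleCat.of (MonoidAlgebra k G) N))) ∨
    ∃ d : ℕ, 0 < d ∧ ∃ j < d, ∃ m₀ : ℕ, ∀ n ≥ m₀, n % d = j → Nontrivial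
      (((_root_.Ext k (ModuleCat (MonoidAlgebra k G)) n).obj
        (Opposite.op (ModuleCat.of (MonoidAlgebra k G) M))).obj
        (ModuleCat.of (MonoidAlgebra k G) N)) := by
  haveI : Fact p.Prime := ⟨hp⟩
  have P := projectiveResolution (ModuleCat.of (MonoidAlgebra k G) M)
  by_cases h : ∀ n : ℕ, 0 < n → Subsingleton
      (((_root_.Ext k (ModuleCat (MonoidAlgebra k G)) n).obj
        (Opposite.op (ModuleCat.of (MonoidAlgebra k G) M))).obj
        (ModuleCat.of (MonoidAlgebra k G) N))
  · exact Or.inl h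
  · right
    push Not at h
    obtain ⟨n, hn, h⟩ := h
    obtain ⟨e, rfl⟩ : ∃ e, n = e + 1 := ⟨n - 1, by omega⟩
    obtain ⟨d, hd, j, hj, m₀, hm⟩ := ExtProof.final p (ExtProof.resOf P) _ e ((ExtProof.nontriv_iff P _ e).1 h)
    refine ⟨d, hd, j, hj, m₀ + 1, fun n hn hnj => ?_⟩
    obtain ⟨e', rfl⟩ : ∃ e', n = e' + 1 := ⟨n - 1, by omega⟩
    exact (ExtProof.nontriv_iff P _ e').2 (hm e' (by omega) hnj)
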